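/- arXiv:2405.09878 — 11 statements merged into one kernel-verified Lean document; each statement's English description precedes it below -/
import Mathlib

section
/- For all natural numbers n, k ≥ 1 and d ≥ 1, every hyperplane arrangement ℋ in Λ_d(n,k) (i.e. n groups of k parallel hyperplanes in ℝ^d in general position modulo parallel hyperplanes) has exactly (k+1)·Σ_{j=0}^{d−1} C(n−1,j)·k^j + k^d·Σ_{j=d}^{n−1} C(j−1,d−1) regions, where the second sum is empty when n−1 < d. -/
noncomputable section

/-- `S` is (the carrier of) an affine subspace of dimension `m` in `ℝ^d`. -/
def IsAffineOfDim (d m : ℕ) (S : Set (EuclideanSpace ℝ (Fin d))) : Prop :=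
  ∃ A : AffineSubspace ℝ (EuclideanSpace ℝ (Fin d)),
    (A : Set (EuclideanSpace ℝ (Fin d))) = S ∧ S.Nonempty ∧ Module.finrank ℝ A.direction = m

/-- A family of hyperplanes `H i ⊆ ℝ^d`, grouped by `g : ι → Fin n` into `n` groups of
prescribed sizes `k l`, is in *general position modulo parallel hyperplanes*:
within each group the hyperplanes are parallel and pairwise distinct, and any selection of
hyperplanes from pairwise distinct groups is in general position. -/
def IsGPPH {ι : Type} [Fintype ι] (d n : ℕ) (g : ι → Fin n) (k : Fin n → ℕ)
    (H : ι → Set (EuclideanSpace ℝ (Fin d))) : Prop :=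
  (∀ l : Fin n, (Finset.univ.filter fun i => g i = l).card = k l) ∧
  (∀ l : Fin n, ∃ w : EuclideanSpace ℝ (Fin d), w ≠ 0 ∧
    ∀ i, g i = l → ∃ c : ℝ, H i = {x | (∑ t, w t * x t) = c}) ∧
  (∀ i i' : ι, i ≠ i' → g i = g i' → H i ≠ H i') ∧
  (∀ S : Finset ι, Set.InjOn g S →
    (S.card ≤ d → IsAffineOfDim d (d - S.card) (⋂ i ∈ S, H i)) ∧
    (d < S.card → (⋂ i ∈ S, H i) = ∅))

/-- The regions of an arrangement whose union is `A`: the connected components of `Aᶜ`. -/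
def regionsOf {d : ℕ} (A : Set (EuclideanSpace ℝ (Fin d))) :
    Set (Set (EuclideanSpace ℝ (Fin d))) :=
  {C | ∃ x ∈ Aᶜ, C = connectedComponentIn Aᶜ x}

/-- The number of regions of an arrangement whose union is `A`. -/
def numRegions {d : ℕ} (A : Set (EuclideanSpace ℝ (Fin d))) : ℕ :=
  (regionsOf A).ncard

section Helpers
open Classical Finset

variable {ι : Type} {E : Type} [NormedAddCommGroup E] [NormedSpace ℝ E]

/-- realised sign patterns on T inside the flat of S -/
def hCells (L : ι → E →L[ℝ] ℝ) (c : ι → ℝ) (S T : Finset ι) : Finset (Finset ι) :=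
  T.powerset.filter fun P => ∃ x, (∀ j ∈ S, L j x = c j) ∧
    (∀ j ∈ T, j ∈ P → c j < L j x) ∧ (∀ j ∈ T, j ∉ P → L j x < c j)

theorem h_perturb (L : ι → E →L[ℝ] ℝ) (c : ι → ℝ) (S T P : Finset ι) (i : ι) (x v : E)
    (hx : (∀ j ∈ S, L j x = c j) ∧
    (∀ j ∈ T, j ∈ P → c j < L j x) ∧ (∀ j ∈ T, j ∉ P → L j x < c j)) (hi : L i x = c i)
    (hv : ∀ j ∈ S, L j v = 0) (hvi : 0 < L i v) :
    ∃ y, ((∀ j ∈ S, L j y = c j) ∧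
    (∀ j ∈ T, j ∈ P → c j < L j y) ∧ (∀ j ∈ T, j ∉ P → L j y < c j)) ∧ c i < L i y := by
  obtain ⟨h1, h2, h3⟩ := hx
  have hc : ∀ j, Continuous fun t : ℝ => L j (x + t • v) := fun j => by fun_prop
  have e : ∀ j ∈ T, ∀ᶠ t in nhdsWithin (0:ℝ) (Set.Ioi 0),
      (j ∈ P → c j < L j (x + t • v)) ∧ (j ∉ P → L j (x + t • v) < c j) := by
    intro j hj
    apply Filter.Eventually.filter_mono nhdsWithin_le_nhds
    by_cases hP : j ∈ P
    · have := ((hc j).tendsto 0).eventually_const_lt (u := c j) (by simpa using h2 j hj hP)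
      filter_upwards [this] with t ht
      exact ⟨fun _ => ht, fun h => absurd hP h⟩
    · have := ((hc j).tendsto 0).eventually_lt_const (u := c j) (by simpa using h3 j hj hP)
      filter_upwards [this] with t ht
      exact ⟨fun h => absurd h hP, fun _ => ht⟩
  have e2 := (Filter.eventually_all_finset T).2 e
  obtain ⟨t, ht, ht0⟩ := (e2.and self_mem_nhdsWithin).exists
  refine ⟨x + t • v, ⟨fun j hj => by simp [h1 j hj, hv j hj], fun j hj => (ht j hj).1,
    fun j hj => (ht j hj).2⟩, ?_⟩
  have : 0 < t := ht0
  simp only [map_add, map_smul, hi, smul_eq_mul]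
  nlinarith [mul_pos this hvi]

theorem h_perturb' (L : ι → E →L[ℝ] ℝ) (c : ι → ℝ) (S T P : Finset ι) (i : ι) (x v : E)
    (hx : (∀ j ∈ S, L j x = c j) ∧
    (∀ j ∈ T, j ∈ P → c j < L j x) ∧ (∀ j ∈ T, j ∉ P → L j x < c j)) (hi : L i x = c i)
    (hv : ∀ j ∈ S, L j v = 0) (hvi : L i v < 0) :
    ∃ y, ((∀ j ∈ S, L j y = c j) ∧
    (∀ j ∈ T, j ∈ P → c j < L j y) ∧ (∀ j ∈ T, j ∉ P → L j y < c j)) ∧ L i y < c i := by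
  by_cases hiT : i ∈ T
  · exfalso
    by_cases hP : i ∈ P
    · exact absurd (hx.2.1 i hiT hP) (by simp [hi])
    · exact absurd (hx.2.2 i hiT hP) (by simp [hi])
  have key : ∀ j ∈ T, j ≠ i := fun j hj h => hiT (h ▸ hj)
  by_cases hiS : i ∈ S
  · exact absurd (hv i hiS) hvi.ne
  have keyS : ∀ j ∈ S, j ≠ i := fun j hj h => hiS (h ▸ hj)
  obtain ⟨y, hy, hyi⟩ := h_perturb (Function.update L i (-L i)) (Function.update c i (-c i)) S T P i x v
    ⟨fun j hj => by simp [keyS j hj, hx.1 j hj],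
      fun j hj h => by simpa [key j hj] using hx.2.1 j hj h,
      fun j hj h => by simpa [key j hj] using hx.2.2 j hj h⟩
    (by simp [hi]) (fun j hj => by simp [keyS j hj, hv j hj]) (by simpa using hvi)
  refine ⟨y, ⟨fun j hj => by simpa [keyS j hj] using hy.1 j hj,
      fun j hj h => by simpa [key j hj] using hy.2.1 j hj h,
      fun j hj h => by simpa [key j hj] using hy.2.2 j hj h⟩, by simpa using hyi⟩

theorem h_cells_insert (L : ι → E →L[ℝ] ℝ) (c : ι → ℝ) (S T : Finset ι) (i : ι) (hiT : i ∉ T)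
    (hs : (∃ x, ∀ j ∈ insert i S, L j x = c j) → ∃ v, (∀ j ∈ S, L j v = 0) ∧ L i v ≠ 0) :
    (hCells L c S (insert i T)).card = (hCells L c S T).card + (hCells L c (insert i S) T).card := by
  let Q : Finset ι → E → Prop := fun P x => (∀ j ∈ S, L j x = c j) ∧
    (∀ j ∈ T, j ∈ P → c j < L j x) ∧ (∀ j ∈ T, j ∉ P → L j x < c j)
  let A := T.powerset.filter fun P => ∃ x, Q P x ∧ L i x < c i
  let B := T.powerset.filter fun P => ∃ x, Q P x ∧ c i < L i x
  have hv2 : (∃ x, ∀ j ∈ insert i S, L j x = c j) → ∃ v, (∀ j ∈ S, L j v = 0) ∧ 0 < L i v := by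
    intro h
    obtain ⟨v, h1, h2⟩ := hs h
    rcases lt_or_gt_of_ne h2 with h2 | h2
    · exact ⟨-v, fun j hj => by simp [h1 j hj], by simpa using h2⟩
    · exact ⟨v, h1, h2⟩
  have hU : hCells L c S T = A ∪ B := by
    ext P
    simp only [hCells, A, B, mem_union, mem_filter]
    constructor
    · rintro ⟨hP, x, hx⟩
      rcases lt_trichotomy (L i x) (c i) with h | h | h
      · exact Or.inl ⟨hP, x, hx, h⟩
      · obtain ⟨v, h1, h2⟩ := hv2 ⟨x, by
          intro j hj
          rcases mem_insert.1 hj with rfl | hj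
          · exact h
          · exact hx.1 j hj⟩
        exact Or.inr ⟨hP, h_perturb L c S T P i x v hx h h1 h2⟩
      · exact Or.inr ⟨hP, x, hx, h⟩
    · rintro (⟨hP, x, hx, -⟩ | ⟨hP, x, hx, -⟩) <;> exact ⟨hP, x, hx⟩
  have hI : hCells L c (insert i S) T = A ∩ B := by
    ext P
    simp only [hCells, A, B, mem_inter, mem_filter]
    constructor
    · rintro ⟨hP, x, hx1, hx2⟩
      obtain ⟨v, h1, h2⟩ := hv2 ⟨x, hx1⟩
      have hx : Q P x := ⟨fun j hj => hx1 j (mem_insert_of_mem hj), hx2⟩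
      have h := hx1 i (mem_insert_self _ _)
      exact ⟨⟨hP, h_perturb' L c S T P i x (-v) hx h (fun j hj => by simp [h1 j hj]) (by simpa using h2)⟩,
        ⟨hP, h_perturb L c S T P i x v hx h h1 h2⟩⟩
    · rintro ⟨⟨hP, x, hx, hxi⟩, ⟨-, y, hy, hyi⟩⟩
      refine ⟨hP, ?_⟩
      have hd : 0 < L i y - L i x := by linarith
      set a := (L i y - c i) / (L i y - L i x) with ha
      set b := (c i - L i x) / (L i y - L i x) with hb
      have ha0 : 0 < a := div_pos (by linarith) hd
      have hb0 : 0 < b := div_pos (by linarith) hd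
      have hab : a + b = 1 := by rw [ha, hb]; field_simp; ring
      have hz : ∀ j, L j (a • x + b • y) = a * L j x + b * L j y := by intro j; simp
      have hcc : ∀ j, c j = a * c j + b * c j := fun j => by rw [← add_mul, hab, one_mul]
      refine ⟨a • x + b • y, ?_, ?_, ?_⟩
      · intro j hj
        rcases mem_insert.1 hj with rfl | hj
        · rw [hz, ha, hb]; field_simp; ring
        · rw [hz, hx.1 j hj, hy.1 j hj, ← hcc]
      · intro j hj h
        rw [hz, hcc j]
        have := mul_lt_mul_of_pos_left (hx.2.1 j hj h) ha0
        have := mul_lt_mul_of_pos_left (hy.2.1 j hj h) hb0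
        linarith
      · intro j hj h
        rw [hz, hcc j]
        have := mul_lt_mul_of_pos_left (hx.2.2 j hj h) ha0
        have := mul_lt_mul_of_pos_left (hy.2.2 j hj h) hb0
        linarith
  have hnot : ∀ P ∈ T.powerset, i ∉ P := fun P hP h => hiT (mem_powerset.1 hP h)
  have hD : hCells L c S (insert i T) = A ∪ B.image (insert i) := by
    have e1 : ∀ P ∈ T.powerset, ∀ x, ((∀ j ∈ S, L j x = c j) ∧
    (∀ j ∈ insert i T, j ∈ P → c j < L j x) ∧ (∀ j ∈ insert i T, j ∉ P → L j x < c j)) ↔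
        Q P x ∧ L i x < c i := by
      intro P hP x
      have := hnot P hP
      simp only [Q, mem_insert, forall_eq_or_imp]
      tauto
    have e2 : ∀ P ∈ T.powerset, ∀ x, ((∀ j ∈ S, L j x = c j) ∧
    (∀ j ∈ insert i T, j ∈ insert i P → c j < L j x) ∧
      (∀ j ∈ insert i T, j ∉ insert i P → L j x < c j)) ↔
        Q P x ∧ c i < L i x := by
      intro P hP x
      have hne : ∀ j ∈ T, j ≠ i := fun j hj h => hiT (h ▸ hj)
      have a1 : (∀ j ∈ T, j ∈ insert i P → c j < L j x) ↔ (∀ j ∈ T, j ∈ P → c j < L j x) :=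
        forall₂_congr fun j hj => by simp [hne j hj]
      have a2 : (∀ j ∈ T, j ∉ insert i P → L j x < c j) ↔ (∀ j ∈ T, j ∉ P → L j x < c j) :=
        forall₂_congr fun j hj => by simp [hne j hj]
      simp only [Q, forall_mem_insert, a1, a2]
      simp only [mem_insert_self, not_true_eq_false, false_imp_iff, true_imp_iff, true_and]
      tauto
    rw [hCells, powerset_insert, filter_union]
    congr 1
    · exact filter_congr fun P hP => exists_congr (e1 P hP)
    · rw [filter_image]
      congr 1
      exact filter_congr fun P hP => exists_congr (e2 P hP)
  rw [hD, hU, hI, card_union_add_card_inter, card_union_of_disjoint, card_image_of_injOn]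
  · intro P hP P' hP' h
    have h1 := hnot P (mem_of_mem_filter _ hP)
    have h2 := hnot P' (mem_of_mem_filter _ hP')
    have h : insert i P = insert i P' := h
    rw [← erase_insert h1, h, erase_insert h2]
  · rw [disjoint_left]
    intro P hP h
    obtain ⟨P', -, rfl⟩ := mem_image.1 h
    exact hnot _ (mem_of_mem_filter _ hP) (mem_insert_self _ _)

theorem h_cells_card (L : ι → E →L[ℝ] ℝ) (c : ι → ℝ)
    (hs : ∀ (S : Finset ι) (i : ι), i ∉ S → (∃ x, ∀ j ∈ insert i S, L j x = c j) →
      ∃ v, (∀ j ∈ S, L j v = 0) ∧ L i v ≠ 0) (T : Finset ι) :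
    ∀ S : Finset ι, Disjoint S T → (hCells L c S T).card =
      (T.powerset.filter fun U => ∃ x, ∀ j ∈ S ∪ U, L j x = c j).card := by
  induction T using Finset.induction_on with
  | empty =>
    intro S _
    congr 1
    simp only [hCells]
    apply filter_congr
    intro P hP
    have : P = ∅ := by simpa using hP
    subst this
    simp
  | insert i T hiT ih =>
    intro S hS
    rw [disjoint_insert_right] at hS
    rw [h_cells_insert L c S T i hiT (hs S i hS.1), ih S hS.2, ih (insert i S) (by
      rw [disjoint_insert_left]; exact ⟨hiT, hS.2⟩), powerset_insert, filter_union,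
      card_union_of_disjoint, filter_image, card_image_of_injOn]
    · simp only [insert_union, union_insert]
    · intro P hP P' hP' h
      have h1 : i ∉ P := fun h => hiT (mem_powerset.1 (mem_of_mem_filter _ hP) h)
      have h2 : i ∉ P' := fun h => hiT (mem_powerset.1 (mem_of_mem_filter _ hP') h)
      have h : insert i P = insert i P' := h
      rw [← erase_insert h1, h, erase_insert h2]
    · rw [disjoint_left]
      intro P hP h
      obtain ⟨P', -, rfl⟩ := mem_image.1 (mem_of_mem_filter _ h)
      exact hiT (mem_powerset.1 (mem_of_mem_filter _ hP) (mem_insert_self _ _))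

theorem h_component (L : ι → E →L[ℝ] ℝ) (c : ι → ℝ) (x : E) (hx : ∀ i, L i x ≠ c i) :
    connectedComponentIn {y | ∀ i, L i y ≠ c i} x =
      {y | ∀ i, L i y ≠ c i ∧ (c i < L i y ↔ c i < L i x)} := by
  apply Set.Subset.antisymm
  · intro y hy i
    have hsub := connectedComponentIn_subset {y | ∀ i, L i y ≠ c i} x
    have hpre : IsPreconnected (connectedComponentIn {y | ∀ i, L i y ≠ c i} x) :=
      isPreconnected_connectedComponentIn
    have hxm : x ∈ connectedComponentIn {y | ∀ i, L i y ≠ c i} x := mem_connectedComponentIn hx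
    refine ⟨hsub hy i, ?_⟩
    have hcont : ContinuousOn (fun y => L i y) (connectedComponentIn {y | ∀ i, L i y ≠ c i} x) :=
      (L i).continuous.continuousOn
    by_contra hne
    have hyi := hsub hy i
    have hxi := hx i
    rcases lt_or_gt_of_ne hyi with h1 | h1 <;> rcases lt_or_gt_of_ne hxi with h2 | h2
    · exact hne ⟨fun h => absurd h h1.not_gt, fun h => absurd h h2.not_gt⟩
    · obtain ⟨z, hz, hzi⟩ := hpre.intermediate_value hy hxm hcont ⟨h1.le, h2.le⟩
      exact hsub hz i hzi
    · obtain ⟨z, hz, hzi⟩ := hpre.intermediate_value hxm hy hcont ⟨h2.le, h1.le⟩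
      exact hsub hz i hzi
    · exact hne ⟨fun _ => h2, fun _ => h1⟩
  · apply IsPreconnected.subset_connectedComponentIn
    · apply Convex.isPreconnected
      have : {y | ∀ i, L i y ≠ c i ∧ (c i < L i y ↔ c i < L i x)} =
          ⋂ i, (if c i < L i x then {y | c i < L i y} else {y | L i y < c i}) := by
        ext y
        simp only [Set.mem_ofPred_eq, Set.mem_iInter]
        refine forall_congr' fun i => ?_
        split_ifs with h
        · simp only [h, iff_true, Set.mem_ofPred_eq]
          exact ⟨fun h => h.2, fun h => ⟨h.ne', h⟩⟩
        · simp only [h, iff_false, not_lt, Set.mem_ofPred_eq]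
          exact ⟨fun h => lt_of_le_of_ne h.2 h.1, fun h => ⟨h.ne, h.le⟩⟩
      rw [this]
      apply convex_iInter
      intro i
      split_ifs
      · exact convex_halfSpace_gt (L i).toLinearMap.isLinear _
      · exact convex_halfSpace_lt (L i).toLinearMap.isLinear _
    · exact fun i => ⟨hx i, Iff.rfl⟩
    · exact fun y hy i => (hy i).1

theorem h_regions [Fintype ι] (L : ι → E →L[ℝ] ℝ) (c : ι → ℝ) :
    {C | ∃ x ∈ {y | ∀ i, L i y ≠ c i}, C = connectedComponentIn {y | ∀ i, L i y ≠ c i} x}.ncard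
      = (hCells L c ∅ univ).card := by
  rw [← Set.ncard_coe_finset]
  symm
  apply Set.ncard_congr (fun (P : Finset ι) _ =>
    {y | ∀ i, L i y ≠ c i ∧ (c i < L i y ↔ i ∈ P)})
  · intro P hP
    simp only [hCells, mem_coe, mem_filter] at hP
    obtain ⟨-, x, -, h1, h2⟩ := hP
    have hx : ∀ i, L i x ≠ c i := fun i => by
      by_cases h : i ∈ P
      · exact (h1 i (mem_univ _) h).ne'
      · exact (h2 i (mem_univ _) h).ne
    refine ⟨x, hx, ?_⟩
    rw [h_component L c x hx]
    ext y
    refine forall_congr' fun i => and_congr_right fun _ => ?_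
    have : c i < L i x ↔ i ∈ P := by
      by_cases h : i ∈ P
      · simp [h, h1 i (mem_univ _) h]
      · simp [h, (h2 i (mem_univ _) h).le]
    rw [this]
  · intro P P' hP hP' h
    simp only [hCells, mem_coe, mem_filter] at hP
    obtain ⟨-, x, -, h1, h2⟩ := hP
    have hx : ∀ i, L i x ≠ c i ∧ (c i < L i x ↔ i ∈ P) := fun i => by
      by_cases h : i ∈ P
      · exact ⟨(h1 i (mem_univ _) h).ne', by simp [h, h1 i (mem_univ _) h]⟩
      · exact ⟨(h2 i (mem_univ _) h).ne, by simp [h, (h2 i (mem_univ _) h).le]⟩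
    have hx' : x ∈ {y | ∀ i, L i y ≠ c i ∧ (c i < L i y ↔ i ∈ P')} := h ▸ hx
    ext i
    rw [← (hx i).2, (hx' i).2]
  · rintro C ⟨x, hx, rfl⟩
    refine ⟨univ.filter fun i => c i < L i x, ?_, ?_⟩
    · simp only [hCells, mem_coe, mem_filter]
      refine ⟨by simp, x, by simp, by simp, ?_⟩
      intro j _ hj
      simp only [mem_filter, mem_univ, true_and, not_lt] at hj
      exact lt_of_le_of_ne hj (hx j)
    · rw [h_component L c x hx]
      simp

theorem h_count [Fintype ι] {n k : ℕ} (g : ι → Fin n)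
    (hg : ∀ l : Fin n, (univ.filter fun i => g i = l).card = k) (j : ℕ) :
    ((univ : Finset (Finset ι)).filter fun U : Finset ι => Set.InjOn g U ∧ U.card = j).card
      = n.choose j * k ^ j := by
  have h1 : ∀ A : Finset (Fin n),
      ((univ : Finset (Finset ι)).filter fun U : Finset ι => Set.InjOn g U ∧ U.image g = A).card
        = k ^ A.card := by
    intro A
    have : (A.pi fun l => univ.filter fun i => g i = l).card = k ^ A.card := by
      rw [card_pi]; simp [hg]
    rw [← this]
    symm
    apply card_bij (fun p _ => A.attach.image fun l => p l.1 l.2)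
    · intro p hp
      have hp' : ∀ l hl, g (p l hl) = l := fun l hl => by simpa using mem_pi.1 hp l hl
      simp only [mem_filter, mem_univ, true_and]
      constructor
      · intro a ha b hb hab
        obtain ⟨⟨l, hl⟩, -, rfl⟩ := mem_image.1 (mem_coe.1 ha)
        obtain ⟨⟨m, hm⟩, -, rfl⟩ := mem_image.1 (mem_coe.1 hb)
        simp only [hp'] at hab
        subst hab
        rfl
      · rw [image_image]
        ext l
        simp [hp']
    · intro p hp q hq h
      have hp' : ∀ l hl, g (p l hl) = l := fun l hl => by simpa using mem_pi.1 hp l hl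
      have hq' : ∀ l hl, g (q l hl) = l := fun l hl => by simpa using mem_pi.1 hq l hl
      funext l hl
      have : p l hl ∈ A.attach.image fun l => q l.1 l.2 := by
        rw [← h]
        exact mem_image.2 ⟨⟨l, hl⟩, mem_attach _ _, rfl⟩
      obtain ⟨⟨m, hm⟩, -, hm2⟩ := mem_image.1 this
      have e : m = l := by
        have := congrArg g hm2
        simpa [hp', hq'] using this
      subst e
      exact hm2.symm
    · intro U hU
      simp only [mem_filter, mem_univ, true_and] at hU
      obtain ⟨hinj, rfl⟩ := hU
      have : ∀ l ∈ U.image g, ∃ i ∈ U, g i = l := fun l hl => mem_image.1 hl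
      choose p hp1 hp2 using this
      refine ⟨p, ?_, ?_⟩
      · rw [mem_pi]; intro l hl; simpa using hp2 l hl
      · ext i
        simp only [mem_image, mem_attach, true_and, Subtype.exists]
        constructor
        · rintro ⟨l, hl, rfl⟩
          exact hp1 l (mem_image.2 hl)
        · intro hi
          have hm := mem_image_of_mem g hi
          exact ⟨g i, mem_image.1 hm, hinj (hp1 _ hm) hi (hp2 _ hm)⟩
  have h2 : ((univ : Finset (Finset ι)).filter fun U : Finset ι => Set.InjOn g U ∧ U.card = j)
      = (powersetCard j (univ : Finset (Fin n))).biUnion fun A =>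
        ((univ : Finset (Finset ι)).filter fun U : Finset ι => Set.InjOn g U ∧ U.image g = A) := by
    ext U
    simp only [mem_filter, mem_univ, true_and, mem_biUnion, mem_powersetCard, subset_univ]
    constructor
    · rintro ⟨h, hc⟩
      exact ⟨U.image g, by rw [card_image_of_injOn h, hc], h, rfl⟩
    · rintro ⟨A, hA, h, rfl⟩
      exact ⟨h, by rw [← hA, card_image_of_injOn h]⟩
  rw [h2, card_biUnion]
  · rw [sum_congr rfl fun A hA => (h1 A).trans (by rw [(mem_powersetCard.1 hA).2])]
    simp
  · intro A _ B _ hAB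
    refine disjoint_left.2 ?_
    intro U hU hU'
    simp only [mem_filter, mem_univ, true_and] at hU hU'
    exact hAB (hU.2.symm.trans hU'.2)

theorem h_arith (d n k : ℕ) (hd : 1 ≤ d) (hn : 1 ≤ n) :
    ∑ j ∈ range (d + 1), n.choose j * k ^ j =
      (k + 1) * ∑ j ∈ Finset.range d, Nat.choose (n - 1) j * k ^ j
        + k ^ d * ∑ j ∈ Finset.Icc d (n - 1), Nat.choose (j - 1) (d - 1) := by
  obtain ⟨m, rfl⟩ : ∃ m, n = m + 1 := ⟨n - 1, by omega⟩
  obtain ⟨e, rfl⟩ : ∃ e, d = e + 1 := ⟨d - 1, by omega⟩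
  simp only [Nat.add_sub_cancel]
  have hs : ∑ j ∈ Finset.Icc (e + 1) m, Nat.choose (j - 1) e = m.choose (e + 1) := by
    clear hn
    induction m with
    | zero => simp
    | succ m ih =>
      by_cases h : e + 1 ≤ m + 1
      · rw [Finset.sum_Icc_succ_top h, ih, Nat.choose_succ_succ]
        simp [add_comm]
      · rw [Finset.Icc_eq_empty h, Nat.choose_eq_zero_of_lt (by omega)]
        simp
  rw [hs, Finset.sum_range_succ']
  simp only [Nat.choose_succ_succ, add_mul, Finset.sum_add_distrib]
  have h2 : ∑ j ∈ range (e + 1), m.choose (j + 1) * k ^ (j + 1) + 1 =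
    ∑ j ∈ range (e + 1), m.choose j * k ^ j + m.choose (e + 1) * k ^ (e + 1) := by
    rw [← Finset.sum_range_succ, Finset.sum_range_succ' _ (e + 1)]
    simp
  have h3 : ∑ j ∈ range (e + 1), m.choose j * k ^ (j + 1) =
    k * ∑ j ∈ range (e + 1), m.choose j * k ^ j := by
    rw [Finset.mul_sum]
    exact Finset.sum_congr rfl fun j _ => by ring
  simp only [Nat.succ_eq_add_one] at *
  rw [h3]
  simp only [Nat.choose_zero_right, pow_zero, mul_one, one_mul]
  linarith

theorem h_main {d n k : ℕ} (hd : 1 ≤ d) (hn : 1 ≤ n)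
    [Fintype ι] (g : ι → Fin n) (H : ι → Set (EuclideanSpace ℝ (Fin d)))
    (hGP : IsGPPH d n g (fun _ => k) H) :
    numRegions (⋃ i, H i) =
      (k + 1) * ∑ j ∈ Finset.range d, Nat.choose (n - 1) j * k ^ j
        + k ^ d * ∑ j ∈ Finset.Icc d (n - 1), Nat.choose (j - 1) (d - 1) := by
  obtain ⟨hcard, hpar, hdist, hgen⟩ := hGP
  choose w hw0 hw using hpar
  choose c hc using fun i => hw (g i) i rfl
  let M : Fin n → EuclideanSpace ℝ (Fin d) →L[ℝ] ℝ := fun l =>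
    ∑ t, w l t • (EuclideanSpace.proj t : EuclideanSpace ℝ (Fin d) →L[ℝ] ℝ)
  let L : ι → EuclideanSpace ℝ (Fin d) →L[ℝ] ℝ := fun i => M (g i)
  have hH : ∀ i, H i = {x | L i x = c i} := by
    intro i
    rw [hc i]
    ext x
    simp [L, M]
  have hF : ∀ S : Finset ι, ∀ x, x ∈ (⋂ i ∈ S, H i) ↔ ∀ j ∈ S, L j x = c j := by
    intro S x
    simp [hH]
  have hne : ∀ S : Finset ι, (∃ x, ∀ j ∈ S, L j x = c j) ↔ Set.InjOn g S ∧ S.card ≤ d := by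
    intro S
    constructor
    · rintro ⟨x, hx⟩
      have hinj : Set.InjOn g S := by
        intro a ha b hb hab
        by_contra hne
        apply hdist a b hne hab
        have hL : L a = L b := by simp only [L, hab]
        have : c a = c b := by rw [← hx a ha, ← hx b hb, hL]
        rw [hH, hH, hL, this]
      refine ⟨hinj, ?_⟩
      by_contra hlt
      have := (hgen S hinj).2 (by omega)
      have hx' := (hF S x).2 hx
      rw [this] at hx'
      exact hx'
    · rintro ⟨hinj, hle⟩
      obtain ⟨A, -, ⟨x, hx⟩, -⟩ := (hgen S hinj).1 hle
      exact ⟨x, (hF S x).1 hx⟩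
  have hs : ∀ (S : Finset ι) (i : ι), i ∉ S → (∃ x, ∀ j ∈ insert i S, L j x = c j) →
      ∃ v, (∀ j ∈ S, L j v = 0) ∧ L i v ≠ 0 := by
    intro S i hi hx
    obtain ⟨hinj, hle⟩ := (hne _).1 hx
    obtain ⟨x, hx⟩ := hx
    by_contra hcon
    push Not at hcon
    have hcd := card_insert_of_notMem hi
    obtain ⟨A, hA, -, hAd⟩ := (hgen _ hinj).1 hle
    obtain ⟨B, hB, -, hBd⟩ := (hgen S (hinj.mono (by simp))).1 (by omega)
    have : A = B := by
      apply SetLike.coe_injective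
      rw [hA, hB]
      ext y
      rw [hF, hF]
      constructor
      · exact fun h j hj => h j (mem_insert_of_mem hj)
      · intro h j hj
        rcases mem_insert.1 hj with rfl | hj
        · have := hcon (y - x) (fun m hm => by
            rw [map_sub, h m hm, hx m (mem_insert_of_mem hm), sub_self])
          rw [map_sub, hx j (mem_insert_self _ _)] at this
          linarith
        · exact h j hj
    subst this
    omega
  have hcompl : (⋃ i, H i)ᶜ = {y | ∀ i, L i y ≠ c i} := by
    ext y
    simp [hH]
  rw [numRegions, regionsOf, hcompl, h_regions, h_cells_card L c hs univ ∅ (by simp),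
    ← h_arith d n k hd hn]
  simp only [empty_union, hne, powerset_univ]
  rw [← sum_congr rfl fun j _ => h_count g hcard j, ← card_biUnion]
  · congr 1
    ext U
    simp [Nat.lt_succ_iff, and_comm]
  · intro a _ b _ hab
    refine disjoint_left.2 ?_
    intro U hU hU'
    simp only [mem_filter, mem_univ, true_and] at hU hU'
    exact hab (hU.2.symm.trans hU'.2)

end Helpers

/-- Every arrangement in `Λ_d(n,k)` has exactly
`(k+1)·Σ_{j<d} C(n−1,j)·k^j + k^d·Σ_{j=d}^{n−1} C(j−1,d−1)` regions. -/
theorem numRegions_of_isGPPH {d n k : ℕ} (hd : 1 ≤ d) (hn : 1 ≤ n) (hk : 1 ≤ k)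
    {ι : Type} [Fintype ι] (g : ι → Fin n) (H : ι → Set (EuclideanSpace ℝ (Fin d)))
    (hGP : IsGPPH d n g (fun _ => k) H) :
    numRegions (⋃ i, H i) =
      (k + 1) * ∑ j ∈ Finset.range d, Nat.choose (n - 1) j * k ^ j
        + k ^ d * ∑ j ∈ Finset.Icc d (n - 1), Nat.choose (j - 1) (d - 1) := by
  exact h_main hd hn g H hGP

end
end

section
/- Let n ≥ 1, d ≥ 1 and k_1,…,k_n ≥ 1. Any two hyperplane arrangements in Λ_d((k_1,…,k_n)) have the same number of regions. -/
noncomputable section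

/-- Sign patterns of the `f i`, `i ∈ T`, on points of `P`. -/
def patSet {ι E : Type} [DecidableEq ι] (f : ι → E → ℝ) (P : Set E) (T : Finset ι) :
    Set (Finset ι) :=
  {σ | ∃ x ∈ P, (∀ i ∈ T, f i x ≠ 0) ∧ ∀ i, i ∈ σ ↔ i ∈ T ∧ 0 < f i x}

def flat {ι E : Type} (f : ι → E → ℝ) (S : Finset ι) : Set E := {x | ∀ i ∈ S, f i x = 0}

lemma small_move {ι : Type} (T : Finset ι) (a b : ι → ℝ) (h : ∀ i ∈ T, a i ≠ 0) :
    ∃ ε > (0:ℝ), ∀ t, |t| ≤ ε → ∀ i ∈ T, 0 < a i * (a i + t * (b i - a i)) := by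
  have : ∀ᶠ t in nhds (0:ℝ), ∀ i ∈ T, 0 < a i * (a i + t * (b i - a i)) := by
    rw [Filter.eventually_all_finset]
    intro i hi
    have hc : Continuous fun t : ℝ => a i * (a i + t * (b i - a i)) := by fun_prop
    apply hc.continuousAt.eventually_const_lt
    simpa using h i hi
  obtain ⟨ε, hε, h2⟩ := Metric.eventually_nhds_iff.1 this
  refine ⟨ε / 2, by positivity, fun t ht => h2 ?_⟩
  rw [Real.dist_eq, sub_zero]
  linarith

lemma pos_iff_of_mul_pos {a b : ℝ} (h : 0 < a * b) : 0 < b ↔ 0 < a := by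
  constructor
  · intro hb; by_contra h0; nlinarith
  · intro hb; by_contra h0; nlinarith

lemma patSet_insert {ι E : Type} [Fintype ι] [DecidableEq ι] [AddCommGroup E] [Module ℝ E]
    (f : ι → E → ℝ)
    (hf : ∀ i x y (t : ℝ), f i (x + t • (y - x)) = f i x + t * (f i y - f i x))
    (P : Set E) (hP : ∀ x ∈ P, ∀ y ∈ P, ∀ t : ℝ, x + t • (y - x) ∈ P)
    (T : Finset ι) (i : ι) (hi : i ∉ T) (hp : P.Nonempty → ∃ p ∈ P, f i p ≠ 0) :
    (patSet f P (insert i T)).ncard =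
      (patSet f P T).ncard + (patSet f (P ∩ {x | f i x = 0}) T).ncard := by
  have hmove : ∀ x ∈ P, (∀ j ∈ T, f j x ≠ 0) → f i x = 0 →
      (∃ y ∈ P, (∀ j ∈ T, f j y ≠ 0) ∧ (∀ j ∈ T, (0 < f j y ↔ 0 < f j x)) ∧ 0 < f i y) ∧
      (∃ y ∈ P, (∀ j ∈ T, f j y ≠ 0) ∧ (∀ j ∈ T, (0 < f j y ↔ 0 < f j x)) ∧ f i y < 0) := by
    intro x hx hxT hxi
    obtain ⟨p, hpP, hpi⟩ := hp ⟨x, hx⟩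
    obtain ⟨ε, hε, h⟩ := small_move T (fun j => f j x) (fun j => f j p) hxT
    have key : ∀ t : ℝ, |t| ≤ ε → (x + t • (p - x) ∈ P ∧
        (∀ j ∈ T, f j (x + t • (p - x)) ≠ 0) ∧
        (∀ j ∈ T, (0 < f j (x + t • (p - x)) ↔ 0 < f j x)) ∧
        f i (x + t • (p - x)) = t * f i p) := by
      intro t ht
      have h1 := h t ht
      refine ⟨hP x hx p hpP t, fun j hj => ?_, fun j hj => ?_, ?_⟩
      · rw [hf]; intro h0; have := h1 j hj; simp [h0] at this
      · rw [hf]; exact pos_iff_of_mul_pos (h1 j hj)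
      · rw [hf, hxi]; ring
    have k1 := key ε (by rw [abs_of_pos hε])
    have k2 := key (-ε) (by rw [abs_neg, abs_of_pos hε])
    rcases lt_or_gt_of_ne hpi with hneg | hpos
    · exact ⟨⟨_, k2.1, k2.2.1, k2.2.2.1, by rw [k2.2.2.2]; nlinarith⟩,
        ⟨_, k1.1, k1.2.1, k1.2.2.1, by rw [k1.2.2.2]; nlinarith⟩⟩
    · exact ⟨⟨_, k1.1, k1.2.1, k1.2.2.1, by rw [k1.2.2.2]; nlinarith⟩,
        ⟨_, k2.1, k2.2.1, k2.2.2.1, by rw [k2.2.2.2]; nlinarith⟩⟩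
  set Bp := patSet f (P ∩ {x | 0 < f i x}) T with hBp
  set Bm := patSet f (P ∩ {x | f i x < 0}) T with hBm
  have hnot : ∀ Q : Set E, ∀ σ ∈ patSet f Q T, i ∉ σ := by
    rintro Q σ ⟨x, -, -, h⟩ hiσ
    exact hi ((h i).1 hiσ).1
  have e1 : patSet f P T = Bp ∪ Bm := by
    ext σ
    constructor
    · rintro ⟨x, hx, h1, h2⟩
      rcases lt_trichotomy (f i x) 0 with h | h | h
      · exact Or.inr ⟨x, ⟨hx, h⟩, h1, h2⟩
      · obtain ⟨y, hy, a, b, c⟩ := (hmove x hx h1 h).1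
        refine Or.inl ⟨y, ⟨hy, c⟩, a, fun j => ?_⟩
        rw [h2]
        exact and_congr_right fun hj => (b j hj).symm
      · exact Or.inl ⟨x, ⟨hx, h⟩, h1, h2⟩
    · rintro (⟨x, hx, h⟩ | ⟨x, hx, h⟩)
      · exact ⟨x, hx.1, h⟩
      · exact ⟨x, hx.1, h⟩
  have e2 : patSet f (P ∩ {x | f i x = 0}) T = Bp ∩ Bm := by
    ext σ
    constructor
    · rintro ⟨x, ⟨hx, h⟩, h1, h2⟩
      obtain ⟨⟨y, hy, a, b, c⟩, ⟨y', hy', a', b', c'⟩⟩ := hmove x hx h1 h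
      refine ⟨⟨y, ⟨hy, c⟩, a, fun j => ?_⟩, ⟨y', ⟨hy', c'⟩, a', fun j => ?_⟩⟩
      · rw [h2]
        exact and_congr_right fun hj => (b j hj).symm
      · rw [h2]
        exact and_congr_right fun hj => (b' j hj).symm
    · rintro ⟨⟨x, ⟨hx, hxi⟩, h1, h2⟩, ⟨y, ⟨hy, hyi⟩, h1', h2'⟩⟩
      simp only [Set.mem_ofPred_eq] at hxi hyi
      have hD : 0 < f i x - f i y := by linarith
      set t := f i x / (f i x - f i y) with ht
      have ht0 : 0 < t := by positivity
      have ht1 : t < 1 := by rw [ht, div_lt_one hD]; linarith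
      have hs : ∀ j ∈ T, (0 < f j y ↔ 0 < f j x) := by
        intro j hj
        have a := h2 j
        have b := h2' j
        simp only [hj, true_and] at a b
        rw [← a, ← b]
      have hz : ∀ j ∈ T, f j (x + t • (y - x)) ≠ 0 ∧
          (0 < f j x ↔ 0 < f j (x + t • (y - x))) := by
        intro j hj
        rw [hf]
        have e : f j x + t * (f j y - f j x) = (1 - t) * f j x + t * f j y := by ring
        rw [e]
        have h1t : 0 < 1 - t := by linarith
        rcases lt_or_gt_of_ne (h1 j hj) with h | h
        · have hy' : f j y < 0 := lt_of_le_of_ne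
            (not_lt.1 fun h' => absurd ((hs j hj).1 h') (not_lt.2 h.le)) (h1' j hj)
          have : (1 - t) * f j x + t * f j y < 0 := by nlinarith
          exact ⟨this.ne, by constructor <;> intro <;> linarith⟩
        · have hy' : 0 < f j y := (hs j hj).2 h
          have : 0 < (1 - t) * f j x + t * f j y := by positivity
          exact ⟨this.ne', by constructor <;> intro <;> assumption⟩
      refine ⟨x + t • (y - x), ⟨hP x hx y hy t, ?_⟩, fun j hj => (hz j hj).1, fun j => ?_⟩
      · simp only [Set.mem_ofPred_eq]
        rw [hf, ht]
        field_simp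
        ring
      · rw [h2]
        exact and_congr_right fun hj => (hz j hj).2
  have e3 : patSet f P (insert i T) = (insert i) '' Bp ∪ Bm := by
    ext σ
    constructor
    · rintro ⟨x, hx, h1, h2⟩
      have hxi := h1 i (Finset.mem_insert_self _ _)
      have h1' : ∀ j ∈ T, f j x ≠ 0 := fun j hj => h1 j (Finset.mem_insert_of_mem hj)
      rcases lt_or_gt_of_ne hxi with h | h
      · refine Or.inr ⟨x, ⟨hx, h⟩, h1', fun j => ?_⟩
        rw [h2, Finset.mem_insert]
        constructor
        · rintro ⟨rfl | hj, h'⟩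
          · exact absurd h' (not_lt.2 h.le)
          · exact ⟨hj, h'⟩
        · rintro ⟨hj, h'⟩
          exact ⟨Or.inr hj, h'⟩
      · refine Or.inl ⟨σ.erase i, ⟨x, ⟨hx, h⟩, h1', fun j => ?_⟩, ?_⟩
        · rw [Finset.mem_erase, h2, Finset.mem_insert]
          constructor
          · rintro ⟨hne, hj | hj, h'⟩
            · exact absurd hj hne
            · exact ⟨hj, h'⟩
          · rintro ⟨hj, h'⟩
            exact ⟨fun h => hi (h ▸ hj), Or.inr hj, h'⟩
        · apply Finset.insert_erase
          rw [h2]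
          exact ⟨Finset.mem_insert_self _ _, h⟩
    · rintro (⟨τ, ⟨x, ⟨hx, h⟩, h1, h2⟩, rfl⟩ | ⟨x, ⟨hx, h⟩, h1, h2⟩)
      · simp only [Set.mem_ofPred_eq] at h
        refine ⟨x, hx, ?_, fun j => ?_⟩
        · intro j hj
          rcases Finset.mem_insert.1 hj with rfl | hj
          · exact h.ne'
          · exact h1 j hj
        · rw [Finset.mem_insert, h2, Finset.mem_insert]
          constructor
          · rintro (rfl | ⟨hj, h'⟩)
            · exact ⟨Or.inl rfl, h⟩
            · exact ⟨Or.inr hj, h'⟩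
          · rintro ⟨rfl | hj, h'⟩
            · exact Or.inl rfl
            · exact Or.inr ⟨hj, h'⟩
      · simp only [Set.mem_ofPred_eq] at h
        refine ⟨x, hx, ?_, fun j => ?_⟩
        · intro j hj
          rcases Finset.mem_insert.1 hj with rfl | hj
          · exact h.ne
          · exact h1 j hj
        · rw [h2, Finset.mem_insert]
          constructor
          · rintro ⟨hj, h'⟩
            exact ⟨Or.inr hj, h'⟩
          · rintro ⟨rfl | hj, h'⟩
            · exact absurd h' (not_lt.2 h.le)
            · exact ⟨hj, h'⟩
  have hdis : Disjoint ((insert i) '' Bp) Bm := by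
    rw [Set.disjoint_left]
    rintro _ ⟨τ, -, rfl⟩ h
    exact hnot _ _ h (Finset.mem_insert_self _ _)
  have hinj : Set.InjOn (insert i : Finset ι → Finset ι) Bp := by
    intro a ha b hb hab
    have := congrArg (fun s => Finset.erase s i) hab
    simpa [Finset.erase_insert (hnot _ _ ha), Finset.erase_insert (hnot _ _ hb)] using this
  rw [e3, Set.ncard_union_eq hdis (Set.toFinite _) (Set.toFinite _), Set.ncard_image_of_injOn hinj,
    e1, e2, Set.ncard_union_add_ncard_inter _ _ (Set.toFinite _) (Set.toFinite _)]

lemma patSet_empty_ncard {ι E : Type} [DecidableEq ι] (f : ι → E → ℝ) (P : Set E) :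
    (P.Nonempty → (patSet f P ∅).ncard = 1) ∧ (¬ P.Nonempty → (patSet f P ∅).ncard = 0) := by
  constructor
  · rintro ⟨x, hx⟩
    have : patSet f P ∅ = {∅} := by
      ext σ
      simp only [patSet, Set.mem_ofPred_eq, Set.mem_singleton_iff, Finset.notMem_empty,
        false_and, iff_false, Finset.eq_empty_iff_forall_notMem]
      exact ⟨fun ⟨_, _, _, h⟩ => h, fun h => ⟨x, hx, fun _ h => h.elim, h⟩⟩
    rw [this, Set.ncard_singleton]
  · intro h
    have : patSet f P ∅ = ∅ := by
      rw [Set.eq_empty_iff_forall_notMem]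
      rintro σ ⟨x, hx, -⟩
      exact h ⟨x, hx⟩
    rw [this, Set.ncard_empty]

lemma flat_insert {ι E : Type} [DecidableEq ι] (f : ι → E → ℝ) (S : Finset ι) (i : ι) :
    flat f (insert i S) = flat f S ∩ {x | f i x = 0} := by
  ext x
  simp [flat, and_comm]

lemma flat_line {ι E : Type} [AddCommGroup E] [Module ℝ E]
    (f : ι → E → ℝ)
    (hf : ∀ i x y (t : ℝ), f i (x + t • (y - x)) = f i x + t * (f i y - f i x))
    (S : Finset ι) : ∀ x ∈ flat f S, ∀ y ∈ flat f S, ∀ t : ℝ, x + t • (y - x) ∈ flat f S := by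
  intro x hx y hy t i hi
  rw [hf, hx i hi, hy i hi]
  simp

lemma patSet_card_eq {ι E : Type} [Fintype ι] [DecidableEq ι] [AddCommGroup E] [Module ℝ E]
    (f f' : ι → E → ℝ)
    (hf : ∀ i x y (t : ℝ), f i (x + t • (y - x)) = f i x + t * (f i y - f i x))
    (hf' : ∀ i x y (t : ℝ), f' i (x + t • (y - x)) = f' i x + t * (f' i y - f' i x))
    (hS : ∀ S, (flat f S).Nonempty ↔ (flat f' S).Nonempty)
    (hp : ∀ S, ∀ i ∉ S, (flat f S).Nonempty → ∃ p ∈ flat f S, f i p ≠ 0)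
    (hp' : ∀ S, ∀ i ∉ S, (flat f' S).Nonempty → ∃ p ∈ flat f' S, f' i p ≠ 0)
    (T : Finset ι) : ∀ S, Disjoint S T →
      (patSet f (flat f S) T).ncard = (patSet f' (flat f' S) T).ncard := by
  induction T using Finset.induction_on with
  | empty =>
    intro S _
    by_cases h : (flat f S).Nonempty
    · rw [(patSet_empty_ncard f _).1 h, (patSet_empty_ncard f' _).1 ((hS S).1 h)]
    · rw [(patSet_empty_ncard f _).2 h, (patSet_empty_ncard f' _).2 (fun h' => h ((hS S).2 h'))]
  | insert i T hi ih =>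
    intro S hd
    rw [Finset.disjoint_insert_right] at hd
    rw [patSet_insert f hf _ (flat_line f hf S) T i hi (hp S i hd.1),
      patSet_insert f' hf' _ (flat_line f' hf' S) T i hi (hp' S i hd.1), ← flat_insert,
      ← flat_insert, ih S hd.2, ih (insert i S)]
    rw [Finset.disjoint_insert_left]
    exact ⟨hi, hd.2⟩

lemma ncard_image_congr {α β γ : Type} (s : Set α) (c : α → β) (p : α → γ)
    (h : ∀ x ∈ s, ∀ y ∈ s, c x = c y ↔ p x = p y) : (c '' s).ncard = (p '' s).ncard := by
  classical
  refine Set.ncard_congr (fun b hb => p (Classical.choose hb)) ?_ ?_ ?_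
  · intro b hb
    exact ⟨_, (Classical.choose_spec hb).1, rfl⟩
  · intro a b ha hb hab
    have h1 := Classical.choose_spec ha
    have h2 := Classical.choose_spec hb
    rw [← h1.2, ← h2.2]
    exact (h _ h1.1 _ h2.1).2 hab
  · rintro _ ⟨x, hx, rfl⟩
    have hb : c x ∈ c '' s := ⟨x, hx, rfl⟩
    have h1 := Classical.choose_spec hb
    exact ⟨c x, hb, (h _ h1.1 _ hx).1 h1.2⟩

lemma numRegions_eq_patSet {d : ℕ} {ι : Type} [Fintype ι] [DecidableEq ι]
    (f : ι → EuclideanSpace ℝ (Fin d) → ℝ)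
    (hf : ∀ i x y (t : ℝ), f i (x + t • (y - x)) = f i x + t * (f i y - f i x))
    (hc : ∀ i, Continuous (f i)) :
    numRegions (⋃ i, {x | f i x = 0}) = (patSet f (flat f ∅) Finset.univ).ncard := by
  set A : Set (EuclideanSpace ℝ (Fin d)) := ⋃ i, {x | f i x = 0} with hA
  have hmem : ∀ x, x ∈ Aᶜ ↔ ∀ i, f i x ≠ 0 := by intro x; simp [hA]
  have e1 : regionsOf A = (fun x => connectedComponentIn Aᶜ x) '' Aᶜ := by
    ext C
    exact ⟨fun ⟨x, hx, h⟩ => ⟨x, hx, h.symm⟩, fun ⟨x, hx, h⟩ => ⟨x, hx, h.symm⟩⟩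
  have e2 : patSet f (flat f ∅) Finset.univ =
      (fun x => Finset.univ.filter fun i => 0 < f i x) '' Aᶜ := by
    ext σ
    constructor
    · rintro ⟨x, -, h1, h2⟩
      refine ⟨x, (hmem x).2 fun i => h1 i (Finset.mem_univ _), ?_⟩
      ext i
      simp [h2]
    · rintro ⟨x, hx, rfl⟩
      exact ⟨x, by simp [flat], fun i _ => (hmem x).1 hx i, by simp⟩
  rw [numRegions, e1, e2]
  apply ncard_image_congr
  intro x hx y hy
  constructor
  · intro h
    have hpre := isPreconnected_connectedComponentIn (F := Aᶜ) (x := x)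
    have hsub := connectedComponentIn_subset Aᶜ x
    have hxm : x ∈ connectedComponentIn Aᶜ x := mem_connectedComponentIn hx
    have hym : y ∈ connectedComponentIn Aᶜ x := by rw [h]; exact mem_connectedComponentIn hy
    have key : ∀ i, ∀ u ∈ connectedComponentIn Aᶜ x, ∀ v ∈ connectedComponentIn Aᶜ x,
        0 < f i u → 0 < f i v := by
      intro i u hu v hv hpos
      by_contra hneg
      obtain ⟨z, hz, hz0⟩ := hpre.intermediate_value hv hu (hc i).continuousOn
        (show (0:ℝ) ∈ Set.Icc (f i v) (f i u) from ⟨not_lt.1 hneg, hpos.le⟩)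
      exact (hmem z).1 (hsub hz) i hz0
    ext i
    simp only [Finset.mem_filter, Finset.mem_univ, true_and]
    exact ⟨key i x hxm y hym, key i y hym x hxm⟩
  · intro h
    have hs : ∀ i, 0 < f i x ↔ 0 < f i y := by
      intro i
      have := Finset.ext_iff.1 h i
      simpa using this
    have hseg : segment ℝ x y ⊆ Aᶜ := by
      rw [segment_eq_image']
      rintro _ ⟨t, ⟨ht0, ht1⟩, rfl⟩
      rw [hmem]
      intro i
      simp only
      rw [hf]
      have hxi := (hmem x).1 hx i
      have hyi := (hmem y).1 hy i
      rcases lt_or_gt_of_ne hxi with h | h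
      · have hy' : f i y < 0 := lt_of_le_of_ne
            (not_lt.1 fun h' => absurd ((hs i).2 h') (not_lt.2 h.le)) hyi
        rcases ht0.eq_or_lt with rfl | ht0
        · simpa using hxi
        · have : f i x + t * (f i y - f i x) < 0 := by nlinarith
          exact this.ne
      · have hy' : 0 < f i y := (hs i).1 h
        rcases ht0.eq_or_lt with rfl | ht0
        · simpa using hxi
        · have : 0 < f i x + t * (f i y - f i x) := by nlinarith
          exact this.ne'
    have hpre : IsPreconnected (segment ℝ x y) := (convex_segment x y).isPreconnected
    exact connectedComponentIn_eq
      (hpre.subset_connectedComponentIn (left_mem_segment ℝ x y) hseg (right_mem_segment ℝ x y))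

lemma exists_functionals {d n : ℕ} {ι : Type} [DecidableEq ι] (g : ι → Fin n)
    (H : ι → Set (EuclideanSpace ℝ (Fin d)))
    (h2 : ∀ l : Fin n, ∃ w : EuclideanSpace ℝ (Fin d), w ≠ 0 ∧
      ∀ i, g i = l → ∃ c : ℝ, H i = {x | (∑ t, w t * x t) = c})
    (h3 : ∀ i i' : ι, i ≠ i' → g i = g i' → H i ≠ H i')
    (h4 : ∀ S : Finset ι, Set.InjOn g S →
      (S.card ≤ d → IsAffineOfDim d (d - S.card) (⋂ i ∈ S, H i)) ∧
      (d < S.card → (⋂ i ∈ S, H i) = ∅)) :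
    ∃ f : ι → EuclideanSpace ℝ (Fin d) → ℝ,
      (∀ i x y (t : ℝ), f i (x + t • (y - x)) = f i x + t * (f i y - f i x)) ∧
      (∀ i, Continuous (f i)) ∧ (∀ i, H i = {x | f i x = 0}) ∧
      (∀ S, (flat f S).Nonempty ↔ (Set.InjOn g S ∧ S.card ≤ d)) ∧
      (∀ S, ∀ i ∉ S, (flat f S).Nonempty → ∃ p ∈ flat f S, f i p ≠ 0) := by
  choose w hw hH using h2
  choose c hc using fun i => hH (g i) i rfl
  set f : ι → EuclideanSpace ℝ (Fin d) → ℝ := fun i x => (∑ t, w (g i) t * x t) - c i with hfdef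
  have hHf : ∀ i, H i = {x | f i x = 0} := by
    intro i
    rw [hc i]
    ext x
    simp [hfdef, sub_eq_zero]
  have hflat : ∀ S : Finset ι, flat f S = ⋂ i ∈ S, H i := by
    intro S
    ext x
    simp [flat, hHf]
  have hne : ∀ S, (flat f S).Nonempty ↔ (Set.InjOn g S ∧ S.card ≤ d) := by
    intro S
    constructor
    · rintro ⟨x, hx⟩
      have hinj : Set.InjOn g S := by
        intro i hi j hj hij
        by_contra hne
        apply h3 i j hne hij
        have a := hx i hi
        have b := hx j hj
        simp only [hfdef] at a b
        rw [hij] at a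
        have : c i = c j := by linarith
        rw [hc i, hc j, this, hij]
      refine ⟨hinj, ?_⟩
      by_contra hcard
      have := (h4 S hinj).2 (not_le.1 hcard)
      rw [← hflat] at this
      rw [this] at hx
      exact hx
    · rintro ⟨h, h'⟩
      obtain ⟨A, hA, hn, -⟩ := (h4 S h).1 h'
      rw [hflat]
      exact hn
  refine ⟨f, ?_, ?_, hHf, hne, ?_⟩
  · intro i x y t
    simp only [hfdef, PiLp.add_apply, PiLp.smul_apply, PiLp.sub_apply, smul_eq_mul]
    have : ∑ s, w (g i) s * (x s + t * (y s - x s)) =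
        ∑ s, w (g i) s * x s + t * (∑ s, w (g i) s * y s - ∑ s, w (g i) s * x s) := by
      rw [← Finset.sum_sub_distrib, Finset.mul_sum, ← Finset.sum_add_distrib]
      exact Finset.sum_congr rfl fun s _ => by ring
    rw [this]
    ring
  · intro i
    simp only [hfdef]
    fun_prop
  · intro S i hi hS
    by_contra hcon
    push Not at hcon
    have heq : flat f (insert i S) = flat f S := by
      rw [flat_insert]
      exact Set.inter_eq_left.2 hcon
    have hS' : (flat f (insert i S)).Nonempty := by rw [heq]; exact hS
    obtain ⟨i1, c1⟩ := (hne _).1 hS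
    obtain ⟨i2, c2⟩ := (hne _).1 hS'
    obtain ⟨A, hA, -, dA⟩ := (h4 _ i1).1 c1
    obtain ⟨B, hB, -, dB⟩ := (h4 _ i2).1 c2
    rw [← hflat] at hA hB
    have hAB : A = B := SetLike.coe_injective (by rw [hA, hB, heq])
    rw [hAB, dB] at dA
    rw [Finset.card_insert_of_notMem hi] at dA c2
    omega

/-- Any two arrangements in `Λ_d((k_1,…,k_n))` have the same number of
regions. -/
theorem numRegions_eq_of_isGPPH {d n : ℕ} (hd : 1 ≤ d) (hn : 1 ≤ n)
    (k : Fin n → ℕ) (hk : ∀ l, 1 ≤ k l)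
    {ι₁ ι₂ : Type} [Fintype ι₁] [Fintype ι₂]
    (g₁ : ι₁ → Fin n) (H₁ : ι₁ → Set (EuclideanSpace ℝ (Fin d)))
    (g₂ : ι₂ → Fin n) (H₂ : ι₂ → Set (EuclideanSpace ℝ (Fin d)))
    (hGP₁ : IsGPPH d n g₁ k H₁) (hGP₂ : IsGPPH d n g₂ k H₂) :
    numRegions (⋃ i, H₁ i) = numRegions (⋃ i, H₂ i) := by
  classical
  obtain ⟨a1, a2, a3, a4⟩ := hGP₁
  obtain ⟨b1, b2, b3, b4⟩ := hGP₂
  have hfib : ∀ l, Nonempty ({i // g₁ i = l} ≃ {i // g₂ i = l}) := by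
    intro l
    rw [← Fintype.card_eq, Fintype.card_subtype, Fintype.card_subtype, a1, b1]
  let e : ι₁ ≃ ι₂ := (Equiv.sigmaFiberEquiv g₁).symm.trans
    ((Equiv.sigmaCongrRight fun l => (hfib l).some).trans (Equiv.sigmaFiberEquiv g₂))
  have he : ∀ i, g₂ (e i) = g₁ i := fun i => ((hfib (g₁ i)).some ⟨i, rfl⟩).2
  obtain ⟨f, f1, f2, f3, f4, f5⟩ := exists_functionals g₁ H₁ a2 a3 a4
  obtain ⟨f', f1', f2', f3', f4', f5'⟩ := exists_functionals g₁ (fun i => H₂ (e i))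
    (fun l => by
      obtain ⟨w, hw, h⟩ := b2 l
      exact ⟨w, hw, fun i hi => h (e i) (by rw [he, hi])⟩)
    (fun i i' hne hg => b3 _ _ (fun h => hne (e.injective h)) (by rw [he, he, hg]))
    (fun S hS => by
      have hS' : Set.InjOn g₂ (S.map e.toEmbedding) := by
        intro x hx y hy hxy
        simp only [Finset.coe_map, Set.mem_image, Equiv.coe_toEmbedding] at hx hy
        obtain ⟨x, hx, rfl⟩ := hx
        obtain ⟨y, hy, rfl⟩ := hy
        rw [he, he] at hxy
        rw [hS hx hy hxy]
      have := b4 _ hS'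
      have hI : (⋂ i ∈ S.map e.toEmbedding, H₂ i) = ⋂ i ∈ S, H₂ (e i) := by
        ext x
        simp only [Finset.mem_map_equiv, Set.mem_iInter]
        exact ⟨fun h i hi => h (e i) (by simpa using hi), fun h i hi => by simpa using h _ hi⟩
      rwa [hI, Finset.card_map] at this)
  have u1 : (⋃ i, H₁ i) = ⋃ i, {x | f i x = 0} := Set.iUnion_congr f3
  have u2 : (⋃ i, H₂ i) = ⋃ i, {x | f' i x = 0} := by
    rw [← Set.iUnion_congr f3']
    exact (e.surjective.iUnion_comp H₂).symm
  rw [u1, u2, numRegions_eq_patSet f f1 f2, numRegions_eq_patSet f' f1' f2']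
  exact patSet_card_eq f f' f1 f1' (fun S => (f4 S).trans (f4' S).symm) f5 f5' _ _
    (Finset.disjoint_empty_left _)

end
end

section
/- Let ℋ ∈ Λ_d((k_1,…,k_n)) and let H_1, H_2 be two parallel hyperplanes in ℝ^d, both parallel to the n-th parallel group of ℋ, such that ℋ ∪ {H_1, H_2} ∈ Λ_d((k_1,…,k_n + 2)). Then the arrangements ℋ ∪ {H_1} and ℋ ∪ {H_2} have the same number of regions. -/
noncomputable section

section Core
open Classical

variable {E ι : Type*} [AddCommGroup E] [Module ℝ E]

def patt (f : ι → E →ₗ[ℝ] ℝ) (c : ι → ℝ) (I : Finset ι) (x : E) : Finset ι :=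
  I.filter (fun i => c i < f i x)

def dom (f : ι → E →ₗ[ℝ] ℝ) (c : ι → ℝ) (I T : Finset ι) : Set E :=
  {x | (∀ i ∈ T, f i x = c i) ∧ ∀ i ∈ I, f i x ≠ c i}

def cnt (f : ι → E →ₗ[ℝ] ℝ) (c : ι → ℝ) (I T : Finset ι) : ℕ :=
  (I.powerset.filter (fun S => ∃ x, ∀ i ∈ S ∪ T, f i x = c i)).card

lemma patt_finite (f : ι → E →ₗ[ℝ] ℝ) (c : ι → ℝ) (I : Finset ι) (s : Set E) :
    (patt f c I '' s).Finite := by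
  apply (I.powerset.finite_toSet).subset
  rintro _ ⟨x, -, rfl⟩
  exact Finset.mem_coe.2 (Finset.mem_powerset.2 (Finset.filter_subset _ _))

lemma patt_eq_iff (f : ι → E →ₗ[ℝ] ℝ) (c : ι → ℝ) (I : Finset ι) (x y : E) :
    patt f c I x = patt f c I y ↔ ∀ i ∈ I, (c i < f i x ↔ c i < f i y) := by
  simp only [patt, Finset.ext_iff, Finset.mem_filter]
  constructor
  · intro h i hi
    have := h i
    tauto
  · intro h i
    have := h i
    tauto

lemma patt_insert (f : ι → E →ₗ[ℝ] ℝ) (c : ι → ℝ) (I : Finset ι) (j : ι) (x : E) :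
    patt f c (insert j I) x = if c j < f j x then insert j (patt f c I x) else patt f c I x := by
  simp only [patt, Finset.filter_insert]

lemma cnt_insert (f : ι → E →ₗ[ℝ] ℝ) (c : ι → ℝ) (I T : Finset ι) (j : ι) (hj : j ∉ I) :
    cnt f c (insert j I) T = cnt f c I T + cnt f c I (insert j T) := by
  unfold cnt
  rw [Finset.powerset_insert, Finset.filter_union, Finset.card_union_of_disjoint]
  · congr 1
    rw [Finset.filter_image, Finset.card_image_of_injOn]
    · congr 1
      ext S
      simp only [Finset.mem_filter, Finset.mem_union, Finset.mem_insert]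
      refine and_congr_right fun _ => exists_congr fun x => forall_congr' fun i => ?_
      tauto
    · intro S hS S' hS' h
      simp only [Finset.coe_filter, Finset.mem_powerset, Set.mem_ofPred_eq] at hS hS'
      have h1 : j ∉ S := fun h => hj (hS.1 h)
      have h2 : j ∉ S' := fun h => hj (hS'.1 h)
      rw [← Finset.erase_insert h1, ← Finset.erase_insert h2]
      exact congrArg (fun s => Finset.erase s j) h
  · rw [Finset.disjoint_left]
    intro S hS hS'
    simp only [Finset.mem_filter, Finset.mem_powerset, Finset.mem_image] at hS hS'
    obtain ⟨⟨a, ha, rfl⟩, -⟩ := hS'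
    exact hj (hS.1 (Finset.mem_insert_self _ _))

lemma exists_perturb (f : ι → E →ₗ[ℝ] ℝ) (c : ι → ℝ) (I : Finset ι) (x v : E)
    (hx : ∀ i ∈ I, f i x ≠ c i) :
    ∃ ε : ℝ, 0 < ε ∧ ∀ t : ℝ, |t| < ε → ∀ i ∈ I,
      f i (x + t • v) ≠ c i ∧ (c i < f i (x + t • v) ↔ c i < f i x) := by
  have h : ∀ᶠ t : ℝ in nhds 0, ∀ i ∈ I,
      f i (x + t • v) ≠ c i ∧ (c i < f i (x + t • v) ↔ c i < f i x) := by
    rw [Filter.eventually_all_finset]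
    intro i hi
    have hc : Filter.Tendsto (fun t : ℝ => f i (x + t • v)) (nhds 0) (nhds (f i x)) := by
      have : Continuous (fun t : ℝ => f i x + t * f i v) := by fun_prop
      have := this.tendsto 0
      simpa using this
    rcases lt_or_gt_of_ne (hx i hi) with h | h
    · filter_upwards [hc.eventually_lt_const h] with t ht
      exact ⟨ht.ne, by constructor <;> intro h' <;> linarith⟩
    · filter_upwards [hc.eventually_const_lt h] with t ht
      exact ⟨ht.ne', by constructor <;> intro h' <;> assumption⟩
  obtain ⟨ε, hε, h⟩ := Metric.eventually_nhds_iff.1 h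
  exact ⟨ε, hε, fun t ht => h (by simpa [Real.dist_eq] using ht)⟩

lemma convex_pt (f : ι → E →ₗ[ℝ] ℝ) (c : ι → ℝ) (I T : Finset ι) (j : ι) (x y : E)
    (hx : x ∈ dom f c I T) (hy : y ∈ dom f c I T) (hxy : patt f c I x = patt f c I y)
    (hxj : c j < f j x) (hyj : f j y < c j) :
    ∃ z ∈ dom f c I T, f j z = c j ∧ patt f c I z = patt f c I x := by
  rw [patt_eq_iff] at hxy
  set a := f j x - c j with ha
  set b := c j - f j y with hb
  have ha0 : 0 < a := by linarith
  have hb0 : 0 < b := by linarith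
  have hab : a + b ≠ 0 := by positivity
  obtain ⟨p, q, hp, hq, hpq, hj⟩ : ∃ p q : ℝ, 0 < p ∧ 0 < q ∧ p + q = 1 ∧ p * a = q * b :=
    ⟨b / (a + b), a / (a + b), by positivity, by positivity, by field_simp; ring,
      by field_simp⟩
  have key : ∀ i, f i (p • x + q • y) - c i = p * (f i x - c i) + q * (f i y - c i) := by
    intro i
    simp only [map_add, map_smul, smul_eq_mul]
    linear_combination (c i) * hpq
  have keyI : ∀ i ∈ I, f i (p • x + q • y) ≠ c i ∧ (c i < f i (p • x + q • y) ↔ c i < f i x) := by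
    intro i hi
    have k := key i
    rcases lt_or_gt_of_ne (hx.2 i hi) with h | h
    · have h2 : f i y < c i := by
        refine lt_of_le_of_ne (not_lt.1 fun h' => ?_) (hy.2 i hi)
        have := (hxy i hi).2 h'
        linarith
      have : f i (p • x + q • y) - c i < 0 := by
        rw [k]; nlinarith
      exact ⟨by intro h'; linarith, by constructor <;> intro h' <;> linarith⟩
    · have h2 : c i < f i y := (hxy i hi).1 h
      have : 0 < f i (p • x + q • y) - c i := by
        rw [k]; nlinarith
      exact ⟨by intro h'; linarith, by constructor <;> intro h' <;> linarith⟩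
  refine ⟨p • x + q • y, ⟨?_, fun i hi => (keyI i hi).1⟩, ?_, ?_⟩
  · intro i hi
    have := key i
    rw [hx.1 i hi, hy.1 i hi] at this
    linarith
  · have := key j
    rw [ha, hb] at hj
    linarith
  · rw [patt_eq_iff]
    exact fun i hi => (keyI i hi).2

theorem count_eq (f : ι → E →ₗ[ℝ] ℝ) (c : ι → ℝ)
    (hgen : ∀ S : Finset ι, ∀ j ∉ S, (∃ x, ∀ i ∈ S, f i x = c i) →
      ∃ x, (∀ i ∈ S, f i x = c i) ∧ f j x ≠ c j) (I : Finset ι) :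
    ∀ T : Finset ι, Disjoint I T → (patt f c I '' dom f c I T).ncard = cnt f c I T := by
  induction I using Finset.induction_on with
  | empty =>
    intro T _
    by_cases h : ∃ x, ∀ i ∈ T, f i x = c i
    · have h1 : patt f c ∅ '' dom f c ∅ T = {∅} := by
        obtain ⟨x, hx⟩ := h
        ext S
        simp only [patt, dom, Set.mem_image, Set.mem_ofPred_eq, Finset.filter_empty,
          Set.mem_singleton_iff]
        constructor
        · rintro ⟨_, _, rfl⟩; rfl
        · rintro rfl; exact ⟨x, ⟨hx, by simp⟩, rfl⟩
      rw [h1]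
      simp [cnt, Finset.filter_singleton, h]
    · have h1 : dom f c ∅ T = ∅ := by
        ext x
        simp only [dom, Set.mem_ofPred_eq, Set.mem_empty_iff_false, iff_false]
        exact fun hx => h ⟨x, hx.1⟩
      rw [h1]
      simp [cnt, Finset.filter_singleton, h]
  | insert j I hj ih =>
    intro T hT
    rw [Finset.disjoint_insert_left] at hT
    rw [cnt_insert f c I T j hj, ← ih T hT.2,
      ← ih (insert j T) (by rw [Finset.disjoint_insert_right]; exact ⟨hj, hT.2⟩)]
    set P := patt f c I '' {x | x ∈ dom f c I T ∧ c j < f j x} with hP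
    set N := patt f c I '' {x | x ∈ dom f c I T ∧ f j x < c j} with hN
    have hPf : P.Finite := patt_finite _ _ _ _
    have hNf : N.Finite := patt_finite _ _ _ _
    have hz : ∀ x ∈ dom f c I T, f j x = c j → patt f c I x ∈ P ∧ patt f c I x ∈ N := by
      intro x hx hxj
      obtain ⟨y, hy, hyj⟩ := hgen T j hT.1 ⟨x, hx.1⟩
      obtain ⟨ε, hε, h⟩ := exists_perturb f c I x (y - x) hx.2
      have hm : ∀ t : ℝ, |t| < ε → x + t • (y - x) ∈ dom f c I T ∧
          patt f c I (x + t • (y - x)) = patt f c I x ∧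
          f j (x + t • (y - x)) = c j + t * (f j y - c j) := by
        intro t ht
        refine ⟨⟨fun i hi => ?_, fun i hi => (h t ht i hi).1⟩, ?_, ?_⟩
        · simp [hx.1 i hi, hy i hi]
        · rw [patt_eq_iff]; exact fun i hi => (h t ht i hi).2
        · simp [hxj]
      have e1 : |ε / 2| < ε := by rw [abs_of_pos (by positivity)]; linarith
      have e2 : |-(ε / 2)| < ε := by rw [abs_neg]; exact e1
      obtain ⟨a1, a2, a3⟩ := hm _ e1
      obtain ⟨b1, b2, b3⟩ := hm _ e2
      rcases lt_or_gt_of_ne hyj with h' | h'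
      · exact ⟨⟨_, ⟨b1, by rw [b3]; nlinarith⟩, b2⟩, ⟨_, ⟨a1, by rw [a3]; nlinarith⟩, a2⟩⟩
      · exact ⟨⟨_, ⟨a1, by rw [a3]; nlinarith⟩, a2⟩, ⟨_, ⟨b1, by rw [b3]; nlinarith⟩, b2⟩⟩
    have h1 : patt f c I '' dom f c I T = P ∪ N := by
      ext S
      constructor
      · rintro ⟨x, hx, rfl⟩
        rcases lt_trichotomy (f j x) (c j) with h | h | h
        · exact Or.inr ⟨x, ⟨hx, h⟩, rfl⟩
        · exact Or.inl (hz x hx h).1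
        · exact Or.inl ⟨x, ⟨hx, h⟩, rfl⟩
      · rintro (⟨x, hx, rfl⟩ | ⟨x, hx, rfl⟩) <;> exact ⟨x, hx.1, rfl⟩
    have h2 : patt f c I '' dom f c I (insert j T) = P ∩ N := by
      ext S
      constructor
      · rintro ⟨x, hx, rfl⟩
        exact hz x ⟨fun i hi => hx.1 i (Finset.mem_insert_of_mem hi), hx.2⟩
          (hx.1 j (Finset.mem_insert_self _ _))
      · rintro ⟨⟨x, hx, rfl⟩, ⟨y, hy, hyx⟩⟩
        obtain ⟨z, hz1, hz2, hz3⟩ := convex_pt f c I T j x y hx.1 hy.1 hyx.symm hx.2 hy.2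
        refine ⟨z, ⟨?_, hz1.2⟩, hz3⟩
        intro i hi
        rcases Finset.mem_insert.1 hi with rfl | hi
        · exact hz2
        · exact hz1.1 i hi
    have hnot : ∀ x, j ∉ patt f c I x := fun x h => hj (Finset.mem_filter.1 h).1
    have h3 : patt f c (insert j I) '' dom f c (insert j I) T = (insert j '' P) ∪ N := by
      ext S
      constructor
      · rintro ⟨x, hx, rfl⟩
        have hx' : x ∈ dom f c I T := ⟨hx.1, fun i hi => hx.2 i (Finset.mem_insert_of_mem hi)⟩
        rw [patt_insert]
        rcases lt_or_gt_of_ne (hx.2 j (Finset.mem_insert_self _ _)) with h | h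
        · rw [if_neg (not_lt.2 h.le)]
          exact Or.inr ⟨x, ⟨hx', h⟩, rfl⟩
        · rw [if_pos h]
          exact Or.inl ⟨_, ⟨x, ⟨hx', h⟩, rfl⟩, rfl⟩
      · rintro (⟨_, ⟨x, ⟨hx, h⟩, rfl⟩, rfl⟩ | ⟨x, ⟨hx, h⟩, rfl⟩)
        · refine ⟨x, ⟨hx.1, ?_⟩, by rw [patt_insert, if_pos h]⟩
          intro i hi
          rcases Finset.mem_insert.1 hi with rfl | hi
          · exact h.ne'
          · exact hx.2 i hi
        · refine ⟨x, ⟨hx.1, ?_⟩, by rw [patt_insert, if_neg (not_lt.2 h.le)]⟩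
          intro i hi
          rcases Finset.mem_insert.1 hi with rfl | hi
          · exact h.ne
          · exact hx.2 i hi
    have h4 : (insert j '' P).ncard = P.ncard := by
      apply Set.InjOn.ncard_image
      rintro _ ⟨x, -, rfl⟩ _ ⟨y, -, rfl⟩ h
      rw [← Finset.erase_insert (hnot x), ← Finset.erase_insert (hnot y)]
      exact congrArg (fun s => Finset.erase s j) h
    have h5 : Disjoint (insert j '' P) N := by
      rw [Set.disjoint_left]
      rintro _ ⟨S, -, rfl⟩ ⟨y, -, h⟩
      exact hnot y (h ▸ Finset.mem_insert_self _ _)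
    rw [h1, h2, h3, Set.ncard_union_eq h5 (hPf.image _) hNf, h4,
      Set.ncard_union_add_ncard_inter _ _ hPf hNf]

lemma ncard_image_eq {α β γ : Type*} (U : Set α) (a : α → β) (b : α → γ)
    (h : ∀ x ∈ U, ∀ y ∈ U, a x = a y ↔ b x = b y) : (a '' U).ncard = (b '' U).ncard := by
  rcases U.eq_empty_or_nonempty with rfl | ⟨x0, -⟩
  · simp
  haveI : Nonempty α := ⟨x0⟩
  choose! p hp using fun (s : β) (hs : s ∈ a '' U) => hs
  refine Set.ncard_congr (fun s _ => b (p s)) ?_ ?_ ?_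
  · intro s hs
    exact ⟨p s, (hp s hs).1, rfl⟩
  · intro s t hs ht hst
    rw [← (hp s hs).2, ← (hp t ht).2]
    exact (h _ (hp s hs).1 _ (hp t ht).1).2 hst
  · rintro _ ⟨x, hx, rfl⟩
    have hs : a x ∈ a '' U := ⟨x, hx, rfl⟩
    exact ⟨a x, hs, (h _ (hp _ hs).1 _ hx).1 (hp _ hs).2⟩

end Core

section Geo
open Classical

theorem numRegions_eq {d : ℕ} {κ : Type} [Fintype κ]
    (f : κ → EuclideanSpace ℝ (Fin d) →ₗ[ℝ] ℝ) (c : κ → ℝ) :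
    numRegions (⋃ i, {x | f i x = c i}) =
      (patt f c Finset.univ '' dom f c Finset.univ ∅).ncard := by
  set U := (⋃ i, {x | f i x = c i})ᶜ with hU
  have hUm : ∀ x, x ∈ U ↔ ∀ i, f i x ≠ c i := by
    intro x; simp [hU]
  have h1 : dom f c Finset.univ ∅ = U := by
    ext x; rw [hUm]; simp [dom]
  have h2 : regionsOf (⋃ i, {x | f i x = c i}) = (fun x => connectedComponentIn U x) '' U := by
    ext C
    simp only [regionsOf, Set.mem_ofPred_eq, Set.mem_image, ← hU]
    exact exists_congr fun x => and_congr_right fun _ => eq_comm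
  have hcont : ∀ i, Continuous (f i) := fun i => (f i).continuous_of_finiteDimensional
  rw [numRegions, h1, h2]
  apply ncard_image_eq
  intro x hx y hy
  rw [patt_eq_iff]
  constructor
  · intro h i _
    have hpre : IsPreconnected (connectedComponentIn U x) := isPreconnected_connectedComponentIn
    have hxm : x ∈ connectedComponentIn U x := mem_connectedComponentIn hx
    have hym : y ∈ connectedComponentIn U x := by
      have h : connectedComponentIn U x = connectedComponentIn U y := h
      rw [h]; exact mem_connectedComponentIn hy
    have himg := hpre.image (f i) (hcont i).continuousOn
    have hno : c i ∉ f i '' connectedComponentIn U x := by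
      rintro ⟨z, hz, hzc⟩
      exact (hUm z).1 (connectedComponentIn_subset _ _ hz) i hzc
    have hoc := himg.ordConnected
    constructor
    · intro h'
      by_contra hc
      exact hno (hoc.out ⟨y, hym, rfl⟩ ⟨x, hxm, rfl⟩ ⟨not_lt.1 hc, h'.le⟩)
    · intro h'
      by_contra hc
      exact hno (hoc.out ⟨x, hxm, rfl⟩ ⟨y, hym, rfl⟩ ⟨not_lt.1 hc, h'.le⟩)
  · intro h
    have hseg : segment ℝ x y ⊆ U := by
      rintro z ⟨p, q, hp, hq, hpq, rfl⟩
      rw [hUm]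
      intro i hzi
      have key : p * (f i x - c i) + q * (f i y - c i) = 0 := by
        simp only [map_add, map_smul, smul_eq_mul] at hzi
        linear_combination hzi - c i * hpq
      have hi := h i (Finset.mem_univ i)
      rcases lt_or_gt_of_ne ((hUm x).1 hx i) with h' | h'
      · have h2 : f i y < c i := by
          refine lt_of_le_of_ne (not_lt.1 fun h'' => ?_) ((hUm y).1 hy i)
          have := hi.2 h''
          linarith
        rcases hp.eq_or_lt with h0 | h0
        · have hq1 : q = 1 := by linarith
          rw [← h0, hq1] at key
          linarith
        · have k1 := mul_pos h0 (sub_pos.2 h')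
          have k2 := mul_nonneg hq (sub_pos.2 h2).le
          linarith
      · have h2 := hi.1 h'
        rcases hp.eq_or_lt with h0 | h0
        · have hq1 : q = 1 := by linarith
          rw [← h0, hq1] at key
          linarith
        · have k1 := mul_pos h0 (sub_pos.2 h')
          have k2 := mul_nonneg hq (sub_pos.2 h2).le
          linarith
    exact connectedComponentIn_eq ((convex_segment x y).isPreconnected.subset_connectedComponentIn
      (left_mem_segment ℝ x y) hseg (right_mem_segment ℝ x y))

/-- Region count of a gp/ph family, as the number of admissible transversals. -/
theorem numRegions_gpph {d n : ℕ} {κ : Type} [Fintype κ] (g : κ → Fin n) (k : Fin n → ℕ)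
    (H : κ → Set (EuclideanSpace ℝ (Fin d))) (h : IsGPPH d n g k H) :
    numRegions (⋃ i, H i) =
      (Finset.univ.filter (fun S : Finset κ => Set.InjOn g S ∧ S.card ≤ d)).card := by
  obtain ⟨-, hw, hne, hS⟩ := h
  choose w hw0 hw using hw
  choose c hc using fun i => hw (g i) i rfl
  let f : κ → EuclideanSpace ℝ (Fin d) →ₗ[ℝ] ℝ := fun i =>
    { toFun := fun x => ∑ t, w (g i) t * x t
      map_add' := by intro x y; simp [mul_add, Finset.sum_add_distrib]
      map_smul' := by
        intro r x; simp only [PiLp.smul_apply, smul_eq_mul, RingHom.id_apply, Finset.mul_sum]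
        exact Finset.sum_congr rfl fun t _ => by ring }
  have hH : ∀ i, H i = {x | f i x = c i} := hc
  have hne_iff : ∀ S : Finset κ, (∃ x, ∀ i ∈ S, f i x = c i) ↔ Set.InjOn g S ∧ S.card ≤ d := by
    intro S
    have hm : ∀ x, (∀ i ∈ S, f i x = c i) ↔ x ∈ ⋂ i ∈ S, H i := by
      intro x; simp [hH]
    constructor
    · rintro ⟨x, hx⟩
      have hinj : Set.InjOn g S := by
        intro i hi i' hi' hg
        by_contra hii
        apply hne i i' hii hg
        have h1 := hx i hi
        have h2 := hx i' hi'
        have h3 : f i = f i' := by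
          ext y; simp [f, hg]
        rw [hH, hH, ← h1, ← h2, h3]
      refine ⟨hinj, ?_⟩
      by_contra hd
      have := (hS S hinj).2 (not_le.1 hd)
      rw [hm, this] at hx
      exact hx
    · rintro ⟨hinj, hd⟩
      obtain ⟨A, -, ⟨x, hx⟩, -⟩ := (hS S hinj).1 hd
      exact ⟨x, (hm x).2 hx⟩
  have hgen : ∀ S : Finset κ, ∀ j ∉ S, (∃ x, ∀ i ∈ S, f i x = c i) →
      ∃ x, (∀ i ∈ S, f i x = c i) ∧ f j x ≠ c j := by
    intro S j hj hx
    by_contra! hcon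
    obtain ⟨hi1, hd1⟩ := (hne_iff S).1 hx
    obtain ⟨x, hx⟩ := hx
    have : ∃ x, ∀ i ∈ insert j S, f i x = c i :=
      ⟨x, by intro i hi; rcases Finset.mem_insert.1 hi with rfl | hi; exacts [hcon x hx, hx i hi]⟩
    obtain ⟨hi2, hd2⟩ := (hne_iff _).1 this
    obtain ⟨A, hA, -, hAd⟩ := (hS S hi1).1 hd1
    obtain ⟨B, hB, -, hBd⟩ := (hS _ hi2).1 hd2
    have hAB : A = B := by
      apply SetLike.coe_injective
      rw [hA, hB]
      ext y
      simp only [hH, Set.mem_iInter, Set.mem_ofPred_eq, Finset.mem_insert, forall_eq_or_imp]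
      exact ⟨fun hy => ⟨hcon y hy, hy⟩, fun hy => hy.2⟩
    subst hAB
    rw [Finset.card_insert_of_notMem hj] at hBd hd2
    omega
  have e : (⋃ i, H i) = ⋃ i, {x | f i x = c i} := Set.iUnion_congr hH
  rw [e, numRegions_eq, count_eq f c hgen _ _ (Finset.disjoint_empty_right _), cnt]
  congr 1
  ext S
  simp [← hne_iff]

/-- Subfamilies of gp/ph families are gp/ph (with the induced group sizes). -/
theorem IsGPPH.comp {d n : ℕ} {κ κ' : Type} [Fintype κ] [Fintype κ'] {g : κ → Fin n}
    {k : Fin n → ℕ} {H : κ → Set (EuclideanSpace ℝ (Fin d))} (h : IsGPPH d n g k H)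
    (e : κ' → κ) (he : Function.Injective e) :
    IsGPPH d n (g ∘ e) (fun l => (Finset.univ.filter fun i => (g ∘ e) i = l).card) (H ∘ e) := by
  obtain ⟨-, hw, hne, hS⟩ := h
  refine ⟨fun l => by congr, ?_, fun i i' hii hg => hne _ _ (he.ne hii) hg, ?_⟩
  · intro l
    obtain ⟨w, h0, h⟩ := hw l
    exact ⟨w, h0, fun i hi => h (e i) hi⟩
  · intro S hinj
    have h1 : Set.InjOn g (S.map ⟨e, he⟩ : Finset κ) := by
      intro a ha b hb hab
      simp only [Finset.coe_map, Function.Embedding.coeFn_mk, Set.mem_image] at ha hb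
      obtain ⟨i, hi, rfl⟩ := ha
      obtain ⟨i', hi', rfl⟩ := hb
      rw [hinj hi hi' hab]
    have := hS _ h1
    simpa using this

end Geo

/-- If `ℋ ∈ Λ_d((k_1,…,k_n))` and `G₁, G₂` are two further hyperplanes,
parallel to the `n`-th group of `ℋ`, such that `ℋ ∪ {G₁, G₂} ∈ Λ_d((k_1,…,k_n + 2))`
(encoded by `hExt`: the extended family, indexed by `ι ⊕ Fin 2` with the two new hyperplanes
joining the last group, is gp/ph with the last group size increased by `2`), then
`ℋ ∪ {G₁}` and `ℋ ∪ {G₂}` have the same number of regions. -/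
theorem numRegions_union_eq_of_parallel {d n : ℕ} (hd : 1 ≤ d) (hn : 1 ≤ n)
    (k : Fin n → ℕ) (hk : ∀ l, 1 ≤ k l)
    {ι : Type} [Fintype ι] (g : ι → Fin n) (H : ι → Set (EuclideanSpace ℝ (Fin d)))
    (G₁ G₂ : Set (EuclideanSpace ℝ (Fin d)))
    (hGP : IsGPPH d n g k H)
    (hExt : IsGPPH d n (Sum.elim g fun _ : Fin 2 => (⟨n - 1, by omega⟩ : Fin n))
      (fun l => if l = (⟨n - 1, by omega⟩ : Fin n) then k l + 2 else k l)
      (Sum.elim H ![G₁, G₂])) :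
    numRegions ((⋃ i, H i) ∪ G₁) = numRegions ((⋃ i, H i) ∪ G₂) := by
  classical
  have key : ∀ b : Fin 2, numRegions ((⋃ i, H i) ∪ (![G₁, G₂] b)) =
      (Finset.univ.filter (fun S : Finset (ι ⊕ Unit) =>
        Set.InjOn (Sum.elim g fun _ : Unit => (⟨n - 1, by omega⟩ : Fin n)) S ∧ S.card ≤ d)).card := by
    intro b
    have he : Function.Injective (Sum.map id (fun _ : Unit => b) : ι ⊕ Unit → ι ⊕ Fin 2) :=
      Function.injective_id.sumMap (fun _ _ _ => rfl)
    have h1 := numRegions_gpph _ _ _ (hExt.comp _ he)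
    have h2 : (⋃ i, (Sum.elim H ![G₁, G₂] ∘ (Sum.map id (fun _ : Unit => b))) i) =
        (⋃ i, H i) ∪ (![G₁, G₂] b) := by
      rw [Set.iUnion_sum]
      simp [Set.iUnion_const]
    have h3 : (Sum.elim g fun _ : Fin 2 => (⟨n - 1, by omega⟩ : Fin n)) ∘
        (Sum.map id (fun _ : Unit => b)) =
        (Sum.elim g fun _ : Unit => (⟨n - 1, by omega⟩ : Fin n)) := by
      ext (i | i) <;> rfl
    rw [h2, h3] at h1
    exact h1
  exact (key 0).trans (key 1).symm

end
end

section
/- Let n ≥ 1, k ≥ 1 and d > 1. If ℋ ∈ Λ_d(n,k), ℋ′ ∈ Λ_d(n−1,k) and ℋ″ ∈ Λ_{d−1}(n−1,k), then the number of regions of ℋ equals the number of regions of ℋ′ plus k times the number of regions of ℋ″; i.e. r_d(n,k) = r_d(n−1,k) + k·r_{d−1}(n−1,k), where r_d(n,k) denotes the common number of regions of arrangements in Λ_d(n,k). -/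
noncomputable section

open Classical in
/-- Realizable sign patterns (positive parts) on `s`, on the flat cut out by `U`. -/
def PS {E ι : Type} [AddCommGroup E] [Module ℝ E] (L : ι → E →ₗ[ℝ] ℝ) (c : ι → ℝ)
    (s U : Finset ι) : Set (Finset ι) :=
  {σ | ∃ x, (∀ i ∈ U, L i x = c i) ∧ (∀ i ∈ s, L i x ≠ c i) ∧ σ = s.filter (fun i => c i < L i x)}

open Classical in
/-- Solvable subsets. -/
def SS {E ι : Type} [AddCommGroup E] [Module ℝ E] (L : ι → E →ₗ[ℝ] ℝ) (c : ι → ℝ)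
    (s U : Finset ι) : Set (Finset ι) :=
  {T | T ⊆ s ∧ ∃ x, ∀ i ∈ T ∪ U, L i x = c i}

theorem exists_eps {E ι : Type} [AddCommGroup E] [Module ℝ E] (L : ι → E →ₗ[ℝ] ℝ) (c : ι → ℝ)
    (s : Finset ι) (x v : E) (hx : ∀ i ∈ s, L i x ≠ c i) :
    ∃ ε : ℝ, 0 < ε ∧ ∀ i ∈ s, |ε * L i v| < |L i x - c i| := by
  have h : ∀ᶠ t in nhdsWithin (0:ℝ) (Set.Ioi 0), ∀ i ∈ s, |t * L i v| < |L i x - c i| := by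
    rw [Finset.eventually_all]
    intro i hi
    apply Filter.Eventually.filter_mono nhdsWithin_le_nhds
    have hc : Continuous (fun t : ℝ => |t * L i v|) := by fun_prop
    have := hc.tendsto 0
    apply this.eventually_lt_const
    simp only [zero_mul, abs_zero, abs_pos]
    exact sub_ne_zero.2 (hx i hi)
  have h2 : ∀ᶠ t in nhdsWithin (0:ℝ) (Set.Ioi 0), 0 < t := self_mem_nhdsWithin
  obtain ⟨ε, h1, h2⟩ := (h.and h2).exists
  exact ⟨ε, h2, h1⟩

theorem sign_pert {a b c : ℝ} (h : |b| < |a - c|) : (a + b ≠ c) ∧ (c < a + b ↔ c < a) := by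
  rcases abs_cases b with ⟨h1, _⟩ | ⟨h1, _⟩ <;> rcases abs_cases (a - c) with ⟨h2, _⟩ | ⟨h2, _⟩ <;>
  · rw [h1, h2] at h
    refine ⟨fun h => by linarith, ⟨fun h => by linarith, fun h => by linarith⟩⟩

/-- Perturbation: from a point on hyperplane `i0`, step to a chosen side. -/
theorem perturb {E ι : Type} [AddCommGroup E] [Module ℝ E] (L : ι → E →ₗ[ℝ] ℝ) (c : ι → ℝ)
    (s U : Finset ι) (i0 : ι) (x y : E) (hxU : ∀ i ∈ U, L i x = c i) (hx0 : L i0 x = c i0)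
    (hyU : ∀ i ∈ U, L i y = c i) (hy0 : L i0 y ≠ c i0) (hx : ∀ i ∈ s, L i x ≠ c i) :
    (∃ z, (∀ i ∈ U, L i z = c i) ∧ (∀ i ∈ s, L i z ≠ c i ∧ (c i < L i z ↔ c i < L i x)) ∧
      c i0 < L i0 z) ∧
    (∃ z, (∀ i ∈ U, L i z = c i) ∧ (∀ i ∈ s, L i z ≠ c i ∧ (c i < L i z ↔ c i < L i x)) ∧
      L i0 z < c i0) := by
  have key : ∀ v : E, (∀ i ∈ U, L i v = 0) → ∃ ε : ℝ, 0 < ε ∧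
      (∀ i ∈ U, L i (x + ε • v) = c i) ∧
      (∀ i ∈ s, L i (x + ε • v) ≠ c i ∧ (c i < L i (x + ε • v) ↔ c i < L i x)) := by
    intro v hv
    obtain ⟨ε, he, h⟩ := exists_eps L c s x v hx
    refine ⟨ε, he, fun i hi => by simp [hv i hi, hxU i hi], fun i hi => ?_⟩
    have := sign_pert (h i hi)
    simpa using this
  have aux : ∀ v : E, (∀ i ∈ U, L i v = 0) → 0 < L i0 v → (∃ z, (∀ i ∈ U, L i z = c i) ∧
      (∀ i ∈ s, L i z ≠ c i ∧ (c i < L i z ↔ c i < L i x)) ∧ c i0 < L i0 z) ∧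
      (∃ z, (∀ i ∈ U, L i z = c i) ∧
      (∀ i ∈ s, L i z ≠ c i ∧ (c i < L i z ↔ c i < L i x)) ∧ L i0 z < c i0) := by
    intro v hv hpos
    constructor
    · obtain ⟨ε, he, h1, h2⟩ := key v hv
      refine ⟨_, h1, h2, ?_⟩
      have := mul_pos he hpos
      simp [hx0, this]
    · obtain ⟨ε, he, h1, h2⟩ := key (-v) (fun i hi => by simp [hv i hi])
      refine ⟨_, h1, h2, ?_⟩
      have := mul_pos he hpos
      simp [hx0, this]
  rcases lt_or_gt_of_ne hy0 with h | h
  · exact aux (x - y) (fun i hi => by simp [hxU i hi, hyU i hi]) (by simp [hx0]; linarith)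
  · exact aux (y - x) (fun i hi => by simp [hxU i hi, hyU i hi]) (by simp [hx0]; linarith)

open Classical in
theorem ncard_split {ι : Type} [Fintype ι] (i0 : ι) (s : Finset ι) (h0 : i0 ∉ s)
    (P : Set (Finset ι)) (hP : ∀ σ ∈ P, σ ⊆ insert i0 s) :
    P.ncard = {σ : Finset ι | σ ⊆ s ∧ σ ∈ P}.ncard +
      {σ : Finset ι | σ ⊆ s ∧ insert i0 σ ∈ P}.ncard := by
  have h1 : ((fun σ => insert i0 σ) '' {σ : Finset ι | σ ⊆ s ∧ insert i0 σ ∈ P}).ncard =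
      {σ : Finset ι | σ ⊆ s ∧ insert i0 σ ∈ P}.ncard := by
    apply Set.ncard_image_of_injOn
    intro a ha b hb hab
    have ha' : i0 ∉ a := fun h => h0 (ha.1 h)
    have hb' : i0 ∉ b := fun h => h0 (hb.1 h)
    have := congrArg (fun t => Finset.erase t i0) hab
    simpa [Finset.erase_insert ha', Finset.erase_insert hb'] using this
  rw [← h1, ← Set.ncard_union_eq _ (Set.toFinite _) (Set.toFinite _)]
  · congr 1
    ext σ
    simp only [Set.mem_union, Set.mem_ofPred_eq, Set.mem_image]
    constructor
    · intro h
      by_cases hi : i0 ∈ σ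
      · right
        refine ⟨σ.erase i0, ⟨?_, ?_⟩, Finset.insert_erase hi⟩
        · exact Finset.subset_insert_iff.1 (hP σ h)
        · rwa [Finset.insert_erase hi]
      · left
        refine ⟨?_, h⟩
        exact (Finset.subset_insert_iff_of_notMem hi).1 (hP σ h)
    · rintro (h | ⟨τ, h, rfl⟩)
      · exact h.2
      · exact h.2
  · rw [Set.disjoint_left]
    rintro σ h ⟨τ, _, rfl⟩
    exact h0 (h.1 (Finset.mem_insert_self _ _))

open Classical in
theorem PS_step {E ι : Type} [Fintype ι] [AddCommGroup E] [Module ℝ E] (L : ι → E →ₗ[ℝ] ℝ)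
    (c : ι → ℝ)
    (hyp : ∀ (U : Finset ι) (i0 : ι), i0 ∉ U → ∀ x, (∀ i ∈ insert i0 U, L i x = c i) →
      ∃ y, (∀ i ∈ U, L i y = c i) ∧ L i0 y ≠ c i0) (s U : Finset ι) (i0 : ι) (h0 : i0 ∉ s)
    (hU : i0 ∉ U) :
    (PS L c (insert i0 s) U).ncard = (PS L c s U).ncard + (PS L c s (insert i0 U)).ncard := by
  have hA : ∀ σ, (σ ⊆ s ∧ σ ∈ PS L c (insert i0 s) U) ↔ ∃ x, (∀ i ∈ U, L i x = c i) ∧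
      (∀ i ∈ s, L i x ≠ c i) ∧ σ = s.filter (fun i => c i < L i x) ∧ L i0 x < c i0 := by
    intro σ
    constructor
    · rintro ⟨hs, x, h1, h2, h3⟩
      have hn : ¬ c i0 < L i0 x := by
        intro h
        apply h0
        apply hs
        rw [h3]
        simp [h]
      refine ⟨x, h1, fun i hi => h2 i (Finset.mem_insert_of_mem hi), ?_, ?_⟩
      · rw [h3, Finset.filter_insert, if_neg hn]
      · exact lt_of_le_of_ne (not_lt.1 hn) (h2 i0 (Finset.mem_insert_self _ _))
    · rintro ⟨x, h1, h2, h3, h4⟩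
      refine ⟨h3 ▸ Finset.filter_subset _ _, x, h1, ?_, ?_⟩
      · intro i hi
        rcases Finset.mem_insert.1 hi with rfl | hi
        · exact h4.ne
        · exact h2 i hi
      · rw [h3, Finset.filter_insert, if_neg (not_lt.2 h4.le)]
  have hB : ∀ σ, (σ ⊆ s ∧ insert i0 σ ∈ PS L c (insert i0 s) U) ↔ ∃ x, (∀ i ∈ U, L i x = c i) ∧
      (∀ i ∈ s, L i x ≠ c i) ∧ σ = s.filter (fun i => c i < L i x) ∧ c i0 < L i0 x := by
    intro σ
    constructor
    · rintro ⟨hs, x, h1, h2, h3⟩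
      have hn : c i0 < L i0 x := by
        have : i0 ∈ insert i0 σ := Finset.mem_insert_self _ _
        rw [h3] at this
        simpa using this
      refine ⟨x, h1, fun i hi => h2 i (Finset.mem_insert_of_mem hi), ?_, hn⟩
      rw [Finset.filter_insert, if_pos hn] at h3
      have := congrArg (fun t => Finset.erase t i0) h3
      have e1 : i0 ∉ σ := fun h => h0 (hs h)
      have e2 : i0 ∉ s.filter (fun i => c i < L i x) := fun h => h0 (Finset.filter_subset _ _ h)
      simpa only [Finset.erase_insert e1, Finset.erase_insert e2] using this
    · rintro ⟨x, h1, h2, h3, h4⟩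
      refine ⟨h3 ▸ Finset.filter_subset _ _, x, h1, ?_, ?_⟩
      · intro i hi
        rcases Finset.mem_insert.1 hi with rfl | hi
        · exact h4.ne'
        · exact h2 i hi
      · rw [h3, Finset.filter_insert, if_pos h4]
  rw [ncard_split i0 s h0 (PS L c (insert i0 s) U)
    (by rintro σ ⟨x, _, _, rfl⟩; exact Finset.filter_subset _ _)]
  rw [← Set.ncard_union_add_ncard_inter _ _ (Set.toFinite _) (Set.toFinite _)]
  have hpert : ∀ x, (∀ i ∈ U, L i x = c i) → (∀ i ∈ s, L i x ≠ c i) → L i0 x = c i0 →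
      (s.filter (fun i => c i < L i x) ⊆ s ∧
        s.filter (fun i => c i < L i x) ∈ PS L c (insert i0 s) U) ∧
      (s.filter (fun i => c i < L i x) ⊆ s ∧
        insert i0 (s.filter (fun i => c i < L i x)) ∈ PS L c (insert i0 s) U) := by
    intro x h1 h2 h3
    obtain ⟨y, hy1, hy2⟩ := hyp U i0 hU x (by
      intro i hi
      rcases Finset.mem_insert.1 hi with rfl | hi
      · exact h3
      · exact h1 i hi)
    obtain ⟨⟨z, a1, a2, a3⟩, ⟨z', b1, b2, b3⟩⟩ := perturb L c s U i0 x y h1 h3 hy1 hy2 h2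
    rw [hA, hB]
    refine ⟨⟨z', b1, fun i hi => (b2 i hi).1, ?_, b3⟩, ⟨z, a1, fun i hi => (a2 i hi).1, ?_, a3⟩⟩
    · exact Finset.filter_congr fun i hi => (b2 i hi).2.symm
    · exact Finset.filter_congr fun i hi => (a2 i hi).2.symm
  congr 2
  · ext σ
    simp only [Set.mem_union, Set.mem_ofPred_eq]
    constructor
    · rw [hA, hB]
      rintro (⟨x, h1, h2, h3, _⟩ | ⟨x, h1, h2, h3, _⟩) <;> exact ⟨x, h1, h2, h3⟩
    · rintro ⟨x, h1, h2, rfl⟩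
      rcases lt_trichotomy (L i0 x) (c i0) with h | h | h
      · left; rw [hA]; exact ⟨x, h1, h2, rfl, h⟩
      · left; exact (hpert x h1 h2 h).1
      · right; rw [hB]; exact ⟨x, h1, h2, rfl, h⟩
  · ext σ
    simp only [Set.mem_inter_iff, Set.mem_ofPred_eq]
    constructor
    · rw [hA, hB]
      rintro ⟨⟨x, h1, h2, h3, h4⟩, ⟨y, k1, k2, k3, k4⟩⟩
      set a := c i0 - L i0 x with ha
      set b := L i0 y - c i0 with hb
      have ha0 : 0 < a := by linarith
      have hb0 : 0 < b := by linarith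
      have hs : ∀ i ∈ s, (c i < L i x ↔ c i < L i y) := by
        intro i hi
        have := Finset.ext_iff.1 (h3.symm.trans k3) i
        simpa [hi] using this
      have hz : ∀ i, L i ((a + b)⁻¹ • (b • x + a • y)) - c i =
          (a + b)⁻¹ * (b * (L i x - c i) + a * (L i y - c i)) := by
        intro i
        simp only [map_smul, map_add, smul_eq_mul]
        field_simp
        ring
      have hab : 0 < (a + b)⁻¹ := by positivity
      have hsg : ∀ i ∈ s, (c i < L i x ∧ c i < L i ((a + b)⁻¹ • (b • x + a • y))) ∨
          (L i x < c i ∧ L i ((a + b)⁻¹ • (b • x + a • y)) < c i) := by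
        intro i hi
        rcases lt_or_gt_of_ne (h2 i hi) with h | h
        · right
          have h' : L i y < c i := by
            refine lt_of_le_of_ne (not_lt.1 fun h' => ?_) (k2 i hi)
            exact absurd ((hs i hi).2 h') (not_lt.2 h.le)
          refine ⟨h, ?_⟩
          have e1 := mul_pos hb0 (sub_pos.2 h)
          have e2 := mul_pos ha0 (sub_pos.2 h')
          have := mul_pos hab (add_pos e1 e2)
          have := hz i
          linarith
        · left
          have h' : c i < L i y := (hs i hi).1 h
          refine ⟨h, ?_⟩
          have e1 := mul_pos hb0 (sub_pos.2 h)
          have e2 := mul_pos ha0 (sub_pos.2 h')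
          have := mul_pos hab (add_pos e1 e2)
          have := hz i
          linarith
      refine ⟨(a + b)⁻¹ • (b • x + a • y), ?_, ?_, ?_⟩
      · intro i hi
        rw [← sub_eq_zero, hz]
        rcases Finset.mem_insert.1 hi with rfl | hi
        · have : b * (L i x - c i) + a * (L i y - c i) = 0 := by rw [ha, hb]; ring
          rw [this, mul_zero]
        · simp [h1 i hi, k1 i hi]
      · intro i hi
        rcases hsg i hi with h | h
        · exact h.2.ne'
        · exact h.2.ne
      · rw [h3]
        apply Finset.filter_congr
        intro i hi
        rcases hsg i hi with h | h
        · exact ⟨fun _ => h.2, fun _ => h.1⟩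
        · exact ⟨fun h' => absurd h' (not_lt.2 h.1.le), fun h' => absurd h' (not_lt.2 h.2.le)⟩
    · rintro ⟨x, h1, h2, rfl⟩
      exact hpert x (fun i hi => h1 i (Finset.mem_insert_of_mem hi)) h2
        (h1 i0 (Finset.mem_insert_self _ _))

open Classical in
theorem PS_eq_SS {E ι : Type} [Fintype ι] [AddCommGroup E] [Module ℝ E] (L : ι → E →ₗ[ℝ] ℝ)
    (c : ι → ℝ)
    (hyp : ∀ (U : Finset ι) (i0 : ι), i0 ∉ U → ∀ x, (∀ i ∈ insert i0 U, L i x = c i) →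
      ∃ y, (∀ i ∈ U, L i y = c i) ∧ L i0 y ≠ c i0) (s : Finset ι) :
    ∀ U : Finset ι, Disjoint s U → (PS L c s U).ncard = (SS L c s U).ncard := by
  induction s using Finset.induction_on with
  | empty =>
    intro U _
    congr 1
    ext σ
    simp only [PS, SS, Set.mem_ofPred_eq, Finset.subset_empty]
    constructor
    · rintro ⟨x, h1, _, h3⟩
      have : σ = ∅ := by simpa using h3
      subst this
      exact ⟨rfl, x, by simpa using h1⟩
    · rintro ⟨rfl, x, h1⟩
      exact ⟨x, by simpa using h1, by simp, by simp⟩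
  | insert i0 s h0 ih =>
    intro U hd
    rw [Finset.disjoint_insert_left] at hd
    rw [PS_step L c hyp s U i0 h0 hd.1, ih U hd.2,
      ih (insert i0 U) (by rw [Finset.disjoint_insert_right]; exact ⟨h0, hd.2⟩)]
    rw [ncard_split i0 s h0 (SS L c (insert i0 s) U) (fun σ h => h.1)]
    congr 2
    · ext T
      simp only [SS, Set.mem_ofPred_eq]
      constructor
      · rintro ⟨h1, h2⟩
        exact ⟨h1, h1.trans (Finset.subset_insert _ _), h2⟩
      · rintro ⟨h1, _, h2⟩
        exact ⟨h1, h2⟩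
    · ext T
      simp only [SS, Set.mem_ofPred_eq]
      have e : insert i0 T ∪ U = T ∪ insert i0 U := by
        ext; simp only [Finset.mem_union, Finset.mem_insert]; tauto
      rw [e]
      constructor
      · rintro ⟨h1, h2⟩
        exact ⟨h1, Finset.insert_subset_insert _ h1, h2⟩
      · rintro ⟨h1, _, h2⟩
        exact ⟨h1, h2⟩

theorem ncard_image_eq_of_ker {α β γ : Type} (X : Set α) (f : α → β) (h : α → γ)
    (hfh : ∀ x ∈ X, ∀ y ∈ X, (f x = f y ↔ h x = h y)) : (f '' X).ncard = (h '' X).ncard := by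
  apply Set.ncard_congr (fun b hb => h (Classical.choose hb))
  · intro b hb
    exact ⟨_, (Classical.choose_spec hb).1, rfl⟩
  · intro a b ha hb hab
    have h1 := Classical.choose_spec ha
    have h2 := Classical.choose_spec hb
    rw [← hfh _ h1.1 _ h2.1, h1.2, h2.2] at hab
    exact hab
  · rintro _ ⟨x, hx, rfl⟩
    have hb : f x ∈ f '' X := ⟨x, hx, rfl⟩
    refine ⟨f x, hb, ?_⟩
    have h1 := Classical.choose_spec hb
    exact (hfh _ h1.1 _ hx).1 h1.2

open Classical in
theorem numRegions_eq_PS {d : ℕ} {ι : Type} [Fintype ι]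
    (L : ι → EuclideanSpace ℝ (Fin d) →ₗ[ℝ] ℝ) (c : ι → ℝ) :
    numRegions (⋃ i, {x | L i x = c i}) = (PS L c Finset.univ ∅).ncard := by
  set X : Set (EuclideanSpace ℝ (Fin d)) := (⋃ i, {x | L i x = c i})ᶜ with hX
  have hXm : ∀ x, x ∈ X ↔ ∀ i, L i x ≠ c i := by intro x; simp [hX]
  have hLc : ∀ i, Continuous (L i) := fun i => LinearMap.continuous_of_finiteDimensional _
  have e1 : regionsOf (⋃ i, {x | L i x = c i}) = (fun x => connectedComponentIn X x) '' X := by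
    ext C
    simp only [regionsOf, Set.mem_ofPred_eq, Set.mem_image, ← hX]
    exact ⟨fun ⟨x, h, e⟩ => ⟨x, h, e.symm⟩, fun ⟨x, h, e⟩ => ⟨x, h, e.symm⟩⟩
  have e2 : PS L c Finset.univ ∅ = (fun x => Finset.univ.filter (fun i => c i < L i x)) '' X := by
    ext σ
    simp only [PS, Set.mem_ofPred_eq, Set.mem_image, hXm]
    constructor
    · rintro ⟨x, _, h, rfl⟩
      exact ⟨x, fun i => h i (Finset.mem_univ _), rfl⟩
    · rintro ⟨x, h, rfl⟩
      exact ⟨x, by simp, fun i _ => h i, rfl⟩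
  rw [numRegions, e1, e2]
  apply ncard_image_eq_of_ker
  intro x hx y hy
  constructor
  · intro h
    have hy' : y ∈ connectedComponentIn X x := by
      have := mem_connectedComponentIn hy
      rwa [← h] at this
    have hx' := mem_connectedComponentIn hx
    have hpre : IsPreconnected (connectedComponentIn X x) := isPreconnected_connectedComponentIn
    have hsub : connectedComponentIn X x ⊆ X := connectedComponentIn_subset _ _
    have key : ∀ a ∈ connectedComponentIn X x, ∀ b ∈ connectedComponentIn X x, ∀ i,
        c i < L i a → c i < L i b := by
      intro a ha b hb i hi
      by_contra hn
      have := hpre.intermediate_value hb ha (hLc i).continuousOn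
      obtain ⟨z, hz, hzc⟩ := this ⟨not_lt.1 hn, hi.le⟩
      exact (hXm z).1 (hsub hz) i hzc
    apply Finset.filter_congr
    intro i _
    exact ⟨key x hx' y hy' i, key y hy' x hx' i⟩
  · intro h
    have hs : ∀ i, (c i < L i x ↔ c i < L i y) := by
      intro i
      have := Finset.ext_iff.1 h i
      simpa using this
    apply connectedComponentIn_eq
    have hseg : segment ℝ x y ⊆ X := by
      intro z hz
      rw [hXm]
      intro i
      rcases lt_or_gt_of_ne ((hXm x).1 hx i) with h | h
      · have h' : L i y < c i := by
          refine lt_of_le_of_ne (not_lt.1 fun h' => ?_) ((hXm y).1 hy i)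
          exact absurd ((hs i).2 h') (not_lt.2 h.le)
        exact ((convex_halfSpace_lt (L i).isLinear (c i)).segment_subset h h' hz).ne
      · have h' := (hs i).1 h
        exact ((convex_halfSpace_gt (L i).isLinear (c i)).segment_subset h h' hz).ne'
    exact (convex_segment x y).isPreconnected.subset_connectedComponentIn
      (left_mem_segment ℝ x y) hseg (right_mem_segment ℝ x y)

/-- The recursion. -/
def RR (k : ℕ) : ℕ → ℕ → ℕ
  | 0, _ => 1
  | _ + 1, 0 => 1
  | n + 1, d + 1 => RR k n (d + 1) + k * RR k n d

theorem count_inj {ι : Type} [Fintype ι] {n k : ℕ} (g : ι → Fin n)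
    (hg : ∀ l : Fin n, (Finset.univ.filter fun i => g i = l).card = k) (A : Finset (Fin n)) :
    ∀ d : ℕ, {T : Finset ι | (∀ i ∈ T, g i ∈ A) ∧ Set.InjOn g T ∧ T.card ≤ d}.ncard =
      RR k A.card d := by
  classical
  have hempty : {T : Finset ι | T = ∅}.ncard = 1 := by simp
  induction A using Finset.induction_on with
  | empty =>
    intro d
    rw [Finset.card_empty, RR, ← hempty]
    congr 1
    ext T
    simp only [Set.mem_ofPred_eq, Finset.notMem_empty]
    constructor
    · rintro ⟨h, _⟩
      exact Finset.eq_empty_of_forall_notMem h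
    · rintro rfl
      simp
  | insert l A hl ih =>
    intro d
    rw [Finset.card_insert_of_notMem hl]
    cases d with
    | zero =>
      rw [RR, ← hempty]
      congr 1
      ext T
      simp only [Set.mem_ofPred_eq]
      constructor
      · rintro ⟨_, _, h⟩
        exact Finset.card_eq_zero.1 (Nat.le_zero.1 h)
      · rintro rfl
        simp
    | succ d =>
      rw [RR, ← ih (d + 1), ← ih d, ← hg l]
      set Q := {T : Finset ι | (∀ i ∈ T, g i ∈ A) ∧ Set.InjOn g T ∧ T.card ≤ d} with hQ
      have hnot : ∀ i, g i = l → ∀ T ∈ Q, i ∉ T := fun i hi T hT h => hl (hi ▸ hT.1 i h)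
      have e : (((Finset.univ.filter fun i => g i = l : Finset ι) : Set ι) ×ˢ Q).ncard =
          (Finset.univ.filter fun i => g i = l).card * Q.ncard := by
        rw [Set.ncard_prod, Set.ncard_coe_finset]
      rw [← e]
      have e' : ((fun p : ι × Finset ι => insert p.1 p.2) ''
          (((Finset.univ.filter fun i => g i = l : Finset ι) : Set ι) ×ˢ Q)).ncard =
          (((Finset.univ.filter fun i => g i = l : Finset ι) : Set ι) ×ˢ Q).ncard := by
        apply Set.ncard_image_of_injOn
        rintro ⟨i, T⟩ ⟨hi, hT⟩ ⟨j, S⟩ ⟨hj, hS⟩ hij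
        simp only [Finset.coe_filter, Finset.mem_univ, true_and, Set.mem_ofPred_eq] at hi hj hij hT hS
        have hij' : i = j := by
          have : i ∈ insert j S := hij ▸ Finset.mem_insert_self i T
          rcases Finset.mem_insert.1 this with h | h
          · exact h
          · exact absurd h (hnot i hi S hS)
        subst hij'
        have := congrArg (fun t => Finset.erase t i) hij
        simp only [Finset.erase_insert (hnot i hi T hT), Finset.erase_insert (hnot i hi S hS)]
          at this
        rw [this]
      rw [← e', ← Set.ncard_union_eq _ (Set.toFinite _) (Set.toFinite _)]
      · congr 1
        ext T
        simp only [Set.mem_union, Set.mem_ofPred_eq, Set.mem_image, Set.mem_prod, Prod.exists,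
          Finset.coe_filter, Finset.mem_univ, true_and]
        constructor
        · rintro ⟨h1, h2, h3⟩
          by_cases hT : ∃ i ∈ T, g i = l
          · obtain ⟨i, hi, hgi⟩ := hT
            right
            refine ⟨i, T.erase i, ⟨hgi, ?_, ?_, ?_⟩, Finset.insert_erase hi⟩
            · intro j hj
              rw [Finset.mem_erase] at hj
              rcases Finset.mem_insert.1 (h1 j hj.2) with h | h
              · exact absurd (h2 hj.2 hi (h.trans hgi.symm)) hj.1
              · exact h
            · exact h2.mono (by intro j hj; exact Finset.mem_of_mem_erase hj)
            · rw [Finset.card_erase_of_mem hi]; omega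
          · left
            refine ⟨fun i hi => ?_, h2, h3⟩
            rcases Finset.mem_insert.1 (h1 i hi) with h | h
            · exact absurd ⟨i, hi, h⟩ hT
            · exact h
        · rintro (⟨h1, h2, h3⟩ | ⟨i, S, ⟨hi, hS⟩, rfl⟩)
          · exact ⟨fun i hi => Finset.mem_insert_of_mem (h1 i hi), h2, h3⟩
          · have hn := hnot i hi S hS
            refine ⟨?_, ?_, ?_⟩
            · intro j hj
              rcases Finset.mem_insert.1 hj with rfl | hj
              · rw [hi]; exact Finset.mem_insert_self _ _
              · exact Finset.mem_insert_of_mem (hS.1 j hj)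
            · rw [Finset.coe_insert, Set.injOn_insert (by exact_mod_cast hn)]
              refine ⟨hS.2.1, ?_⟩
              rintro ⟨j, hj, hji⟩
              apply hl
              rw [← hi, ← hji]
              exact hS.1 j hj
            · rw [Finset.card_insert_of_notMem hn]
              have := hS.2.2
              omega
      · rw [Set.disjoint_left]
        rintro T hT ⟨⟨i, S⟩, ⟨hi, hS⟩, rfl⟩
        simp only [Finset.coe_filter, Finset.mem_univ, true_and, Set.mem_ofPred_eq] at hi
        apply hl
        rw [← hi]
        exact hT.1 i (Finset.mem_insert_self _ _)

theorem numRegions_eq_RR {d n k : ℕ} {ι : Type} [Fintype ι] (g : ι → Fin n)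
    (H : ι → Set (EuclideanSpace ℝ (Fin d))) (hGP : IsGPPH d n g (fun _ => k) H) :
    numRegions (⋃ i, H i) = RR k n d := by
  classical
  obtain ⟨hcard, hpar, hdist, hgen⟩ := hGP
  choose w hw0 hw using hpar
  have hw' : ∀ i, ∃ c : ℝ, H i = {x | (∑ t, w (g i) t * x t) = c} := fun i => hw (g i) i rfl
  choose c hc using hw'
  let M : Fin n → (EuclideanSpace ℝ (Fin d) →ₗ[ℝ] ℝ) := fun l =>
    { toFun := fun x => ∑ t, w l t * x t
      map_add' := by intro x y; simp [mul_add, Finset.sum_add_distrib]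
      map_smul' := by
        intro r x
        simp only [PiLp.smul_apply, smul_eq_mul, RingHom.id_apply, Finset.mul_sum]
        exact Finset.sum_congr rfl fun t _ => by ring }
  let L : ι → (EuclideanSpace ℝ (Fin d) →ₗ[ℝ] ℝ) := fun i => M (g i)
  have hH : ∀ i, H i = {x | L i x = c i} := hc
  have hmem : ∀ i x, x ∈ H i ↔ L i x = c i := by intro i x; rw [hH]; rfl
  have hsol : ∀ T : Finset ι, (∃ x, ∀ i ∈ T, L i x = c i) ↔ Set.InjOn g T ∧ T.card ≤ d := by
    intro T
    constructor
    · rintro ⟨x, hx⟩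
      have hinj : Set.InjOn g T := by
        intro i hi j hj hij
        by_contra hne
        apply hdist i j hne hij
        have h1 := hx i hi
        have h2 := hx j hj
        have hLij : L i = L j := by simp only [L, hij]
        rw [hH i, hH j, hLij, ← h1, ← h2, hLij]
      refine ⟨hinj, ?_⟩
      by_contra hlt
      have := (hgen T hinj).2 (not_le.1 hlt)
      have hx' : x ∈ ⋂ i ∈ T, H i := by
        simp only [Set.mem_iInter]
        exact fun i hi => (hmem i x).2 (hx i hi)
      rw [this] at hx'
      exact hx'
    · rintro ⟨h1, h2⟩
      obtain ⟨A, _, ⟨x, hx⟩, _⟩ := (hgen T h1).1 h2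
      simp only [Set.mem_iInter] at hx
      exact ⟨x, fun i hi => (hmem i x).1 (hx i hi)⟩
  have hyp : ∀ (U : Finset ι) (i0 : ι), i0 ∉ U → ∀ x, (∀ i ∈ insert i0 U, L i x = c i) →
      ∃ y, (∀ i ∈ U, L i y = c i) ∧ L i0 y ≠ c i0 := by
    intro U i0 h0 x hx
    obtain ⟨h1, h2⟩ := (hsol (insert i0 U)).1 ⟨x, hx⟩
    have hcU := Finset.card_insert_of_notMem h0
    obtain ⟨A, hA, _, hAd⟩ := (hgen _ h1).1 h2
    obtain ⟨B, hB, _, hBd⟩ := (hgen U (h1.mono (by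
      intro j hj; exact Finset.mem_insert_of_mem hj))).1 (by omega)
    by_contra hcon
    push Not at hcon
    have hAB : A = B := by
      apply SetLike.coe_injective
      rw [hA, hB]
      ext y
      simp only [Set.mem_iInter, hmem]
      constructor
      · exact fun h i hi => h i (Finset.mem_insert_of_mem hi)
      · intro h i hi
        rcases Finset.mem_insert.1 hi with rfl | hi
        · exact hcon y h
        · exact h i hi
    rw [hAB, hBd] at hAd
    omega
  have e0 : (⋃ i, H i) = ⋃ i, {x | L i x = c i} := Set.iUnion_congr hH
  rw [e0, numRegions_eq_PS, PS_eq_SS L c hyp Finset.univ ∅ (by simp)]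
  have := count_inj g hcard Finset.univ d
  rw [Finset.card_univ, Fintype.card_fin] at this
  rw [← this]
  congr 1
  ext T
  simp only [SS, Set.mem_ofPred_eq, Finset.subset_univ, true_and, Finset.union_empty, hsol,
    Finset.mem_univ, implies_true]

/-- `r_d(n,k) = r_d(n−1,k) + k·r_{d−1}(n−1,k)` for `d > 1`:
if `ℋ ∈ Λ_d(n,k)`, `ℋ′ ∈ Λ_d(n−1,k)` and `ℋ″ ∈ Λ_{d−1}(n−1,k)`, then the number of regions
of `ℋ` equals that of `ℋ′` plus `k` times that of `ℋ″`. -/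
theorem numRegions_recursion {d n k : ℕ} (hd : 1 < d) (hn : 1 ≤ n) (hk : 1 ≤ k)
    {ι ι' ι'' : Type} [Fintype ι] [Fintype ι'] [Fintype ι'']
    (g : ι → Fin n) (H : ι → Set (EuclideanSpace ℝ (Fin d)))
    (g' : ι' → Fin (n - 1)) (H' : ι' → Set (EuclideanSpace ℝ (Fin d)))
    (g'' : ι'' → Fin (n - 1)) (H'' : ι'' → Set (EuclideanSpace ℝ (Fin (d - 1))))
    (hGP : IsGPPH d n g (fun _ => k) H)
    (hGP' : IsGPPH d (n - 1) g' (fun _ => k) H')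
    (hGP'' : IsGPPH (d - 1) (n - 1) g'' (fun _ => k) H'') :
    numRegions (⋃ i, H i) = numRegions (⋃ i, H' i) + k * numRegions (⋃ i, H'' i) := by
  rw [numRegions_eq_RR g H hGP, numRegions_eq_RR g' H' hGP', numRegions_eq_RR g'' H'' hGP'']
  obtain ⟨d, rfl⟩ : ∃ m, d = m + 1 := ⟨d - 1, by omega⟩
  obtain ⟨n, rfl⟩ : ∃ m, n = m + 1 := ⟨n - 1, by omega⟩
  simp only [Nat.add_sub_cancel]
  rw [RR]


end
end

section
/- Fix k ≥ 1 and let r : ℕ≥1 × ℕ≥1 → ℕ be defined by r(1,d) = k+1 for all d ≥ 1, r(n,1) = k·n + 1 for all n ≥ 1, and r(n,d) = k·r(n−1,d−1) + r(n−1,d) for n,d > 1. Then for all n,d ≥ 1, r(n,d) = (k+1)·Σ_{j=0}^{d−1} C(n−1,j)·k^j + k^d·Σ_{j=d}^{n−1} C(j−1,d−1), where the second sum is empty when n−1 < d. -/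
theorem hockey_aux (d m : ℕ) :
    ∑ j ∈ Finset.Icc (d + 1) m, Nat.choose (j - 1) d = Nat.choose m (d + 1) := by
  induction m with
  | zero => simp
  | succ m ih =>
    by_cases h : d + 1 ≤ m + 1
    · rw [Finset.sum_Icc_succ_top h, ih, Nat.choose_succ_succ, Nat.add_sub_cancel, add_comm]
    · rw [Finset.Icc_eq_empty h, Finset.sum_empty, Nat.choose_eq_zero_of_lt (by omega)]

theorem first_aux (k m d : ℕ) :
    ∑ j ∈ Finset.range (d + 1), Nat.choose (m + 1) j * k ^ j
      = ∑ j ∈ Finset.range (d + 1), Nat.choose m j * k ^ j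
        + k * ∑ j ∈ Finset.range d, Nat.choose m j * k ^ j := by
  induction d with
  | zero => simp
  | succ d ih =>
    rw [Finset.sum_range_succ, ih, Finset.sum_range_succ _ (d + 1),
      Finset.sum_range_succ _ d, Nat.choose_succ_succ]
    ring

/-- The recursion `r(1,d) = k+1`, `r(n,1) = k·n+1`,
`r(n,d) = k·r(n−1,d−1) + r(n−1,d)` unfolds to
`r(n,d) = (k+1)·Σ_{j<d} C(n−1,j)·k^j + k^d·Σ_{j=d}^{n−1} C(j−1,d−1)`. -/
theorem recursion_unfolds (k : ℕ) (hk : 1 ≤ k) (r : ℕ → ℕ → ℕ)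
    (h1 : ∀ d, 1 ≤ d → r 1 d = k + 1)
    (h2 : ∀ n, 1 ≤ n → r n 1 = k * n + 1)
    (hrec : ∀ n d, 1 < n → 1 < d → r n d = k * r (n - 1) (d - 1) + r (n - 1) d) :
    ∀ n d, 1 ≤ n → 1 ≤ d →
      r n d = (k + 1) * ∑ j ∈ Finset.range d, Nat.choose (n - 1) j * k ^ j
        + k ^ d * ∑ j ∈ Finset.Icc d (n - 1), Nat.choose (j - 1) (d - 1) := by
  suffices H : ∀ m d, r (m + 1) (d + 1)
      = (k + 1) * ∑ j ∈ Finset.range (d + 1), Nat.choose m j * k ^ j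
        + k ^ (d + 1) * Nat.choose m (d + 1) by
    intro n d hn hd
    obtain ⟨m, rfl⟩ := Nat.exists_eq_add_of_le' hn
    obtain ⟨e, rfl⟩ := Nat.exists_eq_add_of_le' hd
    simp only [Nat.add_sub_cancel]
    rw [hockey_aux, H]
  intro m
  induction m with
  | zero =>
    intro d
    rw [h1 _ (by omega), Finset.sum_range_succ']
    simp
  | succ m ih =>
    intro d
    cases d with
    | zero =>
      rw [h2 _ (by omega)]
      simp
      ring
    | succ d =>
      rw [hrec _ _ (by omega) (by omega)]
      simp only [Nat.add_sub_cancel]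
      rw [ih, ih, first_aux, Nat.choose_succ_succ m]
      ring
end

section
/- Let ω_1,…,ω_n ∈ ℝ^d be nonzero, a_j < b_j real numbers, and let ℋ be the arrangement consisting of the 2n hyperplanes H_{1,j} = {x : ω_jᵀx = b_j} and H_{2,j} = {x : ω_jᵀx = a_j} (j = 1,…,n), and assume ℋ ∈ Λ_d(n,2). Let R^±(ℋ) be the set of regions C of ℋ such that for every x ∈ C and every j ∈ {1,…,n}, either ω_jᵀx ≤ a_j or ω_jᵀx ≥ b_j. Then |R^±(ℋ)| ≤ Σ_{j=0}^{d} C(n,j). -/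
noncomputable section

/-- The arrangement of the `2n` hyperplanes `{x : ωⱼᵀx = bⱼ}`, `{x : ωⱼᵀx = aⱼ}`. -/
def pmHyperplanes {d : ℕ} (n : ℕ) (ω : Fin n → EuclideanSpace ℝ (Fin d)) (a b : Fin n → ℝ)
    (p : Bool × Fin n) : Set (EuclideanSpace ℝ (Fin d)) :=
  {x | (∑ t, ω p.2 t * x t) = if p.1 then b p.2 else a p.2}

/-- An arrangement of the `±` type: `a_j < b_j`, the `ω_j` are nonzero, and the `2n`
hyperplanes `{ωⱼᵀx = bⱼ}`, `{ωⱼᵀx = aⱼ}`, grouped into the `n` parallel pairs, are in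
general position modulo parallel hyperplanes, i.e. the arrangement lies in `Λ_d(n,2)`. -/
def IsPMArrangement (d n : ℕ) (ω : Fin n → EuclideanSpace ℝ (Fin d)) (a b : Fin n → ℝ) :
    Prop :=
  (∀ j, ω j ≠ 0) ∧ (∀ j, a j < b j) ∧
    IsGPPH d n Prod.snd (fun _ => 2) (pmHyperplanes n ω a b)

/-- `R^±(ℋ)`: the regions `C` of the arrangement such that every `x ∈ C` satisfies, for
every `j`, either `ωⱼᵀx ≤ aⱼ` or `ωⱼᵀx ≥ bⱼ`. -/
def pmRegions {d : ℕ} (n : ℕ) (ω : Fin n → EuclideanSpace ℝ (Fin d)) (a b : Fin n → ℝ) :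
    Set (Set (EuclideanSpace ℝ (Fin d))) :=
  {C ∈ regionsOf (⋃ p, pmHyperplanes n ω a b p) |
    ∀ x ∈ C, ∀ j, (∑ t, ω j t * x t) ≤ a j ∨ b j ≤ ∑ t, ω j t * x t}

lemma pm_shatter_card {d n : ℕ} (ω : Fin n → EuclideanSpace ℝ (Fin d)) (a b : Fin n → ℝ)
    (hab : ∀ j, a j < b j) (S : Finset (Fin n))
    (hS : ∀ T ⊆ S, ∃ x : EuclideanSpace ℝ (Fin d), ∀ j ∈ S,
      (j ∈ T → b j < ∑ t, ω j t * x t) ∧ (j ∉ T → ∑ t, ω j t * x t < a j)) :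
    S.card ≤ d := by
  classical
  have hli : LinearIndependent ℝ (fun j : S => ω j) := by
    rw [Fintype.linearIndependent_iff]
    intro c hc
    by_contra! hne
    obtain ⟨i, hi⟩ := hne
    obtain ⟨x, hx⟩ := hS (S.filter fun j => ∃ h : j ∈ S, 0 < c ⟨j, h⟩) (Finset.filter_subset _ _)
    obtain ⟨y, hy⟩ := hS (S.filter fun j => ¬ ∃ h : j ∈ S, 0 < c ⟨j, h⟩)
      (Finset.filter_subset _ _)
    have key : ∀ z : EuclideanSpace ℝ (Fin d), ∑ j : S, c j * ∑ t, ω j t * z t = 0 := by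
      intro z
      have h1 : ∀ t, ∑ j : S, c j * ω j t = 0 := by
        intro t
        have := congrArg (fun v : EuclideanSpace ℝ (Fin d) => v t) hc
        simpa using this
      simp_rw [Finset.mul_sum]
      rw [Finset.sum_comm]
      refine Finset.sum_eq_zero fun t _ => ?_
      simp_rw [← mul_assoc]
      rw [← Finset.sum_mul, h1, zero_mul]
    have hterm : ∀ j : S, c j ≠ 0 →
        0 < c j * (∑ t, ω j t * x t) - c j * ∑ t, ω j t * y t := by
      rintro ⟨j, hj⟩ hne
      have hab' := hab j
      rw [← mul_sub]
      rcases lt_or_gt_of_ne hne with h | h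
      · have e1 := (hx j hj).2 (by simp [hj, h.le])
        have e2 := (hy j hj).1 (by simp [hj, h.le])
        exact mul_pos_of_neg_of_neg h (by linarith)
      · have e1 := (hx j hj).1 (by simp [hj, h])
        have e2 := (hy j hj).2 (by simp [hj, h])
        exact mul_pos h (by linarith)
    have hpos : 0 < ∑ j : S, (c j * (∑ t, ω j t * x t) - c j * ∑ t, ω j t * y t) := by
      refine Finset.sum_pos' (fun j _ => ?_) ⟨i, Finset.mem_univ _, hterm i hi⟩
      by_cases h : c j = 0
      · simp [h]
      · exact (hterm j h).le
    rw [Finset.sum_sub_distrib, key x, key y] at hpos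
    simp at hpos
  simpa using hli.fintype_card_le_finrank

/-- The cell of a sign pattern. -/
def pmCell {d n : ℕ} (ω : Fin n → EuclideanSpace ℝ (Fin d)) (a b : Fin n → ℝ)
    (T : Finset (Fin n)) : Set (EuclideanSpace ℝ (Fin d)) :=
  {x | ∀ j, (j ∈ T → b j < ∑ t, ω j t * x t) ∧ (j ∉ T → ∑ t, ω j t * x t < a j)}

lemma pmCell_convex {d n : ℕ} (ω : Fin n → EuclideanSpace ℝ (Fin d)) (a b : Fin n → ℝ)
    (T : Finset (Fin n)) : Convex ℝ (pmCell ω a b T) := by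
  intro x hx y hy s r hs hr hsr j
  have e : ∑ t, ω j t * (s • x + r • y) t
      = s * (∑ t, ω j t * x t) + r * ∑ t, ω j t * y t := by
    simp only [Finset.mul_sum, ← Finset.sum_add_distrib]
    refine Finset.sum_congr rfl fun t _ => ?_
    simp
    ring
  rw [e]
  constructor
  · intro hj
    exact convex_Ioi (b j) ((hx j).1 hj) ((hy j).1 hj) hs hr hsr
  · intro hj
    exact convex_Iio (a j) ((hx j).2 hj) ((hy j).2 hj) hs hr hsr

lemma pmCell_subset {d n : ℕ} (ω : Fin n → EuclideanSpace ℝ (Fin d)) (a b : Fin n → ℝ)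
    (hab : ∀ j, a j < b j) (T : Finset (Fin n)) :
    pmCell ω a b T ⊆ (⋃ p, pmHyperplanes n ω a b p)ᶜ := by
  intro x hx hmem
  obtain ⟨⟨e, j⟩, hp⟩ := Set.mem_iUnion.1 hmem
  have hab' := hab j
  have hp' : (∑ t, ω j t * x t) = if e then b j else a j := hp
  by_cases hj : j ∈ T
  · have := (hx j).1 hj
    cases e <;> simp at hp' <;> linarith
  · have := (hx j).2 hj
    cases e <;> simp at hp' <;> linarith

/-- For an arrangement of the `±` type in `Λ_d(n,2)`,
`|R^±(ℋ)| ≤ Σ_{j=0}^{d} C(n,j)`. -/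
theorem pmRegions_card_le {d n : ℕ} (ω : Fin n → EuclideanSpace ℝ (Fin d)) (a b : Fin n → ℝ)
    (hPM : IsPMArrangement d n ω a b) :
    (pmRegions n ω a b).ncard ≤ ∑ j ∈ Finset.range (d + 1), Nat.choose n j := by
  classical
  have hab := hPM.2.1
  let F : Finset (Finset (Fin n)) := Finset.univ.filter fun T => (pmCell ω a b T).Nonempty
  let A := ⋃ p, pmHyperplanes n ω a b p
  let g : Finset (Fin n) → Set (EuclideanSpace ℝ (Fin d)) := fun T =>
    if h : (pmCell ω a b T).Nonempty then connectedComponentIn Aᶜ h.choose else ∅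
  have hsub : pmRegions n ω a b ⊆ ((F.image g : Finset _) : Set (Set _)) := by
    rintro C ⟨⟨x, hxA, rfl⟩, hC⟩
    have hx := hC x (mem_connectedComponentIn hxA)
    have hxT : x ∈ pmCell ω a b (Finset.univ.filter fun j => b j ≤ ∑ t, ω j t * x t) := by
      intro j
      have h1 : (∑ t, ω j t * x t) ≠ b j := fun h =>
        hxA (Set.mem_iUnion.2 ⟨(true, j), by simpa [pmHyperplanes] using h⟩)
      have h2 : (∑ t, ω j t * x t) ≠ a j := fun h =>
        hxA (Set.mem_iUnion.2 ⟨(false, j), by simpa [pmHyperplanes] using h⟩)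
      simp only [Finset.mem_filter, Finset.mem_univ, true_and]
      exact ⟨fun h => lt_of_le_of_ne h h1.symm,
        fun h => lt_of_le_of_ne ((hx j).resolve_right h) h2⟩
    generalize (Finset.univ.filter fun j => b j ≤ ∑ t, ω j t * x t) = T at hxT
    have hne : (pmCell ω a b T).Nonempty := ⟨x, hxT⟩
    refine Finset.mem_coe.2 (Finset.mem_image.2 ⟨T, by simp [F, hne], ?_⟩)
    simp only [g, dif_pos hne]
    refine connectedComponentIn_eq ?_
    exact ((pmCell_convex ω a b T).isPreconnected.subset_connectedComponentIn hne.choose_spec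
      (pmCell_subset ω a b hab T)) hxT
  have hvc : F.vcDim ≤ d := by
    refine Finset.sup_le fun S hS => ?_
    rw [Finset.mem_shatterer] at hS
    refine pm_shatter_card ω a b hab S fun T hT => ?_
    obtain ⟨U, hU, hUT⟩ := hS hT
    obtain ⟨x, hx⟩ := (Finset.mem_filter.1 hU).2
    refine ⟨x, fun j hj => ⟨fun h => (hx j).1 ?_, fun h => (hx j).2 fun h' => h ?_⟩⟩
    · rw [← hUT] at h
      exact (Finset.mem_inter.1 h).2
    · rw [← hUT]
      exact Finset.mem_inter.2 ⟨hj, h'⟩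
  calc (pmRegions n ω a b).ncard ≤ ((F.image g : Finset _) : Set (Set _)).ncard :=
        Set.ncard_le_ncard hsub (Finset.finite_toSet _)
    _ = (F.image g).card := Set.ncard_coe_finset _
    _ ≤ F.card := Finset.card_image_le
    _ ≤ F.shatterer.card := Finset.card_le_card_shatterer F
    _ ≤ ∑ k ∈ Finset.Iic F.vcDim, (Fintype.card (Fin n)).choose k :=
        Finset.card_shatterer_le_sum_vcDim
    _ ≤ ∑ j ∈ Finset.range (d + 1), Nat.choose n j := by
        rw [Fintype.card_fin]
        refine Finset.sum_le_sum_of_subset fun k hk => ?_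
        simp only [Finset.mem_Iic, Finset.mem_range] at *
        omega

end
end

section
/- Let n, d > 1 and let A, B ∈ ℕ. Suppose that |R^±(ℋ′)| ≤ A for every arrangement ℋ′ ∈ Λ_d(n−1,2) of the ± type, and |R^±(ℋ″)| ≤ B for every arrangement ℋ″ ∈ Λ_{d−1}(n−1,2) of the ± type. Then |R^±(ℋ)| ≤ A + B for every arrangement ℋ ∈ Λ_d(n,2) of the ± type. -/
noncomputable section

abbrev EE (d : ℕ) := EuclideanSpace ℝ (Fin d)

def ip {d : ℕ} (w : EE d) : EE d →ₗ[ℝ] ℝ where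
  toFun x := ∑ t, w t * x t
  map_add' x y := by simp [mul_add, Finset.sum_add_distrib]
  map_smul' c x := by
    simp only [PiLp.smul_apply, smul_eq_mul, RingHom.id_apply, Finset.mul_sum]
    exact Finset.sum_congr rfl fun t _ => by ring

theorem ip_apply {d : ℕ} (w x : EE d) : ip w x = ∑ t, w t * x t := rfl

theorem ip_cont {d : ℕ} (w : EE d) : Continuous (ip w) := (ip w).continuous_of_finiteDimensional

theorem exists_ip {d : ℕ} (f : EE d →ₗ[ℝ] ℝ) : ∃ w : EE d, ∀ y, ip w y = f y := by
  refine ⟨(InnerProductSpace.toDual ℝ (EE d)).symm (LinearMap.toContinuousLinearMap f), fun y => ?_⟩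
  have := InnerProductSpace.toDual_symm_apply (𝕜 := ℝ) (x := y) (y := LinearMap.toContinuousLinearMap f)
  rw [LinearMap.coe_toContinuousLinearMap'] at this
  rw [← this, PiLp.inner_apply, ip_apply]
  exact Finset.sum_congr rfl fun t _ => by simp [mul_comm]

def cell {d n : ℕ} (ω : Fin n → EE d) (a b : Fin n → ℝ) (σ : Fin n → Bool) : Set (EE d) :=
  {x | ∀ j, if σ j then b j < ip (ω j) x else ip (ω j) x < a j}

def realized {d n : ℕ} (ω : Fin n → EE d) (a b : Fin n → ℝ) : Set (Fin n → Bool) :=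
  {σ | (cell ω a b σ).Nonempty}

theorem cell_convex {d n : ℕ} (ω : Fin n → EE d) (a b : Fin n → ℝ) (σ : Fin n → Bool) :
    Convex ℝ (cell ω a b σ) := by
  have : cell ω a b σ = ⋂ j, {x | if σ j then b j < ip (ω j) x else ip (ω j) x < a j} := by
    ext x; simp [cell]
  rw [this]
  refine convex_iInter fun j => ?_
  cases h : σ j
  · simpa using convex_halfSpace_lt (ip (ω j)).isLinear (a j)
  · simpa using convex_halfSpace_gt (ip (ω j)).isLinear (b j)

theorem mem_compl_iff' {d n : ℕ} (ω : Fin n → EE d) (a b : Fin n → ℝ) (x : EE d) :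
    x ∈ (⋃ p, pmHyperplanes n ω a b p)ᶜ ↔ ∀ j, ip (ω j) x ≠ a j ∧ ip (ω j) x ≠ b j := by
  simp only [Set.mem_compl_iff, Set.mem_iUnion, not_exists, pmHyperplanes, Set.mem_ofPred_eq,
    Prod.forall, Bool.forall_bool, ip_apply]
  simp [forall_and]

theorem cell_eq_component {d n : ℕ} (ω : Fin n → EE d) (a b : Fin n → ℝ) (hab : ∀ j, a j < b j)
    (σ : Fin n → Bool) (x : EE d) (hx : x ∈ cell ω a b σ) :
    connectedComponentIn (⋃ p, pmHyperplanes n ω a b p)ᶜ x = cell ω a b σ := by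
  have hsub : cell ω a b σ ⊆ (⋃ p, pmHyperplanes n ω a b p)ᶜ := by
    intro y hy
    rw [mem_compl_iff']
    intro j
    have := hy j
    have h2 := hab j
    split_ifs at this
    · exact ⟨by linarith [this] |> fun h : a j < ip (ω j) y => h.ne', this.ne'⟩
    · exact ⟨this.ne, (this.trans h2).ne⟩
  apply Set.Subset.antisymm
  · intro y hy j
    set C := connectedComponentIn (⋃ p, pmHyperplanes n ω a b p)ᶜ x with hC
    have hxC : x ∈ C := mem_connectedComponentIn (hsub hx)
    have hpre : IsPreconnected (ip (ω j) '' C) :=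
      isPreconnected_connectedComponentIn.image _ (ip_cont _).continuousOn
    have hoc := hpre.ordConnected
    have hCs : C ⊆ (⋃ p, pmHyperplanes n ω a b p)ᶜ := connectedComponentIn_subset _ _
    have hj := hx j
    split_ifs at hj ⊢
    · by_contra hlt
      have : b j ∈ ip (ω j) '' C := hoc.out ⟨y, hy, rfl⟩ ⟨x, hxC, rfl⟩ ⟨not_lt.1 hlt, hj.le⟩
      obtain ⟨z, hz, hzb⟩ := this
      exact ((mem_compl_iff' ω a b z).1 (hCs hz) j).2 hzb
    · by_contra hlt
      have : a j ∈ ip (ω j) '' C := hoc.out ⟨x, hxC, rfl⟩ ⟨y, hy, rfl⟩ ⟨hj.le, not_lt.1 hlt⟩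
      obtain ⟨z, hz, hzb⟩ := this
      exact ((mem_compl_iff' ω a b z).1 (hCs hz) j).1 hzb
  · exact (cell_convex ω a b σ).isPreconnected.subset_connectedComponentIn hx hsub

theorem cell_subset_compl {d n : ℕ} (ω : Fin n → EE d) (a b : Fin n → ℝ) (hab : ∀ j, a j < b j)
    (σ : Fin n → Bool) : cell ω a b σ ⊆ (⋃ p, pmHyperplanes n ω a b p)ᶜ := by
  intro x hx
  have := cell_eq_component ω a b hab σ x hx
  exact connectedComponentIn_subset _ x (this ▸ hx)

theorem pmRegions_ncard {d n : ℕ} (ω : Fin n → EE d) (a b : Fin n → ℝ) (hab : ∀ j, a j < b j) :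
    (pmRegions n ω a b).ncard = (realized ω a b).ncard := by
  have himg : pmRegions n ω a b = cell ω a b '' realized ω a b := by
    ext C
    constructor
    · rintro ⟨⟨x, hx, rfl⟩, h⟩
      have hxj := h x (mem_connectedComponentIn hx)
      have hne := (mem_compl_iff' ω a b x).1 hx
      have hxc : x ∈ cell ω a b (fun j => decide (b j < ip (ω j) x)) := by
        intro j
        by_cases hb : b j < ip (ω j) x
        · simp [hb]
        · simp only [hb, decide_false, Bool.false_eq_true, if_false]
          rcases hxj j with h1 | h1
          · exact lt_of_le_of_ne h1 (hne j).1
          · exact absurd (lt_of_le_of_ne h1 (hne j).2.symm) hb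
      exact ⟨_, ⟨x, hxc⟩, (cell_eq_component ω a b hab _ x hxc).symm⟩
    · rintro ⟨σ, ⟨x, hx⟩, rfl⟩
      refine ⟨⟨x, cell_subset_compl ω a b hab σ hx, (cell_eq_component ω a b hab σ x hx).symm⟩, ?_⟩
      intro y hy j
      have := hy j
      split_ifs at this
      · exact Or.inr this.le
      · exact Or.inl this.le
  rw [himg]
  refine Set.InjOn.ncard_image ?_
  rintro σ ⟨x, hx⟩ τ - h
  have hx' : x ∈ cell ω a b τ := h ▸ hx
  funext j
  have h1 := hx j
  have h2 := hx' j
  have h3 := hab j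
  cases hs : σ j <;> cases ht : τ j <;> simp [hs, ht] at h1 h2 ⊢ <;> linarith

def GP4 (d n : ℕ) (ω : Fin n → EE d) (a b : Fin n → ℝ) : Prop :=
  ∀ S : Finset (Bool × Fin n), Set.InjOn Prod.snd (S : Set (Bool × Fin n)) →
    (S.card ≤ d → IsAffineOfDim d (d - S.card) (⋂ i ∈ S, pmHyperplanes n ω a b i)) ∧
    (d < S.card → (⋂ i ∈ S, pmHyperplanes n ω a b i) = ∅)

theorem pm_of_gp4 {d n : ℕ} (hd : 1 ≤ d) (ω : Fin n → EE d) (a b : Fin n → ℝ)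
    (hab : ∀ j, a j < b j) (h : GP4 d n ω a b) : IsPMArrangement d n ω a b := by
  have key : ∀ p, IsAffineOfDim d (d - 1) (pmHyperplanes n ω a b p) := by
    intro p
    have := (h {p} (by simp)).1 (by simpa using hd)
    simpa using this
  have hω : ∀ j, ω j ≠ 0 := by
    intro j hj
    obtain ⟨A, hA, ⟨x, hx⟩, hf⟩ := key (true, j)
    have : A = ⊤ := by
      rw [← SetLike.coe_set_eq, hA]
      ext y
      simp [pmHyperplanes, hj] at hx ⊢
      exact hx
    rw [this, AffineSubspace.direction_top, finrank_top, finrank_euclideanSpace_fin] at hf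
    omega
  refine ⟨hω, hab, ?_, ?_, ?_, h⟩
  · intro l
    have : (Finset.univ.filter fun i : Bool × Fin n => i.2 = l) = {(true, l), (false, l)} := by
      ext ⟨c, i⟩
      cases c <;> simp
    rw [this]; simp
  · intro l
    refine ⟨ω l, hω l, ?_⟩
    rintro ⟨c, i⟩ rfl
    exact ⟨_, rfl⟩
  · rintro ⟨c, i⟩ ⟨c', i'⟩ hne hi heq
    obtain rfl : i = i' := hi
    obtain ⟨A, hA, ⟨x, hx⟩, hf⟩ := key (c, i)
    have hx' := hx
    rw [heq] at hx'
    have h3 := hab i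
    simp only [pmHyperplanes, Set.mem_ofPred_eq] at hx hx'
    rw [hx] at hx'
    cases c <;> cases c' <;> simp at hx' hne <;> linarith

theorem pm_tail {d n : ℕ} (hd : 1 ≤ d) (ω : Fin (n + 1) → EE d) (a b : Fin (n + 1) → ℝ)
    (h : IsPMArrangement d (n + 1) ω a b) :
    IsPMArrangement d n (fun j => ω j.succ) (fun j => a j.succ) (fun j => b j.succ) := by
  refine pm_of_gp4 hd _ _ _ (fun j => h.2.1 _) ?_
  intro S hS
  let f : Bool × Fin n ↪ Bool × Fin (n + 1) :=
    ⟨fun p => (p.1, p.2.succ), fun p q hpq => by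
      simp only [Prod.mk.injEq, Fin.succ_inj] at hpq; exact Prod.ext hpq.1 hpq.2⟩
  have hinj : Set.InjOn Prod.snd ((S.map f : Finset _) : Set (Bool × Fin (n + 1))) := by
    intro p hp q hq hpq
    simp only [Finset.coe_map, Set.mem_image] at hp hq
    obtain ⟨p, hp, rfl⟩ := hp
    obtain ⟨q, hq, rfl⟩ := hq
    rw [hS hp hq (Fin.succ_injective _ hpq)]
  have := h.2.2.2.2.2 (S.map f) hinj
  rw [Finset.card_map] at this
  have heq : (⋂ i ∈ S.map f, pmHyperplanes (n + 1) ω a b i) =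
      ⋂ i ∈ S, pmHyperplanes n (fun j => ω j.succ) (fun j => a j.succ) (fun j => b j.succ) i := by
    ext x
    simp only [Set.mem_iInter, Finset.forall_mem_map]
    rfl
  rwa [heq] at this

theorem restrict {e n : ℕ} (he : 1 ≤ e) (ω : Fin (n + 1) → EE (e + 1)) (a b : Fin (n + 1) → ℝ)
    (h : IsPMArrangement (e + 1) (n + 1) ω a b) :
    ∃ (ω' : Fin n → EE e) (a' b' : Fin n → ℝ), IsPMArrangement e n ω' a' b' ∧
      ∀ x, ip (ω 0) x = a 0 → ∀ τ, x ∈ cell (fun j => ω j.succ) (fun j => a j.succ)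
        (fun j => b j.succ) τ → τ ∈ realized ω' a' b' := by
  have h0 := (h.2.2.2.2.2 {(false, 0)} (by simp)).1 (by simp)
  simp only [Finset.mem_singleton, Set.iInter_iInter_eq_left, Finset.card_singleton,
    Nat.add_sub_cancel] at h0
  obtain ⟨A, hA, ⟨x0, hx0⟩, hf⟩ := h0
  have hx0A : x0 ∈ A := by rw [← SetLike.mem_coe, hA]; exact hx0
  have hmemA : ∀ x, x ∈ A ↔ ip (ω 0) x = a 0 := by
    intro x; rw [← SetLike.mem_coe, hA]; simp [pmHyperplanes, ip_apply]
  let L0 : EE e ≃ₗ[ℝ] A.direction := LinearEquiv.ofFinrankEq _ _ (by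
    rw [hf]; exact finrank_euclideanSpace_fin)
  let L : EE e →ₗ[ℝ] EE (e + 1) := A.direction.subtype ∘ₗ L0.toLinearMap
  have hLinj : Function.Injective L := Subtype.val_injective.comp L0.injective
  have hLr : ∀ v, v ∈ A.direction ↔ ∃ y, L y = v := by
    intro v
    constructor
    · intro hv
      exact ⟨L0.symm ⟨v, hv⟩, by simp [L]⟩
    · rintro ⟨y, rfl⟩
      exact (L0 y).2
  have hφA : ∀ y, L y + x0 ∈ A := fun y =>
    AffineSubspace.vadd_mem_of_mem_direction ((hLr _).2 ⟨y, rfl⟩) hx0A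
  have hφs : ∀ x ∈ A, ∃ y, L y + x0 = x := by
    intro x hx
    obtain ⟨y, hy⟩ := (hLr _).1 (AffineSubspace.vsub_mem_direction hx hx0A)
    exact ⟨y, by rw [hy]; simp⟩
  choose ω' hω' using fun j : Fin n => exists_ip ((ip (ω j.succ)).comp L)
  have hip : ∀ j y, ip (ω j.succ) (L y + x0) = ip (ω' j) y + ip (ω j.succ) x0 := by
    intro j y
    rw [map_add, hω']; rfl
  refine ⟨ω', fun j => a j.succ - ip (ω j.succ) x0, fun j => b j.succ - ip (ω j.succ) x0, ?_, ?_⟩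
  · refine pm_of_gp4 he _ _ _ (fun j => by have := h.2.1 j.succ; simpa using this) ?_
    intro S hS
    let f : Bool × Fin n ↪ Bool × Fin (n + 1) :=
      ⟨fun p => (p.1, p.2.succ), fun p q hpq => by
        simp only [Prod.mk.injEq, Fin.succ_inj] at hpq; exact Prod.ext hpq.1 hpq.2⟩
    have hnot : ((false, 0) : Bool × Fin (n + 1)) ∉ S.map f := by
      simp only [Finset.mem_map, not_exists, not_and]
      intro p _ hp
      exact Fin.succ_ne_zero _ (congrArg Prod.snd hp)
    have hinj : Set.InjOn Prod.snd
        ((insert (false, 0) (S.map f) : Finset _) : Set (Bool × Fin (n + 1))) := by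
      intro p hp q hq hpq
      simp only [Finset.coe_insert, Finset.coe_map, Set.mem_insert_iff, Set.mem_image] at hp hq
      rcases hp with rfl | ⟨p, hp, rfl⟩ <;> rcases hq with rfl | ⟨q, hq, rfl⟩
      · rfl
      · exact absurd hpq.symm (Fin.succ_ne_zero _)
      · exact absurd hpq (Fin.succ_ne_zero _)
      · rw [hS hp hq (Fin.succ_injective _ hpq)]
    have := h.2.2.2.2.2 _ hinj
    rw [Finset.card_insert_of_notMem hnot, Finset.card_map] at this
    have hmem : ∀ y, L y + x0 ∈ (⋂ i ∈ insert (false, 0) (S.map f), pmHyperplanes (n + 1) ω a b i) ↔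
        y ∈ ⋂ i ∈ S, pmHyperplanes n ω' (fun j => a j.succ - ip (ω j.succ) x0)
          (fun j => b j.succ - ip (ω j.succ) x0) i := by
      intro y
      simp only [Set.mem_iInter, Finset.forall_mem_insert, Finset.forall_mem_map]
      have h1 : L y + x0 ∈ pmHyperplanes (n + 1) ω a b (false, 0) := by
        rw [← hA]; exact hφA y
      simp only [h1, true_and]
      refine forall₂_congr ?_
      rintro ⟨c, j⟩ -
      have := hip j y
      change ip (ω j.succ) (L y + x0) = (if c = true then b j.succ else a j.succ) ↔
        ip (ω' j) y = (if c = true then b j.succ - ip (ω j.succ) x0 else a j.succ - ip (ω j.succ) x0)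
      rw [this]
      cases c <;> simp <;> constructor <;> intro h <;> linarith
    have hsub : (⋂ i ∈ insert (false, 0) (S.map f), pmHyperplanes (n + 1) ω a b i) ⊆ A := by
      intro x hx
      rw [hA]
      simp only [Set.mem_iInter, Finset.forall_mem_insert] at hx
      exact hx.1
    generalize (⋂ i ∈ insert (false, 0) (S.map f), pmHyperplanes (n + 1) ω a b i) = X at *
    generalize (⋂ i ∈ S, pmHyperplanes n ω' (fun j => a j.succ - ip (ω j.succ) x0)
          (fun j => b j.succ - ip (ω j.succ) x0) i) = Y at *
    constructor
    · intro hc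
      obtain ⟨D, rfl, ⟨x, hx⟩, hfr⟩ := this.1 (by omega)
      obtain ⟨y, rfl⟩ := hφs x (hsub hx)
      let φ : EE e →ᵃ[ℝ] EE (e + 1) := L.toAffineMap + AffineMap.const ℝ _ x0
      have hφ : ∀ y, φ y = L y + x0 := fun y => rfl
      have hDA : D ≤ A := hsub
      refine ⟨D.comap φ, ?_, ⟨y, (hmem y).1 hx⟩, ?_⟩
      · ext z
        rw [← hmem z]; rfl
      · have hdir : (D.comap φ).direction.map L = D.direction := by
          have hy : y ∈ D.comap φ := hx
          ext v
          constructor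
          · rintro ⟨u, hu, rfl⟩
            have h2 := AffineSubspace.vadd_mem_of_mem_direction hu hy
            have h3 : L (u + y) + x0 ∈ D := h2
            have h4 := AffineSubspace.vsub_mem_direction h3 hx
            simpa using h4
          · intro hv
            obtain ⟨u, rfl⟩ := (hLr v).1 (AffineSubspace.direction_le hDA hv)
            refine ⟨u, ?_, rfl⟩
            have h2 : L u + (L y + x0) ∈ D := AffineSubspace.vadd_mem_of_mem_direction hv hx
            have h3 : u + y ∈ D.comap φ := by
              change L (u + y) + x0 ∈ D
              rwa [map_add, add_assoc]
            have h4 := AffineSubspace.vsub_mem_direction h3 hy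
            simpa using h4
        rw [(Submodule.equivMapOfInjective L hLinj _).finrank_eq, hdir, hfr]
        omega
    · intro hc
      have hX := this.2 (by omega)
      ext y
      rw [← hmem y, hX]; simp
  · intro x hx τ hτ
    obtain ⟨y, rfl⟩ := hφs x ((hmemA x).2 hx)
    refine ⟨y, fun j => ?_⟩
    have := hτ j
    simp only [hip] at this
    split_ifs at this ⊢ <;> linarith

theorem realized_bound {e n : ℕ} (ω : Fin (n + 1) → EE (e + 1)) (a b : Fin (n + 1) → ℝ)
    (hab : a 0 < b 0) (T' : Set (Fin n → Bool))
    (hT : ∀ x, ip (ω 0) x = a 0 → ∀ τ, x ∈ cell (fun j => ω j.succ) (fun j => a j.succ)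
        (fun j => b j.succ) τ → τ ∈ T') :
    (realized ω a b).ncard ≤
      (realized (fun j => ω j.succ) (fun j => a j.succ) (fun j => b j.succ)).ncard + T'.ncard := by
  let Q (c : Bool) : Set (Fin n → Bool) := {τ | (Fin.cons c τ : Fin (n + 1) → Bool) ∈ realized ω a b}
  have hdec : realized ω a b = (fun τ : Fin n → Bool => (Fin.cons true τ : Fin (n + 1) → Bool)) '' Q true ∪
      (fun τ : Fin n → Bool => (Fin.cons false τ : Fin (n + 1) → Bool)) '' Q false := by
    ext σ
    constructor
    · intro hσ
      rw [← Fin.cons_self_tail σ] at hσ ⊢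
      cases hc : σ 0 <;> rw [hc] at hσ
      · exact Or.inr ⟨_, hσ, rfl⟩
      · exact Or.inl ⟨_, hσ, rfl⟩
    · rintro (⟨τ, hτ, rfl⟩ | ⟨τ, hτ, rfl⟩) <;> exact hτ
  have hcell : ∀ c τ x, x ∈ cell ω a b (Fin.cons c τ : Fin (n + 1) → Bool) ↔
      (if c then b 0 < ip (ω 0) x else ip (ω 0) x < a 0) ∧
      x ∈ cell (fun j => ω j.succ) (fun j => a j.succ) (fun j => b j.succ) τ := by
    intro c τ x
    simp only [cell, Set.mem_ofPred_eq, Fin.forall_fin_succ (P := fun j => if (Fin.cons c τ : Fin (n + 1) → Bool) j = true then _ else _), Fin.cons_zero, Fin.cons_succ]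
  have hQ : ∀ c, Q c ⊆ realized (fun j => ω j.succ) (fun j => a j.succ) (fun j => b j.succ) := by
    rintro c τ ⟨x, hx⟩
    exact ⟨x, ((hcell c τ x).1 hx).2⟩
  have hI : Q true ∩ Q false ⊆ T' := by
    rintro τ ⟨⟨x, hx⟩, ⟨y, hy⟩⟩
    obtain ⟨hx1, hx2⟩ := (hcell _ τ x).1 hx
    obtain ⟨hy1, hy2⟩ := (hcell _ τ y).1 hy
    simp at hx1 hy1
    have hpre := (cell_convex (fun j => ω j.succ) (fun j => a j.succ) (fun j => b j.succ) τ).isPreconnected.image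
      _ (ip_cont (ω 0)).continuousOn
    obtain ⟨z, hz, hza⟩ := hpre.ordConnected.out ⟨y, hy2, rfl⟩ ⟨x, hx2, rfl⟩
      (⟨hy1.le, (hab.trans hx1).le⟩ : a 0 ∈ Set.Icc _ _)
    exact hT z hza τ hz
  have hle : (realized ω a b).ncard ≤ (Q true).ncard + (Q false).ncard := by
    rw [hdec]
    refine (Set.ncard_union_le _ _).trans (add_le_add ?_ ?_) <;>
      exact Set.ncard_image_le (Set.toFinite _)
  have h1 := Set.ncard_union_add_ncard_inter (Q true) (Q false) (Set.toFinite _) (Set.toFinite _)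
  have h2 := Set.ncard_le_ncard (Set.union_subset (hQ true) (hQ false)) (Set.toFinite _)
  have h3 := Set.ncard_le_ncard hI (Set.toFinite _)
  omega

/-- Recursion for the number of `±` regions: if `|R^±| ≤ A` for all
`±`-type arrangements in `Λ_d(n−1,2)` and `|R^±| ≤ B` for all `±`-type arrangements in
`Λ_{d−1}(n−1,2)`, then `|R^±| ≤ A + B` for all `±`-type arrangements in `Λ_d(n,2)`. -/
theorem pmRegions_card_recursion (n d : ℕ) (hn : 1 < n) (hd : 1 < d) (A B : ℕ)
    (hA : ∀ (ω : Fin (n - 1) → EuclideanSpace ℝ (Fin d)) (a b : Fin (n - 1) → ℝ),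
      IsPMArrangement d (n - 1) ω a b → (pmRegions (n - 1) ω a b).ncard ≤ A)
    (hB : ∀ (ω : Fin (n - 1) → EuclideanSpace ℝ (Fin (d - 1))) (a b : Fin (n - 1) → ℝ),
      IsPMArrangement (d - 1) (n - 1) ω a b → (pmRegions (n - 1) ω a b).ncard ≤ B) :
    ∀ (ω : Fin n → EuclideanSpace ℝ (Fin d)) (a b : Fin n → ℝ),
      IsPMArrangement d n ω a b → (pmRegions n ω a b).ncard ≤ A + B := by
  intro ω a b h
  obtain ⟨m, rfl⟩ : ∃ m, n = m + 1 := ⟨n - 1, by omega⟩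
  obtain ⟨e, rfl⟩ : ∃ e, d = e + 1 := ⟨d - 1, by omega⟩
  obtain ⟨ω', a', b', hpm, hT⟩ := restrict (by omega) ω a b h
  have h1 : (pmRegions m (fun j => ω j.succ) (fun j => a j.succ) (fun j => b j.succ)).ncard ≤ A :=
    hA _ _ _ (pm_tail (by omega) ω a b h)
  have h2 : (pmRegions m ω' a' b').ncard ≤ B := hB _ _ _ hpm
  have h3 := realized_bound ω a b (h.2.1 0) _ hT
  rw [pmRegions_ncard _ _ _ (fun j => h.2.1 _)] at h1
  rw [pmRegions_ncard ω a b h.2.1]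
  rw [pmRegions_ncard _ _ _ hpm.2.1] at h2
  omega
end
end

section
/- Let M ⊂ ℝ^n be a d-dimensional affine subspace and φ : ℝ → ℝ a continuous piecewise linear function with |A(φ)| = k+1 linear pieces, k ≥ 1. Then the number of (k+1)-ary activation patterns realized on M, i.e. the number of tuples (I^{(1)},…,I^{(n)}) ∈ A(φ)^n for which the set {x ∈ M : x^{(l)} ∈ I^{(l)} for all l = 1,…,n} is nonempty, is at most F(d,n,k) := (k+1)·Σ_{j=0}^{d−1} C(n−1,j)·k^j + k^d·Σ_{j=d}^{n−1} C(j−1,d−1). -/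
noncomputable section

/-- `φ` is affine (linear in the loose sense) on `S`. -/
def AffineOn (φ : ℝ → ℝ) (S : Set ℝ) : Prop :=
  ∃ m c : ℝ, ∀ x ∈ S, φ x = m * x + c

/-- `φ` is a continuous piecewise linear (PWL) function whose set of linear regions is the
finite collection `A` of pairwise disjoint, nonempty open intervals whose closures cover `ℝ`,
with `φ` affine on each of them and each of them maximal with this property. -/
structure IsPWLWith (φ : ℝ → ℝ) (A : Finset (Set ℝ)) : Prop where
  cont : Continuous φ
  nonempty : ∀ I ∈ A, I.Nonempty
  isOpen : ∀ I ∈ A, IsOpen I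
  ordConn : ∀ I ∈ A, I.OrdConnected
  disjoint : ∀ I ∈ A, ∀ J ∈ A, I ≠ J → I ∩ J = ∅
  covers : (⋃ I ∈ A, closure I) = Set.univ
  affine : ∀ I ∈ A, AffineOn φ I
  maximal : ∀ I ∈ A, ∀ Z : Set ℝ, IsOpen Z → Z.OrdConnected → I ⊆ Z → AffineOn φ Z → Z ⊆ I

/-- The upper-bound quantity
`F(d,n,k) = (k+1)·Σ_{j<d} C(n−1,j)·k^j + k^d·Σ_{j=d}^{n−1} C(j−1,d−1)`. -/
def Fbound (d n k : ℕ) : ℕ :=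
  (k + 1) * ∑ j ∈ Finset.range d, Nat.choose (n - 1) j * k ^ j
    + k ^ d * ∑ j ∈ Finset.Icc d (n - 1), Nat.choose (j - 1) (d - 1)

open Classical in
theorem gap_lemma (A : Finset (Set ℝ)) (k : ℕ) (hcard : A.card = k + 1)
    (hne : ∀ I ∈ A, I.Nonempty) (hoc : ∀ I ∈ A, I.OrdConnected)
    (hd : ∀ I ∈ A, ∀ J ∈ A, I ≠ J → I ∩ J = ∅) :
    ∃ (A' : Finset (Set ℝ)) (b : Set ℝ → ℝ), A'.card = k ∧ ∀ S : Set ℝ, S.OrdConnected →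
      (A.filter (fun I => (I ∩ S).Nonempty)).card ≤ 1 + (A'.filter (fun I => b I ∈ S)).card := by
  have hex : ∀ I : Set ℝ, ∃ r : ℝ, I ∈ A → r ∈ I := by
    intro I
    by_cases h : I ∈ A
    · obtain ⟨r, hr⟩ := hne I h
      exact ⟨r, fun _ => hr⟩
    · exact ⟨0, fun h' => absurd h' h⟩
  choose r hr using hex
  have hAne : A.Nonempty := Finset.card_pos.mp (by omega)
  obtain ⟨X, hXA, hX⟩ := A.exists_max_image r hAne
  have hlt : ∀ I ∈ A, ∀ J ∈ A, I ≠ J → r I ≤ r J → ∀ y ∈ I, ∀ z ∈ J, y ≤ z := by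
    intro I hI J hJ hIJ hle y hy z hz
    by_contra hcon
    push Not at hcon
    have hdis := hd I hI J hJ hIJ
    have key : ∀ w, w ∈ I → w ∈ J → False := by
      intro w h1 h2
      have : w ∈ I ∩ J := ⟨h1, h2⟩
      rw [hdis] at this
      exact this
    rcases le_total (r J) y with h | h
    · exact key (r J) ((hoc I hI).out (hr I hI) hy ⟨hle, h⟩) (hr J hJ)
    · exact key y hy ((hoc J hJ).out hz (hr J hJ) ⟨hcon.le, h⟩)
  refine ⟨A.erase X, sSup, by rw [Finset.card_erase_of_mem hXA]; omega, ?_⟩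
  intro S hS
  rcases (A.filter (fun I => (I ∩ S).Nonempty)).eq_empty_or_nonempty with h | h
  · rw [h]; simp
  obtain ⟨J, hJT, hJ⟩ := Finset.exists_max_image _ r h
  have hJA := (Finset.mem_filter.mp hJT).1
  obtain ⟨z, hzJ, hzS⟩ := (Finset.mem_filter.mp hJT).2
  rw [← Finset.card_erase_add_one hJT, add_comm]
  refine Nat.add_le_add_left (Finset.card_le_card ?_) 1
  intro I hI
  obtain ⟨hIJ, hIT⟩ := Finset.mem_erase.mp hI
  have hIA := (Finset.mem_filter.mp hIT).1
  obtain ⟨y, hyI, hyS⟩ := (Finset.mem_filter.mp hIT).2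
  have hb : ∀ w ∈ I, w ≤ z := fun w hw => hlt I hIA J hJA hIJ (hJ I hIT) w hw z hzJ
  refine Finset.mem_filter.mpr ⟨Finset.mem_erase.mpr ⟨?_, hIA⟩, ?_⟩
  · rintro rfl
    have h1 := hlt I hIA J hJA hIJ (hJ I hIT) (r I) (hr I hIA) (r J) (hr J hJA)
    have h2 : r J = r I := le_antisymm (hX J hJA) h1
    have h3 : r I ∈ I ∩ J := ⟨hr I hIA, h2 ▸ hr J hJA⟩
    rw [hd I hIA J hJA hIJ] at h3
    exact h3
  · exact hS.out hyS hzS ⟨le_csSup ⟨z, hb⟩ hyI, csSup_le ⟨y, hyI⟩ hb⟩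

def Gsum (k D n : ℕ) : ℕ := ∑ j ∈ Finset.range D, Nat.choose n j * k ^ j

theorem Gsum_succ (k D n : ℕ) : Gsum k (D+1) (n+1) = Gsum k (D+1) n + k * Gsum k D n := by
  unfold Gsum
  rw [Finset.sum_range_succ', Finset.sum_range_succ' _ D, Finset.mul_sum]
  have : ∀ j, (n+1).choose (j+1) * k^(j+1) = n.choose (j+1) * k^(j+1) + k * (n.choose j * k^j) := by
    intro j; rw [Nat.choose_succ_succ]; ring
  simp only [this, Finset.sum_add_distrib, Nat.choose_zero_right]
  ring

open Classical in
def PF {E : Type*} [AddCommGroup E] [Module ℝ E] (A : Finset (Set ℝ)) (n : ℕ)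
    (f : Fin n → E →ₗ[ℝ] ℝ) (M : Set E) : Finset (Fin n → Set ℝ) :=
  (Fintype.piFinset (fun _ => A)).filter (fun I => ∃ x ∈ M, ∀ l, f l x ∈ I l)

theorem mem_PF {E : Type*} [AddCommGroup E] [Module ℝ E] (A : Finset (Set ℝ)) (n : ℕ)
    (f : Fin n → E →ₗ[ℝ] ℝ) (M : Set E) (I : Fin n → Set ℝ) :
    I ∈ PF A n f M ↔ (∀ l, I l ∈ A) ∧ ∃ x ∈ M, ∀ l, f l x ∈ I l := by
  simp [PF, Fintype.mem_piFinset]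

open Classical in
theorem PF_card {E : Type*} [AddCommGroup E] [Module ℝ E] [FiniteDimensional ℝ E]
    (A : Finset (Set ℝ)) (k : ℕ) (hcard : A.card = k + 1)
    (hne : ∀ I ∈ A, I.Nonempty) (hoc : ∀ I ∈ A, I.OrdConnected)
    (hd : ∀ I ∈ A, ∀ J ∈ A, I ≠ J → I ∩ J = ∅) (n : ℕ) :
    ∀ (D : ℕ) (f : Fin n → E →ₗ[ℝ] ℝ) (M : Set E), Convex ℝ M →
      Module.finrank ℝ (vectorSpan ℝ M) < D → (PF A n f M).card ≤ Gsum k D n := by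
  obtain ⟨A', b, hA', hgap⟩ := gap_lemma A k hcard hne hoc hd
  induction n with
  | zero =>
    intro D f M _ hD
    obtain ⟨D, rfl⟩ : ∃ D', D = D' + 1 := ⟨D - 1, by omega⟩
    have h1 : (PF A 0 f M).card ≤ 1 := Finset.card_le_one_of_subsingleton _
    refine h1.trans ?_
    unfold Gsum
    rw [Finset.sum_range_succ']
    simp
  | succ n ih =>
    intro D f M hM hD
    obtain ⟨D, rfl⟩ : ∃ D', D = D' + 1 := ⟨D - 1, by omega⟩
    let g : Fin n → E →ₗ[ℝ] ℝ := fun l => f l.succ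
    let S : (Fin n → Set ℝ) → Set ℝ := fun p => f 0 '' {x | x ∈ M ∧ ∀ l, g l x ∈ p l}
    have hmaps : ∀ q ∈ PF A (n+1) f M, Fin.tail q ∈ PF A n g M := by
      intro q hq
      rw [mem_PF] at hq ⊢
      obtain ⟨h1, x, hx, h2⟩ := hq
      exact ⟨fun l => h1 l.succ, x, hx, fun l => h2 l.succ⟩
    have hcount : (PF A (n+1) f M).card ≤
        ∑ p ∈ PF A n g M, (A.filter (fun I => (I ∩ S p).Nonempty)).card := by
      rw [Finset.card_eq_sum_card_fiberwise hmaps]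
      refine Finset.sum_le_sum fun p hp => ?_
      refine Finset.card_le_card_of_injOn (fun q => q 0) ?_ ?_
      · intro q hq
        obtain ⟨hq1, rfl⟩ := Finset.mem_filter.mp hq
        rw [mem_PF] at hq1
        obtain ⟨h1, x, hx, h2⟩ := hq1
        exact Finset.mem_coe.mpr (Finset.mem_filter.mpr
          ⟨h1 0, f 0 x, h2 0, x, ⟨hx, fun l => h2 l.succ⟩, rfl⟩)
      · intro q hq q' hq' h
        have hq := (Finset.mem_filter.mp hq).2
        have hq' := (Finset.mem_filter.mp hq').2
        rw [← Fin.cons_self_tail q, ← Fin.cons_self_tail q', hq, hq']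
        simp only at h
        rw [h]
    rw [Gsum_succ]
    refine hcount.trans ?_
    by_cases hz : ∀ v ∈ vectorSpan ℝ M, f 0 v = 0
    · refine le_trans ?_ ((ih (D+1) g M hM hD).trans (Nat.le_add_right _ _))
      rw [Finset.card_eq_sum_ones]
      refine Finset.sum_le_sum fun p hp => ?_
      refine Finset.card_le_one.mpr ?_
      intro I hI J hJ
      obtain ⟨hIA, y, hyI, x, ⟨hxM, -⟩, rfl⟩ := Finset.mem_filter.mp hI
      obtain ⟨hJA, y', hyJ, x', ⟨hxM', -⟩, rfl⟩ := Finset.mem_filter.mp hJ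
      by_contra hIJ
      have h0 := hz _ (vsub_mem_vectorSpan ℝ hxM hxM')
      rw [vsub_eq_sub, map_sub, sub_eq_zero] at h0
      have h3 : f 0 x ∈ I ∩ J := ⟨hyI, h0 ▸ hyJ⟩
      rw [hd I hIA J hJA hIJ] at h3
      exact h3
    · have hS : ∀ p ∈ PF A n g M, (S p).OrdConnected := by
        intro p hp
        rw [mem_PF] at hp
        refine Convex.ordConnected ?_
        refine Convex.is_linear_image ?_ (f 0).isLinear
        have : {x | x ∈ M ∧ ∀ l, g l x ∈ p l} = M ∩ ⋂ l, (g l) ⁻¹' (p l) := by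
          ext x; simp
        rw [this]
        exact hM.inter (convex_iInter fun l => (hoc _ (hp.1 l)).convex.linear_preimage (g l))
      have h1 : ∑ p ∈ PF A n g M, (A.filter (fun I => (I ∩ S p).Nonempty)).card ≤
          ∑ p ∈ PF A n g M, (1 + (A'.filter (fun I => b I ∈ S p)).card) :=
        Finset.sum_le_sum fun p hp => hgap _ (hS p hp)
      refine h1.trans ?_
      rw [Finset.sum_add_distrib, ← Finset.card_eq_sum_ones]
      refine Nat.add_le_add (ih (D+1) g M hM hD) ?_
      have h2 : ∑ p ∈ PF A n g M, (A'.filter (fun I => b I ∈ S p)).card =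
          ∑ I ∈ A', ((PF A n g M).filter (fun p => b I ∈ S p)).card := by
        simp only [Finset.card_filter]
        exact Finset.sum_comm
      rw [h2, ← hA', ← smul_eq_mul]
      refine Finset.sum_le_card_nsmul _ _ _ fun I hI => ?_
      rw [hA']
      let N : Set E := M ∩ {x | f 0 x = b I}
      have hN : Convex ℝ N := hM.inter (convex_hyperplane (f 0).isLinear _)
      have hsub : vectorSpan ℝ N ≤ vectorSpan ℝ M := vectorSpan_mono ℝ Set.inter_subset_left
      have hker : vectorSpan ℝ N ≤ LinearMap.ker (f 0) := by
        unfold vectorSpan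
        rw [Submodule.span_le]
        rintro _ ⟨x, hx, y, hy, rfl⟩
        have hx2 : f 0 x = b I := hx.2
        have hy2 : f 0 y = b I := hy.2
        simp [hx2, hy2]
      have hlt : vectorSpan ℝ N < vectorSpan ℝ M := by
        refine lt_of_le_of_ne hsub fun h => hz fun v hv => ?_
        rw [← h] at hv
        exact hker hv
      have hfin := Submodule.finrank_lt_finrank_of_lt hlt
      refine le_trans (Finset.card_le_card ?_) (ih D g N hN (by omega))
      intro p hp
      obtain ⟨hp, x, ⟨hxM, hx⟩, hb⟩ := Finset.mem_filter.mp hp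
      rw [mem_PF] at hp ⊢
      exact ⟨hp.1, x, ⟨hxM, hb⟩, hx⟩

theorem hockey (d m : ℕ) : ∑ j ∈ Finset.Icc (d+1) m, Nat.choose (j-1) d = Nat.choose m (d+1) := by
  induction m with
  | zero => simp
  | succ m ih =>
    by_cases h : d + 1 ≤ m + 1
    · rw [← Finset.insert_Icc_right_eq_Icc_add_one h, Finset.sum_insert (by simp), ih,
        Nat.choose_succ_succ]
      simp
    · rw [Finset.Icc_eq_empty h, Nat.choose_eq_zero_of_lt (by omega)]
      simp

theorem Gsum_le_Fbound (d n k : ℕ) (h : d ≤ n) : Gsum k (d+1) n ≤ Fbound d n k := by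
  unfold Fbound
  rcases d with _ | d
  · simp [Gsum]
  · obtain ⟨m, rfl⟩ : ∃ m, n = m + 1 := ⟨n - 1, by omega⟩
    rw [Gsum_succ]
    simp only [Nat.add_sub_cancel]
    rw [hockey]
    unfold Gsum
    rw [Finset.sum_range_succ]
    apply le_of_eq
    ring

/-- If `M ⊆ ℝ^n` is a `d`-dimensional affine subspace and `φ` is a
continuous PWL function with `k+1` linear pieces, then the number of activation patterns
`(I⁽¹⁾,…,I⁽ⁿ⁾) ∈ A(φ)ⁿ` realized by some point of `M` is at most `F(d,n,k)`. -/
theorem card_patterns_le {n d k : ℕ} (hk : 1 ≤ k)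
    (φ : ℝ → ℝ) (Aφ : Finset (Set ℝ)) (hφ : IsPWLWith φ Aφ) (hcard : Aφ.card = k + 1)
    (M : Set (EuclideanSpace ℝ (Fin n))) (hM : IsAffineOfDim n d M) :
    {I : Fin n → Set ℝ | (∀ l, I l ∈ Aφ) ∧ ∃ x ∈ M, ∀ l, x l ∈ I l}.ncard ≤
      Fbound d n k := by
  obtain ⟨B, hB, -, hfr⟩ := hM
  have hdn : d ≤ n := by
    have := Submodule.finrank_le B.direction
    rw [finrank_euclideanSpace_fin] at this
    omega
  refine le_trans ?_ (Gsum_le_Fbound d n k hdn)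
  have hconv : Convex ℝ M := hB ▸ B.convex
  have hspan : Module.finrank ℝ (vectorSpan ℝ M) < d + 1 := by
    rw [← hB, ← AffineSubspace.direction_eq_vectorSpan, hfr]
    omega
  have key := PF_card Aφ k hcard hφ.nonempty hφ.ordConn hφ.disjoint n (d+1)
    (fun l => (EuclideanSpace.proj l : EuclideanSpace ℝ (Fin n) →L[ℝ] ℝ).toLinearMap) M hconv hspan
  refine le_trans (le_of_eq ?_) key
  rw [← Set.ncard_coe_finset]
  congr 1
  ext I
  rw [Finset.mem_coe, mem_PF]
  rfl

end
end

section
/- For every integer L ≥ 2 and every integer N ≥ 1 there exist affine maps A_1 : ℝ → ℝ^{2N}, A_2,…,A_{L−1} : ℝ^{2N} → ℝ^{2N} and A_L : ℝ^{2N} → ℝ such that, setting z := A_L ∘ (ReLU ∘ A_{L−1}) ∘ … ∘ (ReLU ∘ A_1) and f(x) := z(x) + x, the function f : ℝ → ℝ has at least (2N)^{L−1}/2 stable fixed points. In particular, taking N = 1, there are L-layer ReLU networks of width 2 whose associated map f has at least 2^{L−2} stable fixed points, so the number of stable fixed points can grow as Ω(2^L) in the number of layers L. -/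
noncomputable section

/-- The rectified linear unit. -/
def relu (t : ℝ) : ℝ := max t 0

/-- Iterated middle layers: `midIter Wm um j` is `(ReLU ∘ A_{j+1}) ∘ … ∘ (ReLU ∘ A_2)`,
where `A_{l+1}` is the affine map given by the matrix `Wm (l-1)` and bias `um (l-1)`. -/
def midIter {m : ℕ} (Wm : ℕ → Matrix (Fin m) (Fin m) ℝ) (um : ℕ → Fin m → ℝ) :
    ℕ → (Fin m → ℝ) → Fin m → ℝ
  | 0 => fun v => v
  | j + 1 => fun v i => relu (((Wm j).mulVec (midIter Wm um j v) + um j) i)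

/-- A stable fixed point of `f : ℝ → ℝ`: a fixed point in a neighborhood of which `f` is
differentiable and where `|f′| < 1`. -/
def IsStableFixedPoint1 (f : ℝ → ℝ) (x : ℝ) : Prop :=
  f x = x ∧ (∃ ε > 0, ∀ y ∈ Metric.ball x ε, DifferentiableAt ℝ f y) ∧ |deriv f x| < 1

def sawCoef (i : ℕ) : ℝ := if i = 0 then 1 else if Even i then 2 else -2

def sawG (m : ℕ) (y : ℝ) : ℝ := ∑ i : Fin m, sawCoef i * relu (m * y - (i : ℕ))

def sawV (k : ℕ) (s : ℝ) : ℝ := if Even k then s - k else 1 - (s - k)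

theorem sawSum (r : ℕ) (s : ℝ) :
    ∑ i ∈ Finset.range (r + 1), sawCoef i * (s - (i : ℕ)) = sawV r s := by
  induction r with
  | zero => simp [sawCoef, sawV]
  | succ r ih =>
    rw [Finset.sum_range_succ, ih]
    by_cases h : Even r
    · have h' : ¬ Even (r + 1) := by rw [Nat.even_add_one]; simpa using h
      simp only [sawCoef, sawV, h, h']
      push_cast
      simp
      ring
    · have h' : Even (r + 1) := by rw [Nat.even_add_one]; exact h
      simp only [sawCoef, sawV, h, h']
      push_cast
      try simp
      ring

theorem sawG_eq (m r : ℕ) (hr : r < m) (y : ℝ) (h1 : (r : ℝ) < m * y) (h2 : m * y < r + 1) :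
    sawG m y = sawV r (m * y) := by
  rw [← sawSum]
  unfold sawG
  rw [Fin.sum_univ_eq_sum_range (fun i => sawCoef i * relu (m * y - (i : ℕ))) m]
  symm
  have hsub : Finset.range (r + 1) ⊆ Finset.range m := by
    intro i hi
    simp only [Finset.mem_range] at hi ⊢
    omega
  rw [← Finset.sum_subset hsub]
  · apply Finset.sum_congr rfl
    intro i hi
    have hi' : i ≤ r := by simp only [Finset.mem_range] at hi; omega
    have hc : (i : ℝ) ≤ r := by exact_mod_cast hi'
    unfold relu
    rw [max_eq_left (by linarith)]
  · intro i _ hi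
    have hi' : r + 1 ≤ i := by simp only [Finset.mem_range] at hi; omega
    have hc : (r : ℝ) + 1 ≤ i := by exact_mod_cast hi'
    unfold relu
    rw [max_eq_right (by linarith), mul_zero]

theorem sawG_iter (m : ℕ) (hm : Even m) (hm0 : 0 < m) (n : ℕ) :
    ∀ (k : ℕ) (t : ℝ), k < m ^ n → (k : ℝ) < (m : ℝ) ^ n * t → (m : ℝ) ^ n * t < k + 1 →
      (sawG m)^[n] t = sawV k ((m : ℝ) ^ n * t) := by
  induction n with
  | zero =>
    intro k t hk h1 h2
    have : k = 0 := by simpa using hk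
    subst this
    simp [sawV]
  | succ n ih =>
    intro k t hk h1 h2
    rw [Function.iterate_succ_apply']
    have hkd := Nat.div_add_mod k m
    have hrm := Nat.mod_lt k hm0
    have hq : k / m < m ^ n := by
      rw [Nat.div_lt_iff_lt_mul hm0, ← pow_succ]; exact hk
    generalize k / m = q at *
    generalize k % m = r at *
    have hkr : (k : ℝ) = m * q + r := by rw [← hkd]; push_cast; ring
    have hpar : Even k ↔ Even r := by
      rw [← hkd, Nat.even_add]
      have : Even (m * q) := hm.mul_right q
      simp [this]
    have hmr : (0 : ℝ) < m := by exact_mod_cast hm0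
    have hr1 : (r : ℝ) + 1 ≤ m := by exact_mod_cast hrm
    have hr0 : (0 : ℝ) ≤ r := by positivity
    have hp : (m : ℝ) ^ (n + 1) * t = m * ((m : ℝ) ^ n * t) := by ring
    rw [hp] at h1 h2 ⊢
    generalize hs : (m : ℝ) ^ n * t = s at *
    have hqs : (q : ℝ) < s := by
      have : (m : ℝ) * q < m * s := by linarith
      exact lt_of_mul_lt_mul_left this hmr.le
    have hqs' : s < q + 1 := by
      have : (m : ℝ) * s < m * (q + 1) := by linarith
      exact lt_of_mul_lt_mul_left this hmr.le
    rw [ih q t hq (by rw [hs]; exact hqs) (by rw [hs]; exact hqs'), hs]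
    by_cases hqe : Even q
    · have hv : sawV q s = s - q := by simp [sawV, hqe]
      rw [hv, sawG_eq m r hrm _ (by linarith) (by linarith)]
      unfold sawV
      simp only [hpar]
      split_ifs <;> rw [hkr] <;> ring
    · have hv : sawV q s = 1 - (s - q) := by simp [sawV, hqe]
      have hc : ((m - 1 - r : ℕ) : ℝ) = m - 1 - r := by
        rw [Nat.sub_sub, Nat.cast_sub (by omega)]; push_cast; ring
      have hpar' : Even (m - 1 - r) ↔ ¬ Even r := by
        have : Even ((m - 1 - r) + (r + 1)) := by
          have : (m - 1 - r) + (r + 1) = m := by omega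
          rwa [this]
        rw [Nat.even_add, Nat.even_add_one] at this
        exact this
      rw [hv, sawG_eq m (m - 1 - r) (by omega) _ (by rw [hc]; linarith) (by rw [hc]; linarith)]
      unfold sawV
      simp only [hpar, hpar', hc]
      by_cases hre : Even r
      · simp only [hre]; simp; rw [hkr]; ring
      · simp only [hre]; simp; rw [hkr]; ring

theorem saw_mid (m : ℕ) (t : ℝ) (j : ℕ) (i : Fin m) :
    midIter (fun _ => Matrix.of fun _ j : Fin m => (m : ℝ) * sawCoef j)
      (fun _ (i : Fin m) => -((i : ℕ) : ℝ)) j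
      (fun i : Fin m => relu ((m : ℝ) * t + -((i : ℕ) : ℝ))) i
    = relu (m * (sawG m)^[j] t - (i : ℕ)) := by
  induction j generalizing i with
  | zero => simp [midIter, sub_eq_add_neg]
  | succ j ih =>
    rw [Function.iterate_succ_apply']
    simp only [midIter, Pi.add_apply, Matrix.mulVec, dotProduct, Matrix.of_apply]
    simp only [ih]
    rw [sub_eq_add_neg]
    congr 2
    rw [sawG, Finset.mul_sum]
    exact Finset.sum_congr rfl fun _ _ => by ring

/-- For every `L ≥ 2` and `N ≥ 1` there is an `L`-layer ReLU network of
width `2N`, `z = A_L ∘ (ReLU ∘ A_{L−1}) ∘ … ∘ (ReLU ∘ A_1) : ℝ → ℝ`, such that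
`f(x) = z(x) + x` has at least `(2N)^{L−1}/2` stable fixed points; in particular (`N = 1`)
the number of stable fixed points can grow as `Ω(2^L)` in the number of layers `L`. -/
theorem exists_relu_net_many_stable_fixed_points (L N : ℕ) (hL : 2 ≤ L) (hN : 1 ≤ N) :
    ∃ (a₁ b₁ : Fin (2 * N) → ℝ) (Wm : ℕ → Matrix (Fin (2 * N)) (Fin (2 * N)) ℝ)
      (um : ℕ → Fin (2 * N) → ℝ) (wL : Fin (2 * N) → ℝ) (cL : ℝ) (S : Finset ℝ),
      (∀ x ∈ S, IsStableFixedPoint1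
        (fun t => ((∑ i, wL i * midIter Wm um (L - 2) (fun i => relu (a₁ i * t + b₁ i)) i)
          + cL) + t) x) ∧
      (2 * N) ^ (L - 1) / 2 ≤ S.card := by
  obtain ⟨n, rfl⟩ : ∃ n, L = n + 2 := ⟨L - 2, by omega⟩
  have e1 : n + 2 - 2 = n := by omega
  have e2 : n + 2 - 1 = n + 1 := by omega
  rw [e1, e2]
  have hm0 : 0 < 2 * N := by omega
  have hme : Even (2 * N) := even_two_mul N
  generalize 2 * N = m at *
  have hM : (0 : ℝ) < (m : ℝ) ^ (n + 1) := by positivity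
  refine ⟨fun _ => m, fun i => -((i : ℕ) : ℝ),
    fun _ => Matrix.of fun _ j : Fin m => (m : ℝ) * sawCoef j,
    fun _ (i : Fin m) => -((i : ℕ) : ℝ), fun i => sawCoef i * ((m : ℝ) ^ (n + 1))⁻¹,
    -(((m : ℝ) ^ (n + 1))⁻¹ / 2),
    (Finset.range (m ^ (n + 1) / 2)).image
      (fun j : ℕ => (2 * (j : ℝ) + 3 / 2) / (m : ℝ) ^ (n + 1)), ?_, ?_⟩
  · intro x hx
    obtain ⟨j, hj, rfl⟩ := Finset.mem_image.1 hx
    rw [Finset.mem_range] at hj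
    simp only [saw_mid]
    set M : ℝ := (m : ℝ) ^ (n + 1) with hMdef
    set F : ℝ → ℝ := fun t => ∑ i : Fin m, sawCoef i * M⁻¹ *
      relu (m * (sawG m)^[n] t - (i : ℕ)) + -(M⁻¹ / 2) + t with hF
    set x : ℝ := (2 * (j : ℝ) + 3 / 2) / M with hxdef
    have hMx : M * x = 2 * j + 3 / 2 := by rw [hxdef]; field_simp
    have hFc : ∀ t, 2 * (j : ℝ) + 1 < M * t → M * t < 2 * j + 2 → F t = x := by
      intro t h1 h2
      have hg := sawG_iter m hme hm0 (n + 1) (2 * j + 1) t (by omega)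
        (by push_cast; exact h1) (by push_cast; linarith)
      rw [Function.iterate_succ_apply'] at hg
      have hodd : ¬ Even (2 * j + 1) := by simp
      have hsum : ∑ i : Fin m, sawCoef i * M⁻¹ * relu (m * (sawG m)^[n] t - (i : ℕ))
          = M⁻¹ * sawG m ((sawG m)^[n] t) := by
        rw [sawG, Finset.mul_sum]
        exact Finset.sum_congr rfl fun _ _ => by ring
      simp only [hF]
      rw [hsum, hg, sawV, if_neg hodd, ← hMdef, hxdef]
      push_cast
      field_simp
      ring
    have hball : ∀ y ∈ Metric.ball x (1 / (2 * M)), F =ᶠ[nhds y] fun _ => x := by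
      intro y hy
      filter_upwards [Metric.isOpen_ball.mem_nhds hy] with t ht
      rw [Metric.mem_ball, Real.dist_eq, abs_lt] at ht
      have h3 : M * (1 / (2 * M)) = 1 / 2 := by field_simp
      have h4 := mul_lt_mul_of_pos_left ht.1 hM
      have h5 := mul_lt_mul_of_pos_left ht.2 hM
      apply hFc <;> nlinarith
    have hpos : 0 < 1 / (2 * M) := by positivity
    refine ⟨hFc x (by linarith) (by linarith), ⟨1 / (2 * M), hpos, fun y hy => ?_⟩, ?_⟩
    · exact (hball y hy).differentiableAt_iff.2 (differentiableAt_const x)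
    · rw [(hball x (Metric.mem_ball_self hpos)).deriv_eq]
      simp
  · rw [Finset.card_image_of_injective, Finset.card_range]
    intro a b hab
    have hab' := (div_left_inj' hM.ne').1 hab
    have : (a : ℝ) = b := by linarith
    exact_mod_cast this

end
end

section
/- Let n ≥ d ≥ 1, let W ∈ ℝ^{d×n} have columns ω_1,…,ω_n ∈ ℝ^d with ‖ω_j‖ ≥ 1 for all j, let u ∈ ℝ^n, z ∈ ℝ^d, and let f : ℝ^d → ℝ^d be given by f(x) = W·Φ(Wᵀx + u) + z, where Φ applies the hard tanh function componentwise. Then the set of stable fixed points of f is finite and has at most Σ_{j=0}^{d} C(n,j) elements. -/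
noncomputable section

/-- The hard tanh activation: `−1` for `t < −1`, `t` on `[−1,1]`, and `1` for `t > 1`. -/
def hardTanh (t : ℝ) : ℝ := max (-1) (min 1 t)

/-- A stable fixed point of `f : ℝ^d → ℝ^d`: a fixed point in a neighborhood of which `f` is
differentiable and at which the spectral norm of the Jacobian (the operator norm of the
Fréchet derivative with respect to the Euclidean norm) is `< 1`. -/
def IsStableFixedPointE {d : ℕ}
    (f : EuclideanSpace ℝ (Fin d) → EuclideanSpace ℝ (Fin d))
    (x : EuclideanSpace ℝ (Fin d)) : Prop :=
  f x = x ∧ (∃ ε > 0, ∀ y ∈ Metric.ball x ε, DifferentiableAt ℝ f y) ∧ ‖fderiv ℝ f x‖ < 1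

theorem hardTanh_mono : Monotone hardTanh := by
  intro a b h
  unfold hardTanh
  gcongr

theorem hardTanh_mid {t : ℝ} (h1 : -1 ≤ t) (h2 : t ≤ 1) : hardTanh t = t := by
  unfold hardTanh
  rw [min_eq_right h2, max_eq_right h1]

theorem hardTanh_hi {t : ℝ} (h2 : 1 ≤ t) : hardTanh t = 1 := by
  unfold hardTanh
  rw [min_eq_left h2, max_eq_right (by norm_num)]

theorem hardTanh_lo {t : ℝ} (h2 : t ≤ -1) : hardTanh t = -1 := by
  unfold hardTanh
  rw [min_eq_right (by linarith), max_eq_left h2]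

theorem saturated_aux {d n : ℕ} (u : Fin n → ℝ) (z : EuclideanSpace ℝ (Fin d))
    (ω : Fin n → EuclideanSpace ℝ (Fin d)) (hnorm : ∀ j, 1 ≤ ‖ω j‖)
    (f : EuclideanSpace ℝ (Fin d) → EuclideanSpace ℝ (Fin d))
    (hf : ∀ x, f x = (∑ j, hardTanh (inner ℝ (ω j) x + u j) • ω j) + z)
    (x : EuclideanSpace ℝ (Fin d)) (hx : DifferentiableAt ℝ f x)
    (hL : ‖fderiv ℝ f x‖ < 1) (j : Fin n) : 1 < |inner ℝ (ω j) x + u j| := by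
  by_contra! hcon
  obtain ⟨ha1, ha2⟩ := abs_le.1 hcon
  set c : ℝ := ‖ω j‖ ^ 2 with hc
  have hc1 : 1 ≤ c := by
    have := hnorm j
    nlinarith
  obtain ⟨s, hs2, hs⟩ : ∃ s : ℝ, s * s = 1 ∧ ∀ r : ℝ, 0 ≤ r → r ≤ 1 →
      -1 ≤ inner ℝ (ω j) x + u j + s * r ∧ inner ℝ (ω j) x + u j + s * r ≤ 1 := by
    rcases le_total (inner ℝ (ω j) x + u j) 0 with h | h
    · exact ⟨1, by norm_num, fun r h0 h1 => ⟨by linarith, by linarith⟩⟩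
    · exact ⟨-1, by norm_num, fun r h0 h1 => ⟨by linarith, by linarith⟩⟩
  set v : EuclideanSpace ℝ (Fin d) := s • ω j with hv
  have hvn : ‖v‖ * ‖v‖ = c := by
    rw [← real_inner_self_eq_norm_mul_norm, hv, inner_smul_left, inner_smul_right,
      real_inner_self_eq_norm_sq]
    simp only [conj_trivial]
    rw [← mul_assoc, hs2, one_mul]
  have hder : HasDerivAt (fun t : ℝ => inner ℝ v (f (x + t • v)))
      (inner ℝ v (fderiv ℝ f x v)) 0 := by
    have h1 : HasDerivAt (fun t : ℝ => x + t • v) v 0 := by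
      simpa using ((hasDerivAt_id (0:ℝ)).smul_const v).const_add x
    have h2 : HasFDerivAt f (fderiv ℝ f x) (x + (0:ℝ) • v) := by
      simpa using hx.hasFDerivAt
    have h3 := h2.comp_hasDerivAt (0:ℝ) h1
    simpa using (hasDerivAt_const (0:ℝ) v).inner ℝ h3
  have hlow : c ^ 2 ≤ inner ℝ v (fderiv ℝ f x v) := by
    refine ge_of_tendsto hder.tendsto_slope_zero_right ?_
    have hIoo : Set.Ioo (0:ℝ) (1 / c) ∈ nhdsWithin (0:ℝ) (Set.Ioi 0) :=
      Ioo_mem_nhdsGT (by positivity)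
    filter_upwards [hIoo] with t ht
    obtain ⟨ht0, ht1⟩ := ht
    have htc : t * c ≤ 1 := by
      rw [lt_div_iff₀ (by linarith)] at ht1
      exact ht1.le
    have key : t * c ^ 2 ≤ inner ℝ v (f (x + t • v)) - inner ℝ v (f x) := by
      rw [← inner_sub_right, hf, hf, add_sub_add_right_eq_sub, ← Finset.sum_sub_distrib, inner_sum]
      have hj : inner ℝ v (hardTanh (inner ℝ (ω j) (x + t • v) + u j) • ω j -
          hardTanh (inner ℝ (ω j) x + u j) • ω j) = t * c ^ 2 := by
        have e1 : inner ℝ (ω j) (x + t • v) + u j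
            = inner ℝ (ω j) x + u j + s * (t * c) := by
          rw [inner_add_right, hv, inner_smul_right, inner_smul_right, real_inner_self_eq_norm_sq]
          ring
        obtain ⟨b1, b2⟩ := hs (t * c) (by positivity) htc
        rw [e1, hardTanh_mid b1 b2, hardTanh_mid ha1 ha2, ← sub_smul, hv, inner_smul_left,
          inner_smul_right, real_inner_self_eq_norm_sq, ← hc]
        simp only [conj_trivial]
        linear_combination (t * c ^ 2) * hs2
      rw [← hj]
      refine Finset.single_le_sum (f := fun k => inner ℝ v
        (hardTanh (inner ℝ (ω k) (x + t • v) + u k) • ω k -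
          hardTanh (inner ℝ (ω k) x + u k) • ω k)) ?_ (Finset.mem_univ j)
      intro k _
      rw [← sub_smul, inner_smul_right, inner_add_right, inner_smul_right, real_inner_comm v (ω k)]
      rcases le_total 0 (inner ℝ v (ω k)) with h | h
      · refine mul_nonneg (sub_nonneg.2 (hardTanh_mono ?_)) h
        have := mul_nonneg ht0.le h
        linarith
      · refine mul_nonneg_of_nonpos_of_nonpos (sub_nonpos.2 (hardTanh_mono ?_)) h
        have := mul_nonpos_of_nonneg_of_nonpos ht0.le h
        linarith
    simp only [zero_add, zero_smul, add_zero, smul_eq_mul]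
    rw [inv_mul_eq_div, le_div_iff₀ ht0]
    linarith
  have hup : inner ℝ v (fderiv ℝ f x v) ≤ ‖fderiv ℝ f x‖ * c := by
    calc inner ℝ v (fderiv ℝ f x v) ≤ ‖v‖ * ‖fderiv ℝ f x v‖ := real_inner_le_norm _ _
      _ ≤ ‖v‖ * (‖fderiv ℝ f x‖ * ‖v‖) := by
        gcongr
        exact (fderiv ℝ f x).le_opNorm v
      _ = ‖fderiv ℝ f x‖ * c := by rw [← hvn]; ring
  nlinarith

/-- Shattered sets of sign patterns of `n` affine functions on `ℝ^d` have size at most `d`. -/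
theorem shatter_aux {d n : ℕ} (u : Fin n → ℝ)
    (ω : Fin n → EuclideanSpace ℝ (Fin d)) (A : Finset (Finset (Fin n)))
    (hA : ∀ B ∈ A, ∃ x : EuclideanSpace ℝ (Fin d), ∀ j,
      (j ∈ B → 0 < inner ℝ (ω j) x + u j) ∧ (j ∉ B → inner ℝ (ω j) x + u j < 0))
    (S : Finset (Fin n)) (hS : A.Shatters S) : S.card ≤ d := by
  classical
  by_contra! hcard
  have hdep : ¬ LinearIndepOn ℝ ω (S : Set (Fin n)) := by
    intro h
    have := h.fintype_card_le_finrank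
    simp at this
    omega
  rw [linearIndepOn_finset_iff] at hdep
  push Not at hdep
  obtain ⟨g, hg0, i, hi, hgi⟩ := hdep
  -- generic sign argument
  have main : ∀ g : Fin n → ℝ, ∑ i ∈ S, g i • ω i = 0 → g i ≠ 0 → 0 < ∑ j ∈ S, g j * u j := by
    intro g hg0 hgi
    obtain ⟨B, hB, hSB⟩ := hS (Finset.filter_subset (fun j => 0 < g j) S)
    obtain ⟨x, hx⟩ := hA B hB
    have hmem : ∀ j ∈ S, (j ∈ B ↔ 0 < g j) := by
      intro j hj
      have := congrArg (fun T => j ∈ T) hSB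
      simpa [hj] using this
    have e : ∑ j ∈ S, g j * u j = ∑ j ∈ S, g j * (inner ℝ (ω j) x + u j) := by
      have h0 : ∑ j ∈ S, g j * inner ℝ (ω j) x = 0 := by
        have := congrArg (fun y => inner ℝ y x) hg0
        simpa [sum_inner, inner_smul_left] using this
      simp only [mul_add, Finset.sum_add_distrib, h0, zero_add]
    rw [e]
    have hpos : ∀ j ∈ S, g j ≠ 0 → 0 < g j * (inner ℝ (ω j) x + u j) := by
      intro j hj hne
      rcases lt_or_gt_of_ne hne with h | h
      · exact mul_pos_of_neg_of_neg h ((hx j).2 (fun hB => by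
          have := (hmem j hj).1 hB
          linarith))
      · exact mul_pos h ((hx j).1 ((hmem j hj).2 h))
    refine Finset.sum_pos' ?_ ⟨i, hi, hpos i hi hgi⟩
    intro j hj
    by_cases h : g j = 0
    · simp [h]
    · exact (hpos j hj h).le
  have h1 := main g hg0 hgi
  have h2 := main (fun j => - g j) (by simp [hg0]) (by simpa using hgi)
  simp only [neg_mul, Finset.sum_neg_distrib] at h2
  linarith

/-- For `f(x) = W·Φ(Wᵀx + u) + z` with hard tanh activation, `n ≥ d ≥ 1`,
where the columns `ω_j` of `W` satisfy `‖ω_j‖ ≥ 1`, the set of stable fixed points of `f` is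
finite with at most `Σ_{j=0}^{d} C(n,j)` elements. -/
theorem stableFixedPoints_card_le_of_columns
    {d n : ℕ} (hd : 1 ≤ d) (hdn : d ≤ n)
    (W : Matrix (Fin d) (Fin n) ℝ) (u : Fin n → ℝ) (z : EuclideanSpace ℝ (Fin d))
    (ω : Fin n → EuclideanSpace ℝ (Fin d)) (hω : ∀ j i, ω j i = W i j)
    (hnorm : ∀ j, 1 ≤ ‖ω j‖)
    (f : EuclideanSpace ℝ (Fin d) → EuclideanSpace ℝ (Fin d))
    (hf : ∀ x i, f x i = (∑ j, W i j * hardTanh ((∑ t, W t j * x t) + u j)) + z i) :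
    {x | IsStableFixedPointE f x}.Finite ∧
      {x | IsStableFixedPointE f x}.ncard ≤ ∑ j ∈ Finset.range (d + 1), Nat.choose n j := by
  classical
  have hinner : ∀ j (x : EuclideanSpace ℝ (Fin d)), inner ℝ (ω j) x = ∑ t, W t j * x t := by
    intro j x
    rw [PiLp.inner_apply]
    refine Finset.sum_congr rfl fun t _ => ?_
    simp [hω, mul_comm]
  have hf' : ∀ x, f x = (∑ j, hardTanh (inner ℝ (ω j) x + u j) • ω j) + z := by
    intro x
    ext i
    rw [hf]
    simp [hinner, hω, mul_comm]
  have hsat : ∀ x, IsStableFixedPointE f x → ∀ j, 1 < |inner ℝ (ω j) x + u j| := by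
    rintro x ⟨_, ⟨ε, hε, hdiff⟩, hL⟩ j
    exact saturated_aux u z ω hnorm f hf' x (hdiff x (Metric.mem_ball_self hε)) hL j
  set P : EuclideanSpace ℝ (Fin d) → Finset (Fin n) :=
    fun x => Finset.univ.filter (fun j => 0 < inner ℝ (ω j) x + u j) with hP
  set T := {x | IsStableFixedPointE f x} with hT
  have hinj : Set.InjOn P T := by
    intro x hx y hy hxy
    rw [← hx.1, ← hy.1, hf', hf']
    congr 1
    refine Finset.sum_congr rfl fun j _ => ?_
    have hj : (0 < inner ℝ (ω j) x + u j) ↔ (0 < inner ℝ (ω j) y + u j) := by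
      have := congrArg (fun B => j ∈ B) hxy
      simpa [hP] using this
    congr 1
    rcases lt_abs.1 (hsat x hx j) with h1 | h1 <;> rcases lt_abs.1 (hsat y hy j) with h2 | h2
    · rw [hardTanh_hi h1.le, hardTanh_hi h2.le]
    · have := hj.1 (by linarith)
      linarith
    · have := hj.2 (by linarith)
      linarith
    · rw [hardTanh_lo (by linarith), hardTanh_lo (by linarith)]
  have hfin : T.Finite := Set.Finite.of_finite_image (Set.toFinite _) hinj
  refine ⟨hfin, ?_⟩
  set A : Finset (Finset (Fin n)) := hfin.toFinset.image P with hAdef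
  have hcard : T.ncard = A.card := by
    rw [hAdef, Finset.card_image_of_injOn (by simpa using hinj), Set.ncard_eq_toFinset_card T hfin]
  have hvc : A.vcDim ≤ d := by
    refine Finset.sup_le fun S hS => ?_
    refine shatter_aux u ω A ?_ S (Finset.mem_shatterer.1 hS)
    intro B hB
    obtain ⟨x, hx, rfl⟩ := Finset.mem_image.1 hB
    refine ⟨x, fun j => ⟨fun h => by simpa [hP] using h, fun h => ?_⟩⟩
    have h' : ¬ 0 < inner ℝ (ω j) x + u j := by simpa [hP] using h
    rcases lt_abs.1 (hsat x (hfin.mem_toFinset.1 hx) j) with h1 | h1 <;> linarith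
  rw [hcard]
  calc A.card ≤ A.shatterer.card := A.card_le_card_shatterer
    _ ≤ ∑ k ∈ Finset.Iic A.vcDim, (Fintype.card (Fin n)).choose k :=
      Finset.card_shatterer_le_sum_vcDim
    _ = ∑ k ∈ Finset.Iic A.vcDim, n.choose k := by simp
    _ ≤ _ := by
      refine Finset.sum_le_sum_of_subset fun k hk => ?_
      simp only [Finset.mem_Iic, Finset.mem_range] at *
      omega

end
end

section
/- Let W ∈ ℝ^{d×n} have columns ω_1,…,ω_n ∈ ℝ^d, let φ : ℝ → ℝ be differentiable with φ′(t) ≥ 0 for all t, and let f(x) = W·Φ(Wᵀx) where Φ applies φ componentwise. If x ∈ ℝ^d is such that the spectral norm of the Jacobian of f at x is strictly less than 1, then φ′(ω_jᵀx)·‖ω_j‖² < 1 for every j ∈ {1,…,n}. In particular, if some j satisfies φ′(ω_jᵀx)·‖ω_j‖² ≥ 1, then x is not a stable fixed point of f. -/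
noncomputable section

theorem aux_bound {d n : ℕ} (W : Matrix (Fin d) (Fin n) ℝ) (D : Fin n → ℝ) (hD : ∀ j, 0 ≤ D j)
    (T : EuclideanSpace ℝ (Fin d) →L[ℝ] EuclideanSpace ℝ (Fin d))
    (hT : ∀ v i, T v i = ∑ k, W i k * (D k * ∑ t, W t k * v t)) (h : ‖T‖ < 1) (j : Fin n) :
    D j * (∑ i, W i j ^ 2) < 1 := by
  set S := ∑ i, W i j ^ 2 with hS
  have hS0 : 0 ≤ S := Finset.sum_nonneg fun i _ => sq_nonneg _
  rcases hS0.eq_or_lt with h0 | hpos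
  · rw [← h0]; simp
  let v : EuclideanSpace ℝ (Fin d) := WithLp.toLp 2 (fun i => W i j)
  have hv : ∀ i, v i = W i j := fun i => rfl
  have hn : ‖v‖ ^ 2 = S := by
    rw [EuclideanSpace.real_norm_sq_eq]
  have h1 : inner ℝ v (T v) ≤ ‖T‖ * S := by
    calc inner ℝ v (T v) ≤ ‖v‖ * ‖T v‖ := real_inner_le_norm _ _
      _ ≤ ‖v‖ * (‖T‖ * ‖v‖) := by gcongr; exact T.le_opNorm v
      _ = ‖T‖ * S := by rw [← hn]; ring
  have h2 : inner ℝ v (T v) = ∑ k, D k * (∑ t, W t k * v t) ^ 2 := by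
    simp only [PiLp.inner_apply, hT, RCLike.inner_apply, conj_trivial, Finset.sum_mul]
    rw [Finset.sum_comm]
    refine Finset.sum_congr rfl fun k _ => ?_
    rw [sq, ← mul_assoc, Finset.mul_sum _ _ (D k * _)]
    refine Finset.sum_congr rfl fun i _ => ?_
    ring
  have h3 : D j * S ^ 2 ≤ inner ℝ v (T v) := by
    rw [h2]
    have := Finset.single_le_sum (f := fun k => D k * (∑ t, W t k * v t) ^ 2)
      (fun k _ => mul_nonneg (hD k) (sq_nonneg _)) (Finset.mem_univ j)
    refine le_trans (le_of_eq ?_) this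
    simp only [hv, hS, sq]
  have h4 : (D j * S) * S < 1 * S := by nlinarith
  exact lt_of_mul_lt_mul_right h4 hS0

/-- For `f(x) = W·Φ(Wᵀx)` with `φ` differentiable and `φ′ ≥ 0`: if the
spectral norm of the Jacobian `W·D·Wᵀ` at `x` is `< 1` then `φ′(ω_jᵀx)·‖ω_j‖² < 1` for every
`j`; in particular, if some `j` satisfies `φ′(ω_jᵀx)·‖ω_j‖² ≥ 1` then `x` is not a stable
fixed point of `f`. -/
theorem not_stableFixedPoint_of_large_term
    {d n : ℕ}
    (W : Matrix (Fin d) (Fin n) ℝ) (φ : ℝ → ℝ) (hφ : Differentiable ℝ φ)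
    (hφ' : ∀ t, 0 ≤ deriv φ t)
    (f : EuclideanSpace ℝ (Fin d) → EuclideanSpace ℝ (Fin d))
    (hf : ∀ x i, f x i = ∑ j, W i j * φ (∑ t, W t j * x t))
    (x : EuclideanSpace ℝ (Fin d)) :
    (‖Matrix.toEuclideanCLM (𝕜 := ℝ)
        (W * Matrix.diagonal (fun j => deriv φ (∑ t, W t j * x t)) * W.transpose)‖ < 1 →
      ∀ j, deriv φ (∑ t, W t j * x t) * (∑ i, W i j ^ 2) < 1) ∧
    ((∃ j, 1 ≤ deriv φ (∑ t, W t j * x t) * (∑ i, W i j ^ 2)) →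
      ¬ IsStableFixedPointE f x) := by
  constructor
  · intro h j
    refine aux_bound W (fun j => deriv φ (∑ t, W t j * x t)) (fun j => hφ' _) _ ?_ h j
    intro v i
    rw [Matrix.ofLp_toEuclideanCLM, ← Matrix.mulVec_mulVec, ← Matrix.mulVec_mulVec]
    have e : ∀ (D u : Fin n → ℝ), (Matrix.diagonal D).mulVec u = fun k => D k * u k :=
      fun D u => funext fun k => Matrix.mulVec_diagonal D u k
    rw [e]
    rfl
  · rintro ⟨j, hj⟩ ⟨-, ⟨ε, hε, hd⟩, h⟩
    refine absurd ?_ (not_lt.2 hj)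
    refine aux_bound W (fun j => deriv φ (∑ t, W t j * x t)) (fun j => hφ' _) _ ?_ h j
    intro v i
    have hx := (hd x (Metric.mem_ball_self hε)).hasFDerivAt
    have hline : HasDerivAt (fun s : ℝ => x + s • v) v 0 := by
      simpa using ((hasDerivAt_id (0:ℝ)).smul_const v).const_add x
    have hx' : HasFDerivAt f (fderiv ℝ f x) (x + (0:ℝ) • v) := by simpa using hx
    have h1 := hx'.comp_hasDerivAt (0:ℝ) hline
    have h2 := (EuclideanSpace.proj i : EuclideanSpace ℝ (Fin d) →L[ℝ] ℝ).hasFDerivAt.comp_hasDerivAt (0:ℝ) h1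
    have h3 : HasDerivAt (fun s : ℝ => ∑ k, W i k * φ (∑ t, W t k * (x t + s * v t)))
        (∑ k, W i k * (deriv φ (∑ t, W t k * x t) * ∑ t, W t k * v t)) 0 := by
      refine HasDerivAt.fun_sum fun k _ => HasDerivAt.const_mul _ ?_
      have hin : HasDerivAt (fun s : ℝ => ∑ t, W t k * (x t + s * v t)) (∑ t, W t k * v t) 0 := by
        refine HasDerivAt.fun_sum fun t _ => HasDerivAt.const_mul _ ?_
        simpa using ((hasDerivAt_id (0:ℝ)).mul_const (v t)).const_add (x t)
      have ho : HasDerivAt φ (deriv φ (∑ t, W t k * x t)) (∑ t, W t k * (x t + (0:ℝ) * v t)) := by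
        simpa using (hφ (∑ t, W t k * x t)).hasDerivAt
      exact ho.comp (0:ℝ) hin
    refine HasDerivAt.unique h2 ?_
    refine h3.congr_of_eventuallyEq (Filter.Eventually.of_forall fun s => ?_)
    simp [hf]

end
end
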